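/- arXiv:1101.1856 — 2 statements merged into one kernel-verified Lean document; each statement's English description precedes it below -/
import Mathlib

section
/- Let X be a one-dimensional Peano continuum whose fundamental group is finitely generated and which admits a simply connected covering space. Then there exists a finite subgraph Y ⊆ X such that the inclusion induces an isomorphism π₁(Y, x₀) → π₁(X, x₀), using the fact that inclusions of one-dimensional spaces induce injections on fundamental groups. -/
open Set

/-- Covering dimension at most `n`. -/
def CovDimLE (X : Type*) [TopologicalSpace X] (n : ℕ) : Prop :=
  ∀ U : Set (Set X), U.Finite → (∀ u ∈ U, IsOpen u) → ⋃₀ U = Set.univ →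
    ∃ V : Set (Set X), V.Finite ∧ (∀ v ∈ V, IsOpen v) ∧ ⋃₀ V = Set.univ ∧
      (∀ v ∈ V, ∃ u ∈ U, v ⊆ u) ∧ ∀ x : X, {v ∈ V | x ∈ v}.ncard ≤ n + 1

/-- A subset is a finite (topological) graph: finitely many vertices and finitely
many edges, each edge an arc with endpoints among the vertices, interiors of edges
pairwise disjoint and disjoint from the vertex set. -/
def IsFiniteTopGraph {X : Type*} [TopologicalSpace X] (Y : Set X) : Prop :=
  ∃ (V : Finset X) (n : ℕ) (e : Fin n → C(unitInterval, X)),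
    (∀ i, Function.Injective (e i)) ∧
    (∀ i, e i 0 ∈ V ∧ e i 1 ∈ V) ∧
    (∀ i, ∀ t : unitInterval, e i t ∈ V → t = 0 ∨ t = 1) ∧
    (∀ i j, i ≠ j → ∀ x, x ∈ Set.range (e i) → x ∈ Set.range (e j) → x ∈ V) ∧
    Y = ↑V ∪ ⋃ i, Set.range (e i)

/-!
Since `X` has a simply connected cover, it is semilocally simply connected, so a path may be
replaced piecewise by injective arcs without changing its homotopy class. An arc can be homotoped
into a graph enlarging a given finite graph `Y`: by local path connectedness of `Y` and compactness,
only finitely many excursions of the arc outside `Y` have to be added as edges, and the rest of the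
arc is homotopic into `Y`. Doing this for finitely many generators gives a finite graph whose
fundamental group surjects onto that of `X`.

For injectivity, a finite graph `Y` is semilocally simply connected, so its fundamental groupoid is
given by a group-valued cocycle on pairs of nearby points. A fine open cover of `X` without triple
overlaps imposes no cocycle condition, hence the cocycle defines a covering space of all of `X`,
whose monodromy distinguishes the path classes of `Y` already in `X`.
-/

open Topology unitInterval

section SemilocallySimplyConnected

/-- Semilocal simple connectedness, in the form most convenient for paths: every point has a
neighbourhood in which any two paths with common endpoints are homotopic in the whole space. -/
def SemilocallySimplyConnected (X : Type*) [TopologicalSpace X] : Prop :=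
  ∀ x : X, ∃ U ∈ 𝓝 x, ∀ ⦃a b : X⦄ (γ γ' : Path a b), range γ ⊆ U → range γ' ⊆ U → γ.Homotopic γ'

theorem SemilocallySimplyConnected.of_isLocalHomeomorph {E X : Type*} [TopologicalSpace E]
    [TopologicalSpace X] [SimplyConnectedSpace E] {p : E → X} (hp : IsLocalHomeomorph p)
    (hsurj : Function.Surjective p) : SemilocallySimplyConnected X := by
  intro x
  obtain ⟨e, rfl⟩ := hsurj x
  obtain ⟨φ, he, rfl⟩ := hp e
  refine ⟨φ.target, φ.open_target.mem_nhds (φ.map_source he), fun a b γ γ' hγ hγ' => ?_⟩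
  have lift_homotopic := (SimplyConnectedSpace.paths_homotopic
    (γ.map' (φ.continuousOn_symm.mono hγ)) (γ'.map' (φ.continuousOn_symm.mono hγ'))).map
      ⟨φ, hp.continuous⟩
  have ha : a = φ (φ.symm a) := (φ.right_inv (hγ γ.source_mem_range)).symm
  have hb : b = φ (φ.symm b) := (φ.right_inv (hγ γ.target_mem_range)).symm
  convert lift_homotopic.pathCast ha hb using 1
  · ext t
    exact (φ.right_inv (hγ (mem_range_self t))).symm
  · ext t
    exact (φ.right_inv (hγ' (mem_range_self t))).symm

theorem isClopen_range_of_isCoveringMap {E X : Type*} [TopologicalSpace E] [TopologicalSpace X]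
    {p : E → X} (hp : IsCoveringMap p) : IsClopen (range p) := by
  refine ⟨⟨isOpen_iff_mem_nhds.2 fun x hx => ?_⟩, hp.isLocalHomeomorph.isOpenMap.isOpen_range⟩
  obtain ⟨_, U, hxU, hUo, _, H, -⟩ := hp x
  filter_upwards [hUo.mem_nhds hxU]
  rintro _ hu ⟨e, rfl⟩
  exact hx ⟨(H ⟨e, hu⟩).2.1, (H ⟨e, hu⟩).2.2⟩

theorem SemilocallySimplyConnected.of_isCoveringMap {E X : Type*} [TopologicalSpace E]
    [TopologicalSpace X] [SimplyConnectedSpace E] [PreconnectedSpace X] {p : E → X}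
    (hp : IsCoveringMap p) : SemilocallySimplyConnected X :=
  of_isLocalHomeomorph hp.isLocalHomeomorph <|
    range_eq_univ.1 <| (isClopen_range_of_isCoveringMap hp).eq_univ (range_nonempty p)

end SemilocallySimplyConnected

section UniformLocalProperties

variable {Y : Type*} [PseudoMetricSpace Y] [CompactSpace Y]

theorem exists_pos_forall_ball_subset {U : Y → Set Y} (hU : ∀ y, U y ∈ 𝓝 y) :
    ∃ ε > 0, ∀ y, ∃ z, Metric.ball y ε ⊆ U z := by
  obtain ⟨ε, hε, h⟩ := Metric.uniformity_basis_dist.lebesgue_number_lemma_nhds isCompact_univ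
    fun y _ => hU y
  refine ⟨ε, hε, fun y => (h y (mem_univ y)).imp fun z hz w hw => hz ?_⟩
  exact Metric.mem_ball'.1 hw

theorem SemilocallySimplyConnected.exists_forall_ball_homotopic
    (hY : SemilocallySimplyConnected Y) :
    ∃ ε > 0, ∀ ⦃y a b : Y⦄ (γ γ' : Path a b),
      range γ ⊆ Metric.ball y ε → range γ' ⊆ Metric.ball y ε → γ.Homotopic γ' := by
  choose U hU hUhom using hY
  obtain ⟨ε, hε, hball⟩ := exists_pos_forall_ball_subset hU
  refine ⟨ε, hε, fun y a b γ γ' hγ hγ' => ?_⟩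
  obtain ⟨z, hz⟩ := hball y
  exact hUhom z γ γ' (hγ.trans hz) (hγ'.trans hz)

theorem exists_forall_dist_lt_joinedIn_ball [LocallyPathConnectedSpace Y] {ε : ℝ} (hε : 0 < ε) :
    ∃ δ > 0, ∀ y y' : Y, dist y y' < δ → JoinedIn (Metric.ball y ε) y y' := by
  choose P hP hPball using fun y : Y =>
    (path_connected_basis y).mem_iff.1 (Metric.ball_mem_nhds y (half_pos hε))
  obtain ⟨δ, hδ, hball⟩ := exists_pos_forall_ball_subset fun y => (hP y).1
  refine ⟨δ, hδ, fun y y' hyy' => ?_⟩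
  obtain ⟨z, hz⟩ := hball y
  have hy : y ∈ P z := hz (Metric.mem_ball_self hδ)
  have hy' : y' ∈ P z := hz (Metric.mem_ball'.2 hyy')
  refine ((hP z).2.joinedIn y hy y' hy').mono fun w hw => ?_
  calc dist w y ≤ dist w z + dist y z := dist_triangle_right w y z
    _ < ε := by linarith [Metric.mem_ball.1 (hPball z hw), Metric.mem_ball.1 (hPball z hy)]

end UniformLocalProperties

section LocalPathClasses

variable {Y : Type*}

/-- A system of path classes `s y y'` depending only on the endpoints, representing every path of
size less than `δ` and multiplicative on triples of points at mutual distances less than `δ`. -/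
structure IsLocalPathClass [PseudoMetricSpace Y] (δ : ℝ)
    (s : ∀ y y' : Y, Path.Homotopic.Quotient y y') : Prop where
  mk_eq : ∀ ⦃y y' : Y⦄ (γ : Path y y'), range γ ⊆ Metric.ball y δ →
    Path.Homotopic.Quotient.mk γ = s y y'
  trans_eq : ∀ ⦃y y' y'' : Y⦄, dist y y' < δ → dist y' y'' < δ → dist y y'' < δ →
    (s y y').trans (s y' y'') = s y y''

theorem SemilocallySimplyConnected.exists_isLocalPathClass [PseudoMetricSpace Y] [CompactSpace Y]
    [LocallyPathConnectedSpace Y] [PathConnectedSpace Y] (hY : SemilocallySimplyConnected Y) :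
    ∃ δ > 0, ∃ s : ∀ y y' : Y, Path.Homotopic.Quotient y y', IsLocalPathClass δ s := by
  obtain ⟨ε, hε, homotopic_of_ball⟩ := hY.exists_forall_ball_homotopic
  obtain ⟨δ, hδ, joined⟩ := exists_forall_dist_lt_joinedIn_ball (Y := Y) (half_pos hε)
  have small_path (y y' : Y) : ∃ α : Path y y',
      dist y y' < δ → range α ⊆ Metric.ball y (ε / 2) := by
    by_cases h : dist y y' < δ
    · exact ⟨(joined y y' h).somePath, fun _ => range_subset_iff.2 (joined y y' h).somePath_mem⟩
    · exact ⟨PathConnectedSpace.somePath y y', fun h' => absurd h' h⟩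
  choose α hα using small_path
  have half_subset (y : Y) : Metric.ball y (ε / 2) ⊆ Metric.ball y ε :=
    Metric.ball_subset_ball (half_le_self hε.le)
  refine ⟨min (ε / 2) δ, lt_min (half_pos hε) hδ, fun y y' => .mk (α y y'), ?_, ?_⟩
  · intro y y' γ hγ
    have hyy' : dist y y' < δ :=
      (Metric.mem_ball'.1 (hγ γ.target_mem_range)).trans_le (min_le_right _ _)
    refine Path.Homotopic.Quotient.eq.2 (homotopic_of_ball _ _ (hγ.trans ?_)
      ((hα y y' hyy').trans (half_subset y)))
    exact (Metric.ball_subset_ball (min_le_left _ _)).trans (half_subset y)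
  · intro y y' y'' h₁ h₂ h₃
    simp only [lt_min_iff] at h₁ h₂ h₃
    rw [← Path.Homotopic.Quotient.mk_trans, Path.Homotopic.Quotient.eq]
    refine homotopic_of_ball (y := y) _ _ ?_ ((hα y y'' h₃.2).trans (half_subset y))
    rw [Path.trans_range]
    refine union_subset ((hα y y' h₁.2).trans (half_subset y)) ((hα y' y'' h₂.2).trans ?_)
    exact Metric.ball_subset_ball' (by linarith [dist_comm y y', h₁.1])

variable [TopologicalSpace Y] [PathConnectedSpace Y]

/-- The class of the loop at `x₀` obtained from the path class `q` by joining its endpoints to `x₀`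
along fixed paths. This trivialises the fundamental groupoid of `Y`. -/
noncomputable def loopClass (x₀ : Y) {y y' : Y} (q : Path.Homotopic.Quotient y y') :
    FundamentalGroup Y x₀ :=
  ((Path.Homotopic.Quotient.mk (PathConnectedSpace.somePath x₀ y)).trans q).trans
    (Path.Homotopic.Quotient.mk (PathConnectedSpace.somePath x₀ y')).symm

theorem loopClass_mk_refl (x₀ y : Y) : loopClass x₀ (.mk (Path.refl y)) = 1 := by
  simp only [loopClass, Path.Homotopic.Quotient.mk_refl, Path.Homotopic.Quotient.trans_refl,
    Path.Homotopic.Quotient.trans_symm, FundamentalGroup.one_def]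

theorem loopClass_mk_cast (x₀ : Y) {y z y' z' : Y} (γ : Path y z) (hy : y' = y) (hz : z' = z) :
    loopClass x₀ (.mk (γ.cast hy hz)) = loopClass x₀ (.mk γ) := by
  subst hy hz
  rfl

theorem loopClass_trans (x₀ : Y) {y y' y'' : Y} (q : Path.Homotopic.Quotient y y')
    (q' : Path.Homotopic.Quotient y' y'') :
    loopClass x₀ (q.trans q') = loopClass x₀ q' * loopClass x₀ q := by
  simp only [loopClass, FundamentalGroup.mul_def, Path.Homotopic.Quotient.trans_assoc]
  rw [← Path.Homotopic.Quotient.trans_assoc (Path.Homotopic.Quotient.symm _),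
    Path.Homotopic.Quotient.symm_trans, Path.Homotopic.Quotient.refl_trans]

theorem loopClass_injective (x₀ y y' : Y) :
    Function.Injective
      (loopClass x₀ : Path.Homotopic.Quotient y y' → FundamentalGroup Y x₀) := by
  set c : Path.Homotopic.Quotient x₀ y := .mk (PathConnectedSpace.somePath x₀ y) with hc
  set c' : Path.Homotopic.Quotient x₀ y' := .mk (PathConnectedSpace.somePath x₀ y') with hc'
  refine Function.LeftInverse.injective (g := fun l => (c.symm.trans l).trans c') fun q => ?_
  simp only [loopClass, ← hc, ← hc', Path.Homotopic.Quotient.trans_assoc,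
    Path.Homotopic.Quotient.symm_trans, Path.Homotopic.Quotient.trans_refl]
  rw [← Path.Homotopic.Quotient.trans_assoc, Path.Homotopic.Quotient.symm_trans,
    Path.Homotopic.Quotient.refl_trans]

end LocalPathClasses

section Monodromy

/-- The data of a principal `G`-bundle that is trivial over each member of an open cover without
triple overlaps: `a i j` is the (constant) transition function from `W i` to `W j`. The cocycle
condition is automatic, because two of the three indices coincide. -/
structure TransitionData (ι X G : Type*) [TopologicalSpace X] [Group G] where
  W : ι → Set X
  isOpen_W : ∀ i, IsOpen (W i)
  exists_mem_W : ∀ x, ∃ i, x ∈ W i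
  no_triple_overlap : ∀ ⦃i j k x⦄, x ∈ W i → x ∈ W j → x ∈ W k → i = j ∨ j = k ∨ i = k
  a : ι → ι → G
  a_self : ∀ i, a i i = 1
  a_mul_swap : ∀ i j, a i j * a j i = 1

namespace TransitionData

variable {ι X G : Type*} [TopologicalSpace X] [Group G]

/-- The family `k` consists of the coordinates, over each `W i`, of a continuous lift of the path
`γ` to the bundle described by `D`. -/
structure IsLift (D : TransitionData ι X G) (γ : I → X) (k : I → ι → G) : Prop where
  transition : ∀ ⦃t i j⦄, γ t ∈ D.W i → γ t ∈ D.W j → k t j = D.a i j * k t i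
  eventually_eq : ∀ ⦃t i⦄, γ t ∈ D.W i → ∀ᶠ r in 𝓝 t, k r i = k t i

variable [TopologicalSpace G] [DiscreteTopology G] (D : TransitionData ι X G)

/-- The bundle described by `D`, with the discrete group `G` as fibre; it is a covering space. -/
noncomputable def bundleCore : FiberBundleCore ι X G where
  baseSet := D.W
  isOpen_baseSet := D.isOpen_W
  indexAt x := (D.exists_mem_W x).choose
  mem_baseSet_at x := (D.exists_mem_W x).choose_spec
  coordChange i j _ v := D.a i j * v
  coordChange_self i _ _ v := by rw [D.a_self, one_mul]
  continuousOn_coordChange i j :=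
    (continuous_of_discreteTopology.comp continuous_snd : Continuous fun p : X × G =>
      D.a i j * p.2).continuousOn
  coordChange_comp := by
    rintro i j k x ⟨⟨hi, hj⟩, hk⟩ v
    obtain rfl | rfl | rfl := D.no_triple_overlap hi hj hk
    · rw [D.a_self, one_mul]
    · rw [D.a_self, one_mul]
    · rw [← mul_assoc, D.a_mul_swap, D.a_self]

variable {D}

theorem IsLift.continuous {γ : I → X} {k : I → ι → G} (hk : D.IsLift γ k) (hγ : Continuous γ) :
    Continuous fun t => (⟨γ t, k t (D.bundleCore.indexAt (γ t))⟩ : D.bundleCore.TotalSpace) := by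
  refine continuous_iff_continuousAt.2 fun t => ?_
  rw [FiberBundle.continuousAt_totalSpace]
  refine ⟨hγ.continuousAt, ContinuousAt.congr
    (f := fun _ => k t (D.bundleCore.indexAt (γ t))) continuousAt_const ?_⟩
  have index_mem (r : I) : γ r ∈ D.W (D.bundleCore.indexAt (γ r)) :=
    D.bundleCore.mem_baseSet_at (γ r)
  filter_upwards [hγ.continuousAt.eventually ((D.isOpen_W _).mem_nhds (index_mem t)),
    hk.eventually_eq (index_mem t)] with r hr hkr
  exact hkr.symm.trans (hk.transition (index_mem r) hr)

theorem IsLift.apply_one_eq {x y : X} {γ γ' : Path x y} (hγγ' : γ.Homotopic γ')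
    {k k' : I → ι → G} (hk : D.IsLift γ k) (hk' : D.IsLift γ' k')
    (h0 : ∀ i, x ∈ D.W i → k 0 i = k' 0 i) {i : ι} (hi : y ∈ D.W i) : k 1 i = k' 1 i := by
  let Z := D.bundleCore
  have cov : IsCoveringMap (Bundle.TotalSpace.proj : Z.TotalSpace → X) :=
    FiberBundle.isCoveringMap
  have point_eq (v : ι → G) {z w : X} (h : z = w) :
      (⟨z, v (Z.indexAt z)⟩ : Z.TotalSpace) = ⟨w, v (Z.indexAt w)⟩ := by
    rw [h]
  let Γ : C(I, Z.TotalSpace) := ⟨_, hk.continuous γ.continuous⟩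
  let Γ' : C(I, Z.TotalSpace) := ⟨_, hk'.continuous γ'.continuous⟩
  let e : Z.TotalSpace := ⟨x, k 0 (Z.indexAt x)⟩
  have he : e = ⟨x, k' 0 (Z.indexAt x)⟩ :=
    congrArg (fun v : G => (⟨x, v⟩ : Z.TotalSpace)) (h0 _ (Z.mem_baseSet_at x))
  have Γ_eq : Γ = cov.liftPath γ e γ.source :=
    (cov.eq_liftPath_iff' _).2 ⟨rfl, point_eq (k 0) γ.source⟩
  have Γ'_eq : Γ' = cov.liftPath γ' e γ'.source :=
    (cov.eq_liftPath_iff' _).2 ⟨rfl, (point_eq (k' 0) γ'.source).trans he.symm⟩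
  have ends_eq : Γ 1 = Γ' 1 := by
    rw [Γ_eq, Γ'_eq]
    exact cov.liftPath_apply_one_eq_of_homotopicRel hγγ' e _ _
  have index_eq : k 1 (Z.indexAt y) = k' 1 (Z.indexAt y) := by
    rw [show Γ 1 = ⟨y, k 1 (Z.indexAt y)⟩ from point_eq (k 1) γ.target,
      show Γ' 1 = ⟨y, k' 1 (Z.indexAt y)⟩ from point_eq (k' 1) γ'.target] at ends_eq
    exact congrArg (fun q : Z.TotalSpace => (q.2 : G)) ends_eq
  have hy := Z.mem_baseSet_at y
  have transition := hk.transition (t := 1) (i := Z.indexAt y) (j := i)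
  have transition' := hk'.transition (t := 1) (i := Z.indexAt y) (j := i)
  rw [γ.target] at transition
  rw [γ'.target] at transition'
  rw [transition hy hi, transition' hy hi, index_eq]

end TransitionData

end Monodromy

section LocalCocycles

variable {X G : Type*}

theorem CovDimLE.exists_cover_dist_lt [PseudoMetricSpace X] [CompactSpace X] {n : ℕ}
    (hX : CovDimLE X n) {δ : ℝ} (hδ : 0 < δ) :
    ∃ V : Set (Set X), V.Finite ∧ (∀ v ∈ V, IsOpen v) ∧ ⋃₀ V = univ ∧
      (∀ v ∈ V, ∀ x ∈ v, ∀ y ∈ v, dist x y < δ) ∧ ∀ x, {v ∈ V | x ∈ v}.ncard ≤ n + 1 := by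
  obtain ⟨T, -, hTfin, hT⟩ := (isCompact_univ (X := X)).finite_cover_balls (half_pos hδ)
  obtain ⟨V, hVfin, hVo, hVcover, hVT, hVcard⟩ := hX ((Metric.ball · (δ / 2)) '' T)
    (hTfin.image _) (forall_mem_image.2 fun _ _ => Metric.isOpen_ball)
    (by rw [sUnion_image]; exact univ_subset_iff.1 hT)
  refine ⟨V, hVfin, hVo, hVcover, fun v hv x hx y hy => ?_, hVcard⟩
  obtain ⟨_, ⟨z, -, rfl⟩, hvz⟩ := hVT v hv
  calc dist x y ≤ dist x z + dist y z := dist_triangle_right x y z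
    _ < δ := by linarith [Metric.mem_ball.1 (hvz hx), Metric.mem_ball.1 (hvz hy)]

theorem eq_or_eq_or_eq_of_ncard_le_two {α : Type*} {s : Set α} (hs : s.Finite)
    (hcard : s.ncard ≤ 2) {a b c : α} (ha : a ∈ s) (hb : b ∈ s) (hc : c ∈ s) :
    a = b ∨ b = c ∨ a = c := by
  by_contra! h
  have hsub : {a, b, c} ⊆ s := by
    rintro _ (rfl | rfl | rfl) <;> assumption
  have := ncard_le_ncard hsub hs
  rw [ncard_eq_three.2 ⟨a, b, c, h.1, h.2.2, h.2.1, rfl⟩] at this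
  omega

variable [Group G]

/-- `g` is a `G`-valued cocycle on the pairs of points of `Y` at distance less than `δ`: a flat
`G`-connection on `Y`. -/
def IsLocalCocycle {Y : Type*} [PseudoMetricSpace Y] (δ : ℝ) (g : Y → Y → G) : Prop :=
  ∀ ⦃x y z : Y⦄, dist x y < δ → dist y z < δ → dist x z < δ → g y z * g x y = g x z

/-- `h` is the parallel transport along `γ`, starting at `h 0`, of the local cocycle `g`. -/
def IsTransport {Y : Type*} (g : Y → Y → G) (γ : I → Y) (h : I → G) : Prop :=
  ∀ t, ∀ᶠ r in 𝓝 t, h r = g (γ t) (γ r) * h t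

theorem IsLocalCocycle.apply_self {Y : Type*} [PseudoMetricSpace Y] {δ : ℝ} {g : Y → Y → G}
    (hg : IsLocalCocycle δ g) (hδ : 0 < δ) (y : Y) : g y y = 1 :=
  have hy : dist y y < δ := (dist_self y).symm ▸ hδ
  mul_eq_left.1 (hg hy hy hy)

variable [PseudoMetricSpace X] [CompactSpace X]

theorem IsLocalCocycle.exists_transitionData (hX : CovDimLE X 1) {Y : Set X} [Nonempty Y] {δ : ℝ}
    (hδ : 0 < δ) {g : Y → Y → G} (hg : IsLocalCocycle δ g) :
    ∃ (V : Set (Set X)) (D : TransitionData V X G) (b : V → Y),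
      ∀ (γ : I → Y) (h : I → G), Continuous γ → IsTransport g γ h →
        D.IsLift (fun t => γ t) fun t i => g (γ t) (b i) * h t := by
  classical
  obtain ⟨V, hVfin, hVo, hVcover, hVdist, hVcard⟩ := hX.exists_cover_dist_lt (half_pos hδ)
  have base_point (v : V) : ∃ b : Y, ∀ y : Y, (y : X) ∈ v.1 → (b : X) ∈ v.1 := by
    by_cases h : ∃ y : Y, (y : X) ∈ v.1
    · exact h.imp fun _ hb _ _ => hb
    · exact ⟨Classical.arbitrary Y, fun y hy => absurd ⟨y, hy⟩ h⟩
  choose b hb using base_point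
  have dist_lt {v w : V} {z x y : Y} (hzv : (z : X) ∈ v.1) (hzw : (z : X) ∈ w.1)
      (hx : (x : X) ∈ v.1) (hy : (y : X) ∈ w.1) : dist x y < δ :=
    calc dist (x : X) y ≤ dist (x : X) z + dist (z : X) y := dist_triangle _ _ _
      _ < δ := by linarith [hVdist v v.2 x hx z hzv, hVdist w w.2 z hzw y hy]
  let D : TransitionData V X G :=
    { W := Subtype.val
      isOpen_W v := hVo v v.2
      exists_mem_W x :=
        have ⟨v, hv, hx⟩ := mem_sUnion.1 (hVcover.symm ▸ mem_univ x)
        ⟨⟨v, hv⟩, hx⟩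
      no_triple_overlap i j k x hi hj hk := by
        simpa only [Subtype.ext_iff] using eq_or_eq_or_eq_of_ncard_le_two
          (hVfin.subset (sep_subset _ _)) (hVcard x) ⟨i.2, hi⟩ ⟨j.2, hj⟩ ⟨k.2, hk⟩
      a i j := if dist (b i) (b j) < δ then g (b i) (b j) else 1
      a_self i := by rw [hg.apply_self hδ, ite_self]
      a_mul_swap i j := by
        rw [dist_comm (b j)]
        split_ifs with h
        · rw [hg (dist_comm (b i) (b j) ▸ h) h (by rwa [dist_self]), hg.apply_self hδ]
        · rw [one_mul] }
  refine ⟨V, D, b, fun γ h hγ hh => ⟨fun t i j hi hj => ?_, fun t i hi => ?_⟩⟩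
  · have hbi := hb i _ hi
    have hbj := hb j _ hj
    simp only [D, if_pos (dist_lt hi hj hbi hbj)]
    rw [← mul_assoc, hg (dist_lt hi hi hi hbi) (dist_lt hi hj hbi hbj) (dist_lt hj hj hj hbj)]
  · have hbi := hb i _ hi
    have near : ∀ᶠ r in 𝓝 t, (γ r : X) ∈ i.1 :=
      (continuous_subtype_val.comp hγ).continuousAt.eventually ((hVo i i.2).mem_nhds hi)
    filter_upwards [near, hh t] with r hr hhr
    rw [hhr, ← mul_assoc, hg (dist_lt hi hi hi hr) (dist_lt hi hi hr hbi) (dist_lt hi hi hi hbi)]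

-- A local cocycle on `Y` extends to a bundle over all of `X`, since a bundle over a cover without
-- triple overlaps is subject to no cocycle condition. Hence transport is invariant under homotopies
-- that leave `Y`.
theorem IsTransport.apply_one_eq (hX : CovDimLE X 1) {Y : Set X} {δ : ℝ} (hδ : 0 < δ)
    {g : Y → Y → G} (hg : IsLocalCocycle δ g) {y z : Y} {γ γ' : Path y z}
    (hγγ' : (γ.map continuous_subtype_val).Homotopic (γ'.map continuous_subtype_val))
    {h h' : I → G} (hh : IsTransport g γ h) (hh' : IsTransport g γ' h') (h0 : h 0 = h' 0) :
    h 1 = h' 1 := by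
  have : Nonempty Y := ⟨y⟩
  let _ : TopologicalSpace G := ⊥
  have : DiscreteTopology G := ⟨rfl⟩
  obtain ⟨V, D, b, lift⟩ := hg.exists_transitionData hX hδ
  obtain ⟨i, hi⟩ := D.exists_mem_W z
  have key := TransitionData.IsLift.apply_one_eq hγγ' (lift γ h γ.continuous hh)
    (lift γ' h' γ'.continuous hh') (fun i _ => by simp only [γ.source, γ'.source, h0]) hi
  simpa only [γ.target, γ'.target, mul_right_inj] using key

end LocalCocycles

section InclusionInjective

theorem eventually_range_subpath_subset {Y : Type*} [TopologicalSpace Y] {a b : Y} (γ : Path a b)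
    (t : I) {U : Set Y} (hU : U ∈ 𝓝 (γ t)) : ∀ᶠ r in 𝓝 t, range (γ.subpath t r) ⊆ U := by
  simp only [Path.range_subpath, image_subset_iff]
  exact (tendsto_const_nhds.uIcc Filter.tendsto_id).eventually
    (Filter.eventually_smallSets_subset.2 (γ.continuous.continuousAt hU))

variable {X : Type*} [PseudoMetricSpace X] [CompactSpace X]

theorem IsLocalPathClass.isTransport_loopClass {Y : Type*} [PseudoMetricSpace Y]
    [PathConnectedSpace Y] {δ : ℝ} (hδ : 0 < δ) {s : ∀ y y' : Y, Path.Homotopic.Quotient y y'}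
    (hs : IsLocalPathClass δ s) (x₀ : Y) {y z : Y} (γ : Path y z) :
    IsTransport (fun u v => loopClass x₀ (s u v)) γ
      fun t => loopClass x₀ (.mk (γ.subpath 0 t)) := by
  intro t
  filter_upwards [eventually_range_subpath_subset γ t (Metric.ball_mem_nhds (γ t) hδ)] with r hr
  rw [← hs.mk_eq _ hr, ← loopClass_trans, ← Path.Homotopic.Quotient.mk_trans]
  exact congrArg _ (Path.Homotopic.Quotient.eq.2 ⟨Path.Homotopy.subpathTransSubpath γ 0 t r⟩).symm

theorem CovDimLE.homotopic_of_homotopic_map_val (hX : CovDimLE X 1) {Y : Set X} [CompactSpace Y]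
    [LocallyPathConnectedSpace Y] [PathConnectedSpace Y] (hY : SemilocallySimplyConnected Y)
    {y z : Y} {γ γ' : Path y z}
    (hγγ' : (γ.map continuous_subtype_val).Homotopic (γ'.map continuous_subtype_val)) :
    γ.Homotopic γ' := by
  obtain ⟨δ, hδ, s, hs⟩ := hY.exists_isLocalPathClass
  have cocycle : IsLocalCocycle δ fun u v => loopClass y (s u v) := fun u v w h₁ h₂ h₃ => by
    rw [← loopClass_trans, hs.trans_eq h₁ h₂ h₃]
  have key := IsTransport.apply_one_eq hX hδ cocycle hγγ' (hs.isTransport_loopClass hδ y γ)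
    (hs.isTransport_loopClass hδ y γ') (by simp only [Path.subpath_self, loopClass_mk_refl])
  rw [Path.subpath_zero_one, Path.subpath_zero_one, loopClass_mk_cast, loopClass_mk_cast] at key
  exact Path.Homotopic.Quotient.eq.1 (loopClass_injective y y z key)

end InclusionInjective

section GapCollapsing

theorem exists_forall_Icc_apply_ne {X : Type*} [TopologicalSpace X] [T2Space X] {γ : I → X}
    (hγ : Continuous γ) {s t : I} (hst : s < t) (hne : γ s ≠ γ t) :
    ∃ s₁ > s, ∃ t₁ < t, s₁ < t₁ ∧ ∀ r ∈ Icc s s₁, ∀ r' ∈ Icc t₁ t, γ r ≠ γ r' := by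
  have separated : ∀ᶠ p in 𝓝 s ×ˢ 𝓝 t, γ p.1 ≠ γ p.2 := by
    rw [← nhds_prod_eq]
    exact (isOpen_ne_fun (hγ.comp continuous_fst) (hγ.comp continuous_snd)).mem_nhds hne
  obtain ⟨P, hP, Q, hQ, hPQ⟩ := Filter.eventually_prod_iff.1 separated
  obtain ⟨m, hsm, hmt⟩ := exists_between hst
  obtain ⟨u, hu, huP⟩ := exists_Ico_subset_of_mem_nhds' hP hsm
  obtain ⟨l, hl, hlQ⟩ := exists_Ioc_subset_of_mem_nhds' hQ hmt
  obtain ⟨s₁, hs₁, hs₁u⟩ := exists_between hu.1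
  obtain ⟨t₁, hlt₁, ht₁⟩ := exists_between hl.2
  exact ⟨s₁, hs₁, t₁, ht₁, hs₁u.trans_le (hu.2.trans (hl.1.trans hlt₁.le)), fun r hr r' hr' =>
    hPQ (huP ⟨hr.1, hr.2.trans_lt hs₁u⟩) (hlQ ⟨hlt₁.trans_le hr'.1, hr'.2⟩)⟩

variable {X : Type*} {γ : I → X} {A : Set I}

/-- A closed set of parameters containing the endpoints such that `γ` takes the same value at the
two ends of every complementary interval. Skipping these intervals shortens the path `γ`, and a
minimal such `A` corresponds to an arc. -/
structure IsGapCollapsing (γ : I → X) (A : Set I) : Prop where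
  isClosed : IsClosed A
  zero_mem : 0 ∈ A
  one_mem : 1 ∈ A
  apply_eq : ∀ ⦃s t⦄, s ∈ A → t ∈ A → s < t → Disjoint A (Ioo s t) → γ s = γ t

namespace IsGapCollapsing

theorem exists_isGreatest (hA : IsGapCollapsing γ A) (t : I) : ∃ r, IsGreatest (A ∩ Iic t) r :=
  (hA.isClosed.inter isClosed_Iic).isCompact.exists_isGreatest ⟨0, hA.zero_mem, nonneg'⟩

theorem exists_isLeast (hA : IsGapCollapsing γ A) (t : I) : ∃ r, IsLeast (A ∩ Ici t) r :=
  (hA.isClosed.inter isClosed_Ici).isCompact.exists_isLeast ⟨1, hA.one_mem, le_one'⟩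

theorem apply_eq_of_disjoint_Icc (hA : IsGapCollapsing γ A) {s t r r' : I} (hst : s ≤ t)
    (hdisj : Disjoint A (Icc s t)) (hr : IsGreatest (A ∩ Iic s) r) (hr' : IsLeast (A ∩ Ici t) r') :
    γ r = γ r' := by
  have hrs : r < s := lt_of_le_of_ne hr.1.2 fun h =>
    disjoint_left.1 hdisj (h ▸ hr.1.1) ⟨le_rfl, hst⟩
  refine hA.apply_eq hr.1.1 hr'.1.1 (hrs.trans_le (hst.trans hr'.1.2)) ?_
  refine disjoint_left.2 fun u hu hur => ?_
  rcases lt_or_ge u s with h | h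
  · exact hur.1.not_ge (hr.2 ⟨hu, h.le⟩)
  rcases le_or_gt u t with h' | h'
  · exact disjoint_left.1 hdisj hu ⟨h, h'⟩
  · exact hur.2.not_ge (hr'.2 ⟨hu, h'.le⟩)

theorem sInter [TopologicalSpace X] [T2Space X] (hγ : Continuous γ) {c : Set (Set I)}
    (hc : ∀ A ∈ c, IsGapCollapsing γ A) (hchain : IsChain (· ⊆ ·) c) (hne : c.Nonempty) :
    IsGapCollapsing γ (⋂₀ c) where
  isClosed := isClosed_sInter fun A hA => (hc A hA).isClosed
  zero_mem A hA := (hc A hA).zero_mem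
  one_mem A hA := (hc A hA).one_mem
  apply_eq s t hs ht hst hdisj := by
    by_contra hne_st
    obtain ⟨s₁, hs₁, t₁, ht₁, hst₁, separated⟩ := exists_forall_Icc_apply_ne hγ hst hne_st
    have : Nonempty c := hne.to_subtype
    have hchain' : IsChain (fun A B : Set I => B ⊆ A) c := hchain.symm
    obtain ⟨A, hA⟩ := exists_subset_nhds_of_compactSpace
      hchain'.directed (fun A : c => (hc A A.2).isClosed)
      (U := (Icc s₁ t₁)ᶜ) fun u hu => isClosed_Icc.isOpen_compl.mem_nhds fun hu' =>
        disjoint_left.1 hdisj (sInter_eq_iInter ▸ hu) ⟨hs₁.trans_le hu'.1, hu'.2.trans_lt ht₁⟩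
    have hcA := hc A A.2
    obtain ⟨r, hr⟩ := hcA.exists_isGreatest s₁
    obtain ⟨r', hr'⟩ := hcA.exists_isLeast t₁
    exact separated r ⟨hr.2 ⟨hs A A.2, hs₁.le⟩, hr.1.2⟩ r' ⟨hr'.1.2, hr'.2 ⟨ht A A.2, ht₁.le⟩⟩
      (hcA.apply_eq_of_disjoint_Icc hst₁.le (disjoint_left.2 hA) hr hr')

theorem univ : IsGapCollapsing γ univ where
  isClosed := isClosed_univ
  zero_mem := mem_univ 0
  one_mem := mem_univ 1
  apply_eq _ _ _ _ hst hdisj :=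
    absurd ((univ_disjoint.1 hdisj) ▸ nonempty_Ioo.2 hst) Set.not_nonempty_empty

theorem exists_minimal [TopologicalSpace X] [T2Space X] (hγ : Continuous γ) :
    ∃ A, Minimal (IsGapCollapsing γ) A :=
  (zorn_superset_nonempty {A | IsGapCollapsing γ A} (fun _ hc hchain hne =>
    ⟨_, sInter hγ hc hchain hne, fun _ => sInter_subset_of_mem⟩) _ univ).imp fun _ h => h.2

/-- Otherwise the parameters between `s` and `t` could be removed. -/
theorem apply_ne_of_minimal (hA : Minimal (IsGapCollapsing γ) A) {s t u : I} (hs : s ∈ A)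
    (ht : t ∈ A) (hu : u ∈ A) (hsu : s < u) (hut : u < t) : γ s ≠ γ t := by
  intro hst
  have hB : IsGapCollapsing γ (A \ Ioo s t) :=
    { isClosed := hA.1.isClosed.sdiff isOpen_Ioo
      zero_mem := ⟨hA.1.zero_mem, fun h => not_lt_zero h.1⟩
      one_mem := ⟨hA.1.one_mem, fun h => h.2.not_ge le_one'⟩
      apply_eq := fun s' t' hs' ht' hst' hdisj => by
        by_cases hgap : Disjoint A (Ioo s' t')
        · exact hA.1.apply_eq hs'.1 ht'.1 hst' hgap
        obtain ⟨v, hv, hv'⟩ := not_disjoint_iff.1 hgap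
        have hvst : v ∈ Ioo s t := by_contra fun h => disjoint_left.1 hdisj ⟨hv, h⟩ hv'
        have hs_notMem : s ∉ Ioo s' t' := disjoint_left.1 hdisj ⟨hs, left_notMem_Ioo⟩
        have ht_notMem : t ∉ Ioo s' t' := disjoint_left.1 hdisj ⟨ht, right_notMem_Ioo⟩
        have hs'_eq : s' = s := le_antisymm
          (not_lt.1 fun h => hs'.2 ⟨h, hv'.1.trans hvst.2⟩)
          (not_lt.1 fun h => hs_notMem ⟨h, hvst.1.trans hv'.2⟩)
        have ht'_eq : t' = t := le_antisymm
          (not_lt.1 fun h => ht_notMem ⟨hv'.1.trans hvst.2, h⟩)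
          (not_lt.1 fun h => ht'.2 ⟨hvst.1.trans hv'.2, h⟩)
        rw [hs'_eq, ht'_eq, hst] }
  exact (hA.2 hB sdiff_subset hu).2 ⟨hsu, hut⟩

theorem apply_eq_of_isGreatest_of_isLeast (hA : IsGapCollapsing γ A) {t r r' : I}
    (hr : IsGreatest (A ∩ Iic t) r) (hr' : IsLeast (A ∩ Ici t) r') : γ r = γ r' := by
  by_cases ht : t ∈ A
  · rw [le_antisymm hr.1.2 (hr.2 ⟨ht, self_mem_Iic⟩),
      le_antisymm (hr'.2 ⟨ht, self_mem_Ici⟩) hr'.1.2]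
  · exact hA.apply_eq_of_disjoint_Icc le_rfl (by rwa [Icc_self, disjoint_singleton_right]) hr hr'

theorem apply_eq_or_exists_mem_Icc (hA : IsGapCollapsing γ A) {s t q r : I} (hst : s ≤ t)
    (hq : IsGreatest (A ∩ Iic s) q) (hr : IsGreatest (A ∩ Iic t) r) :
    γ q = γ r ∨ ∃ s' ∈ Icc s t, ∃ t' ∈ Icc s t, γ q = γ s' ∧ γ r = γ t' := by
  rcases le_or_gt r s with hrs | hrs
  · exact .inl (congrArg γ ((hr.2 ⟨hq.1.1, hq.1.2.trans hst⟩).antisymm (hq.2 ⟨hr.1.1, hrs⟩)))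
  · obtain ⟨s', hs'⟩ := hA.exists_isLeast s
    exact .inr ⟨s', ⟨hs'.1.2, (hs'.2 ⟨hr.1.1, hrs.le⟩).trans hr.1.2⟩, r, ⟨hrs.le, hr.1.2⟩,
      hA.apply_eq_of_isGreatest_of_isLeast hq hs', rfl⟩

end IsGapCollapsing

theorem continuous_of_forall_apply_eq_or_exists_mem_Icc {X : Type*} [PseudoMetricSpace X]
    {f γ : I → X} (hγ : Continuous γ) (h : ∀ s t, s ≤ t →
      f s = f t ∨ ∃ s' ∈ Icc s t, ∃ t' ∈ Icc s t, f s = γ s' ∧ f t = γ t') : Continuous f := by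
  refine Metric.continuous_iff.2 fun t ε hε => ?_
  obtain ⟨δ, hδ, hγδ⟩ := Metric.uniformContinuous_iff.1
    (CompactSpace.uniformContinuous_of_continuous hγ) ε hε
  have dist_lt : ∀ a b, a ≤ b → dist a b < δ → dist (f a) (f b) < ε := fun a b hab hd => by
    rcases h a b hab with heq | ⟨s', hs', t', ht', hs'_eq, ht'_eq⟩
    · rwa [heq, dist_self]
    · rw [hs'_eq, ht'_eq]
      exact hγδ ((Real.dist_le_of_mem_uIcc (Icc_subset_uIcc hs') (Icc_subset_uIcc ht')).trans_lt hd)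
  refine ⟨δ, hδ, fun s hs => ?_⟩
  rcases le_total s t with hst | hts
  · exact dist_lt s t hst hs
  · rw [dist_comm] at hs ⊢
    exact dist_lt t s hts hs

theorem exists_continuous_ordConnected_fibers {X : Type*} [MetricSpace X] {γ : I → X}
    (hγ : Continuous γ) : ∃ f : I → X, Continuous f ∧ f 0 = γ 0 ∧ f 1 = γ 1 ∧ range f ⊆ range γ ∧
      ∀ x, (f ⁻¹' {x}).OrdConnected := by
  obtain ⟨A, hA⟩ := IsGapCollapsing.exists_minimal hγ
  choose ρ hρ using hA.1.exists_isGreatest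
  have hρA : ∀ t ∈ A, ρ t = t := fun t ht => (hρ t).unique ⟨⟨ht, self_mem_Iic⟩, fun _ h => h.2⟩
  have hρ_mono : Monotone ρ := fun s t hst => (hρ t).2 ⟨(hρ s).1.1, (hρ s).1.2.trans hst⟩
  refine ⟨γ ∘ ρ, ?_, congrArg γ (hρA 0 hA.1.zero_mem), congrArg γ (hρA 1 hA.1.one_mem),
    range_comp_subset_range ρ γ, fun x => ⟨?_⟩⟩
  · exact continuous_of_forall_apply_eq_or_exists_mem_Icc hγ fun s t hst =>
      hA.1.apply_eq_or_exists_mem_Icc hst (hρ s) (hρ t)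
  · rintro s rfl t hts u ⟨hsu, hut⟩
    by_contra hne
    have hsu_lt : ρ s < ρ u := (hρ_mono hsu).lt_of_ne fun h => hne (congrArg γ h.symm)
    have hut_lt : ρ u < ρ t := (hρ_mono hut).lt_of_ne fun h => hne ((congrArg γ h).trans hts)
    exact IsGapCollapsing.apply_ne_of_minimal hA (hρ s).1.1 (hρ t).1.1 (hρ u).1.1 hsu_lt hut_lt
      hts.symm

end GapCollapsing

section ArcsFromPaths

variable {X : Type*} [MetricSpace X] {f : I → X}

/-- A Whitney-type function: the mean distance from a running point of `f` to the initial piece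
`f '' Iic t`. It decreases whenever `f` reaches a new point. -/
noncomputable def meanInfDist (f : I → X) (t : I) : ℝ :=
  ∫ u in (0 : ℝ)..1, Metric.infDist (f (projIcc 0 1 zero_le_one u)) (f '' Iic t)

theorem image_Iic_eq_range_inf {X : Type*} (f : I → X) (t : I) :
    f '' Iic t = range fun r => f (r ⊓ t) := by
  ext x
  constructor
  · rintro ⟨r, hr, rfl⟩
    exact ⟨r, congrArg f (inf_eq_left.2 hr)⟩
  · rintro ⟨r, rfl⟩
    exact ⟨r ⊓ t, mem_Iic.2 inf_le_right, rfl⟩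

theorem continuous_infDist_image_Iic (hf : Continuous f) :
    Continuous fun p : X × I => Metric.infDist p.1 (f '' Iic p.2) := by
  have continuous_inf := isCompact_univ.continuous_sInf (K := (univ : Set I))
    (f := fun (p : X × I) r => dist p.1 (f (r ⊓ p.2))) (by fun_prop)
  convert continuous_inf using 2 with p
  rw [image_Iic_eq_range_inf, Metric.infDist_eq_iInf, iInf_range', image_univ, sInf_range]

theorem continuous_meanInfDist (hf : Continuous f) : Continuous (meanInfDist f) := by
  have integrand_continuous : Continuous fun p : I × ℝ =>
      Metric.infDist (f (projIcc 0 1 zero_le_one p.2)) (f '' Iic p.1) :=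
    (continuous_infDist_image_Iic hf).comp
      (f := fun p : I × ℝ => (f (projIcc 0 1 zero_le_one p.2), p.1))
      ((hf.comp (continuous_projIcc.comp continuous_snd)).prodMk continuous_fst)
  exact intervalIntegral.continuous_parametric_intervalIntegral_of_continuous'
    (f := fun t u => Metric.infDist (f (projIcc 0 1 zero_le_one u)) (f '' Iic t))
    integrand_continuous 0 1

theorem meanInfDist_lt_of_notMem (hf : Continuous f) {s t : I} (hst : s ≤ t)
    (hnot : f t ∉ f '' Iic s) : meanInfDist f t < meanInfDist f s := by
  have hcont : ∀ r, Continuous fun u : ℝ =>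
      Metric.infDist (f (projIcc 0 1 zero_le_one u)) (f '' Iic r) := fun r =>
    (Metric.continuous_infDist_pt _).comp (hf.comp continuous_projIcc)
  have hne : (f '' Iic s).Nonempty := nonempty_Iic.image f
  refine intervalIntegral.integral_lt_integral_of_continuousOn_of_le_of_exists_lt one_pos
    (hcont t).continuousOn (hcont s).continuousOn (fun u _ => ?_) ⟨t, t.2, ?_⟩
  · exact Metric.infDist_le_infDist_of_subset (image_mono (Iic_subset_Iic.2 hst)) hne
  · rw [projIcc_val, Metric.infDist_zero_of_mem (mem_image_of_mem f self_mem_Iic)]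
    exact ((isClosed_Iic.isCompact.image hf).isClosed.notMem_iff_infDist_pos hne).1 hnot

theorem meanInfDist_eq_or_lt (hf : Continuous f) (hfib : ∀ x, (f ⁻¹' {x}).OrdConnected)
    {s t : I} (hst : s ≤ t) :
    f s = f t ∧ meanInfDist f s = meanInfDist f t ∨
      f s ≠ f t ∧ meanInfDist f t < meanInfDist f s := by
  have apply_eq : ∀ r ≤ s, f r = f t → f s = f t := fun r hrs hrt =>
    (hfib (f t)).out hrt rfl ⟨hrs, hst⟩
  by_cases h : f s = f t
  · refine .inl ⟨h, ?_⟩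
    have image_eq : f '' Iic t = f '' Iic s := by
      refine (image_subset_iff.2 fun u hut => ?_).antisymm (image_mono (Iic_subset_Iic.2 hst))
      rcases le_total u s with hus | hsu
      · exact mem_image_of_mem f hus
      · exact ⟨s, self_mem_Iic, h.trans ((hfib (f t)).out h rfl ⟨hsu, hut⟩).symm⟩
    rw [meanInfDist, meanInfDist, image_eq]
  · exact .inr ⟨h, meanInfDist_lt_of_notMem hf hst fun ⟨r, hrs, hrt⟩ => h (apply_eq r hrs hrt)⟩

theorem antitone_meanInfDist (hf : Continuous f) (hfib : ∀ x, (f ⁻¹' {x}).OrdConnected) :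
    Antitone (meanInfDist f) := fun _ _ hst =>
  (meanInfDist_eq_or_lt hf hfib hst).elim (fun h => h.2.ge) fun h => h.2.le

theorem meanInfDist_eq_iff (hf : Continuous f) (hfib : ∀ x, (f ⁻¹' {x}).OrdConnected) {s t : I} :
    meanInfDist f s = meanInfDist f t ↔ f s = f t := by
  wlog hst : s ≤ t generalizing s t
  · rw [eq_comm, this (le_of_not_ge hst), eq_comm]
  rcases meanInfDist_eq_or_lt hf hfib hst with h | h
  · exact iff_of_true h.2 h.1
  · exact iff_of_false h.2.ne' h.1

theorem exists_reparametrization_of_monotone {g : I → ℝ} (hg : Continuous g) (hmono : Monotone g)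
    (hlt : g 0 < g 1) : ∃ φ : C(I, I), φ 0 = 0 ∧ φ 1 = 1 ∧ ∀ s t, φ s = φ t ↔ g s = g t := by
  let normalize := iccHomeoI (g 0) (g 1) hlt
  let g' : C(I, Icc (g 0) (g 1)) :=
    ⟨fun t => ⟨g t, hmono nonneg', hmono le_one'⟩, hg.subtype_mk _⟩
  refine ⟨⟨normalize ∘ g', normalize.continuous.comp g'.continuous⟩, Subtype.ext ?_,
    Subtype.ext ?_, fun s t => normalize.injective.eq_iff.trans Subtype.ext_iff⟩
  · simp [normalize, g']
  · simp [normalize, g', (sub_pos.2 hlt).ne']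

theorem exists_injective_path_of_reparametrization {X : Type*} [TopologicalSpace X] {f : I → X}
    (hf : Continuous f) {φ : C(I, I)} (hφ0 : φ 0 = 0) (hφ1 : φ 1 = 1)
    (hφf : ∀ s t, φ s = φ t ↔ f s = f t) :
    ∃ α : Path (f 0) (f 1), Function.Injective α ∧ range α = range f := by
  have hφ : IsQuotientMap φ := φ.continuous.isClosedMap.isQuotientMap φ.continuous fun y =>
    intermediate_value_univ 0 1 φ.continuous ⟨hφ0.trans_le nonneg', le_one'.trans_eq hφ1.symm⟩
  obtain ⟨α, hα⟩ : ∃ α : C(I, X), ∀ t, α (φ t) = f t :=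
    ⟨hφ.lift ⟨f, hf⟩ fun s t => (hφf s t).1,
      DFunLike.congr_fun (hφ.lift_comp (g := ⟨f, hf⟩) fun s t => (hφf s t).1)⟩
  refine ⟨⟨α, (congrArg α hφ0).symm.trans (hα 0), (congrArg α hφ1).symm.trans (hα 1)⟩,
    hφ.surjective.forall₂.2 fun s t hst => (hφf s t).2 ((hα s).symm.trans (hst.trans (hα t))),
    (hφ.surjective.range_comp α).symm.trans (congrArg range (funext hα))⟩

theorem exists_injective_path {a b : X} (hab : a ≠ b) (γ : Path a b) :
    ∃ α : Path a b, Function.Injective α ∧ range α ⊆ range γ := by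
  obtain ⟨f, hf, hf0, hf1, hrange, hfib⟩ := exists_continuous_ordConnected_fibers γ.continuous
  rw [γ.source] at hf0
  rw [γ.target] at hf1
  subst hf0 hf1
  have meanInfDist_lt : meanInfDist f 1 < meanInfDist f 0 :=
    ((antitone_meanInfDist hf hfib) zero_le_one).lt_of_ne
      ((meanInfDist_eq_iff hf hfib).not.2 hab.symm)
  obtain ⟨φ, hφ0, hφ1, hφ⟩ := exists_reparametrization_of_monotone
    (continuous_meanInfDist hf).neg (antitone_meanInfDist hf hfib).neg (neg_lt_neg meanInfDist_lt)
  obtain ⟨α, hα, hαf⟩ := exists_injective_path_of_reparametrization hf hφ0 hφ1 fun s t =>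
    (hφ s t).trans (neg_inj.trans (meanInfDist_eq_iff hf hfib))
  exact ⟨α, hα, hαf.trans_subset hrange⟩

end ArcsFromPaths

section Subarc

variable {X : Type*} [TopologicalSpace X]

theorem convexComb_injective {a b : I} (hab : a ≠ b) : Function.Injective (Icc.convexComb a b) := by
  intro s t h
  have h : (1 - (s : ℝ)) * a + s * b = (1 - (t : ℝ)) * a + t * b := congrArg Subtype.val h
  have hprod : ((s : ℝ) - t) * ((b : ℝ) - a) = 0 := by linear_combination h
  rcases mul_eq_zero.1 hprod with hst | hba
  · exact Subtype.ext (sub_eq_zero.1 hst)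
  · exact absurd (Subtype.ext (sub_eq_zero.1 hba)).symm hab

/-- The restriction of a parametrized curve to the parameters between `a` and `b`, traversed
affinely from `a` to `b`. -/
def subarc (e : C(I, X)) (a b : I) : C(I, X) :=
  e.comp ⟨Icc.convexComb a b, Icc.continuous_convexComb a b⟩

theorem subarc_apply (e : C(I, X)) (a b t : I) : subarc e a b t = e (Icc.convexComb a b t) :=
  rfl

@[simp]
theorem subarc_zero (e : C(I, X)) (a b : I) : subarc e a b 0 = e a :=
  congrArg e (Icc.convexComb_zero a b)

@[simp]
theorem subarc_one (e : C(I, X)) (a b : I) : subarc e a b 1 = e b :=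
  congrArg e (Icc.convexComb_one a b)

theorem range_subarc (e : C(I, X)) (a b : I) : range (subarc e a b) = e '' uIcc a b := by
  rw [← Path.range_subpathAux, ← range_comp]
  rfl

theorem range_subarc_union_range_subarc (e : C(I, X)) (s : I) :
    range (subarc e 0 s) ∪ range (subarc e s 1) = range e := by
  rw [range_subarc, range_subarc, uIcc_of_le nonneg', uIcc_of_le le_one', ← image_union,
    Icc_union_Icc_eq_Icc nonneg' le_one', ← image_univ, ← Icc_bot_top]
  rfl

theorem subarc_injective {e : C(I, X)} (he : Function.Injective e) {a b : I} (hab : a ≠ b) :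
    Function.Injective (subarc e a b) :=
  he.comp (convexComb_injective hab)

end Subarc

/-- `Y` is the union of the finite set `V` of vertices and of the finitely many parametrized arcs in
`E`, the edges, whose interiors are pairwise disjoint and contain no vertices. -/
structure IsGraphOn {X : Type*} [TopologicalSpace X] (V : Set X) (E : Set C(I, X)) (Y : Set X) :
    Prop where
  finite_vertices : V.Finite
  finite_edges : E.Finite
  injective : ∀ e ∈ E, Function.Injective e
  apply_zero_mem : ∀ e ∈ E, e 0 ∈ V
  apply_one_mem : ∀ e ∈ E, e 1 ∈ V
  eq_zero_or_one : ∀ e ∈ E, ∀ t, e t ∈ V → t = 0 ∨ t = 1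
  pairwise : E.Pairwise fun e e' => range e ∩ range e' ⊆ V
  union_eq : V ∪ ⋃ e ∈ E, range e = Y

namespace IsGraphOn

variable {X : Type*} [TopologicalSpace X] {V : Set X} {E : Set C(I, X)} {Y : Set X}

theorem isFiniteTopGraph (h : IsGraphOn V E Y) : IsFiniteTopGraph Y := by
  have := h.finite_edges.to_subtype
  obtain ⟨n, ⟨f⟩⟩ := Finite.exists_equiv_fin E
  refine ⟨h.finite_vertices.toFinset, n, fun i => f.symm i, fun i => h.injective _ (f.symm i).2, ?_,
    ?_, ?_, ?_⟩
  · simpa using fun i => ⟨h.apply_zero_mem _ (f.symm i).2, h.apply_one_mem _ (f.symm i).2⟩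
  · simpa using fun i => h.eq_zero_or_one _ (f.symm i).2
  · intro i j hij x hi hj
    have hne : (f.symm i : C(I, X)) ≠ f.symm j := fun h => hij (f.symm.injective (Subtype.ext h))
    simpa using h.pairwise (f.symm i).2 (f.symm j).2 hne ⟨hi, hj⟩
  · rw [h.finite_vertices.coe_toFinset, ← h.union_eq, biUnion_eq_iUnion,
      ← f.symm.surjective.iUnion_comp]

theorem _root_.IsFiniteTopGraph.exists_isGraphOn (h : IsFiniteTopGraph Y) :
    ∃ V E, IsGraphOn V E Y := by
  obtain ⟨V, n, e, hinj, hends, hint, hdisj, rfl⟩ := h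
  refine ⟨V, range e, V.finite_toSet, finite_range e, ?_, ?_, ?_, ?_, ?_, ?_⟩
  · exact forall_mem_range.2 hinj
  · exact forall_mem_range.2 fun i => (hends i).1
  · exact forall_mem_range.2 fun i => (hends i).2
  · exact forall_mem_range.2 hint
  · rintro _ ⟨i, rfl⟩ _ ⟨j, rfl⟩ hij x ⟨hi, hj⟩
    exact hdisj i j (fun h => hij (congrArg e h)) x hi hj
  · rw [biUnion_range]

theorem vertices_subset (h : IsGraphOn V E Y) : V ⊆ Y :=
  h.union_eq ▸ subset_union_left

theorem apply_mem (h : IsGraphOn V E Y) {e : C(I, X)} (he : e ∈ E) (t : I) : e t ∈ Y :=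
  h.union_eq ▸ Or.inr (mem_biUnion he (mem_range_self t))

theorem mem_or_exists (h : IsGraphOn V E Y) {y : X} (hy : y ∈ Y) :
    y ∈ V ∨ ∃ e ∈ E, ∃ t, e t = y := by
  simpa [← h.union_eq] using hy

theorem isCompact (h : IsGraphOn V E Y) : IsCompact Y :=
  h.union_eq ▸ h.finite_vertices.isCompact.union
    (h.finite_edges.isCompact_biUnion fun e _ => isCompact_range e.continuous)

theorem locallyPathConnectedSpace [T2Space X] (h : IsGraphOn V E Y) :
    LocallyPathConnectedSpace Y := by
  have := h.finite_vertices.to_subtype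
  have := h.finite_edges.to_subtype
  have : LocallyPathConnectedSpace I := (convex_Icc (0 : ℝ) 1).locallyPathConnectedSpace
  let q : V ⊕ (Σ _ : E, I) → Y :=
    Sum.elim (inclusion h.vertices_subset) fun p => ⟨p.1.1 p.2, h.apply_mem p.1.2 p.2⟩
  have hq : Continuous q := (continuous_inclusion _).sumElim
    (continuous_sigma fun e => e.1.continuous.subtype_mk _)
  have hsurj : Function.Surjective q := by
    rintro ⟨y, hy⟩
    rcases h.mem_or_exists hy with hyV | ⟨e, he, t, rfl⟩
    · exact ⟨Sum.inl ⟨y, hyV⟩, rfl⟩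
    · exact ⟨Sum.inr ⟨⟨e, he⟩, t⟩, rfl⟩
  exact (hq.isClosedMap.isQuotientMap hq hsurj).locallyPathConnectedSpace

theorem attach (h : IsGraphOn V E Y) {β : C(I, X)} (hβ : Function.Injective β)
    (hβV : ∀ t, β t ∈ Y → β t ∈ V) (hβends : ∀ t, β t ∈ Y → t = 0 ∨ t = 1) :
    IsGraphOn (V ∪ {β 0, β 1}) (insert β E) (Y ∪ range β) := by
  have old_vertices : ∀ y ∈ Y, y ∈ V ∪ {β 0, β 1} → y ∈ V := by
    rintro y hy (hyV | rfl | rfl)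
    exacts [hyV, hβV 0 hy, hβV 1 hy]
  refine ⟨h.finite_vertices.union (toFinite _), h.finite_edges.insert β, ?_, ?_, ?_, ?_, ?_, ?_⟩
  · exact forall_mem_insert.2 ⟨hβ, h.injective⟩
  · exact forall_mem_insert.2 ⟨by simp, fun e he => Or.inl (h.apply_zero_mem e he)⟩
  · exact forall_mem_insert.2 ⟨by simp, fun e he => Or.inl (h.apply_one_mem e he)⟩
  · refine forall_mem_insert.2 ⟨?_, fun e he t ht =>
      h.eq_zero_or_one e he t (old_vertices _ (h.apply_mem he t) ht)⟩
    rintro t (ht | ht | ht)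
    exacts [hβends t (h.vertices_subset ht), Or.inl (hβ ht), Or.inr (hβ ht)]
  · refine (h.pairwise.imp fun e e' hee' => hee'.trans subset_union_left).insert fun e he _ => ?_
    have hβe : range β ∩ range e ⊆ V ∪ {β 0, β 1} := by
      rintro _ ⟨⟨t, rfl⟩, s, hs⟩
      exact Or.inl (hβV t (hs ▸ h.apply_mem he s))
    exact ⟨hβe, inter_comm _ _ ▸ hβe⟩
  · have : ({β 0, β 1} : Set X) ⊆ range β := by simp [insert_subset_iff]
    rw [biUnion_insert, ← h.union_eq]
    grind

theorem sdiff_singleton (h : IsGraphOn V E Y) (e : C(I, X)) :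
    IsGraphOn V (E \ {e}) (V ∪ ⋃ e' ∈ E \ {e}, range e') where
  finite_vertices := h.finite_vertices
  finite_edges := h.finite_edges.sdiff
  injective e' he' := h.injective e' he'.1
  apply_zero_mem e' he' := h.apply_zero_mem e' he'.1
  apply_one_mem e' he' := h.apply_one_mem e' he'.1
  eq_zero_or_one e' he' := h.eq_zero_or_one e' he'.1
  pairwise := h.pairwise.mono sdiff_subset
  union_eq := rfl

theorem mem_vertices_of_mem_sdiff_singleton (h : IsGraphOn V E Y) {e : C(I, X)} (he : e ∈ E) {t : I}
    (ht : e t ∈ V ∪ ⋃ e' ∈ E \ {e}, range e') : e t ∈ V := by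
  rcases (h.sdiff_singleton e).mem_or_exists ht with ht | ⟨e', he', t', ht'⟩
  · exact ht
  · exact h.pairwise he he'.1 (Ne.symm he'.2) ⟨mem_range_self t, t', ht'⟩

theorem exists_subdivision (h : IsGraphOn V E Y) {e : C(I, X)} (he : e ∈ E) {s : I} (hs : e s ∉ V) :
    ∃ V' E', IsGraphOn V' E' Y ∧ V ⊆ V' ∧ e s ∈ V' := by
  have hs0 : s ≠ 0 := fun hs0 => hs (hs0 ▸ h.apply_zero_mem e he)
  have hs1 : s ≠ 1 := fun hs1 => hs (hs1 ▸ h.apply_one_mem e he)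
  have hinj := h.injective e he
  have h₀ := h.sdiff_singleton e
  set Y₀ := V ∪ ⋃ e' ∈ E \ {e}, range e'
  have ends₁ (t : I) (ht : subarc e 0 s t ∈ Y₀) : t = 0 ∨ t = 1 := by
    rcases h.eq_zero_or_one e he _ (h.mem_vertices_of_mem_sdiff_singleton he ht) with h0 | h1
    · exact Or.inl (convexComb_injective hs0.symm (h0.trans (Icc.convexComb_zero _ _).symm))
    · exact absurd (h1.ge.trans (Icc.convexComb_le nonneg' t)) (le_one'.lt_of_ne hs1).not_ge
  have h₁ := h₀.attach (subarc_injective hinj hs0.symm)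
    (fun t => h.mem_vertices_of_mem_sdiff_singleton he) ends₁
  have ends₂ (t : I) (ht : subarc e s 1 t ∈ Y₀ ∪ range (subarc e 0 s)) : t = 0 ∨ t = 1 := by
    have hle := Icc.le_convexComb (le_one' : s ≤ 1) t
    rcases ht with ht | ht
    · rcases h.eq_zero_or_one e he _ (h.mem_vertices_of_mem_sdiff_singleton he ht) with h0 | h1
      · exact absurd (hle.trans h0.le) (nonneg'.lt_of_ne hs0.symm).not_ge
      · exact Or.inr (convexComb_injective hs1 (h1.trans (Icc.convexComb_one _ _).symm))
    · rw [range_subarc, subarc_apply, hinj.mem_set_image, uIcc_of_le nonneg'] at ht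
      exact Or.inl (convexComb_injective hs1 ((ht.2.antisymm hle).trans
        (Icc.convexComb_zero _ _).symm))
  have vertices₂ (t : I) (ht : subarc e s 1 t ∈ Y₀ ∪ range (subarc e 0 s)) :
      subarc e s 1 t ∈ V ∪ {subarc e 0 s 0, subarc e 0 s 1} := by
    rcases ends₂ t ht with rfl | rfl
    · simp
    · exact Or.inl (by simpa using h.apply_one_mem e he)
  have h₂ := h₁.attach (subarc_injective hinj hs1) vertices₂ ends₂
  have union_eq : Y₀ ∪ range (subarc e 0 s) ∪ range (subarc e s 1) = Y := by
    rw [union_assoc, range_subarc_union_range_subarc, union_assoc, union_comm _ (range e),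
      ← biUnion_insert e _ fun e' => range e', insert_sdiff_singleton, insert_eq_of_mem he,
      h.union_eq]
  exact ⟨_, _, union_eq ▸ h₂, subset_union_left.trans subset_union_left, by simp⟩

theorem exists_mem_vertices (h : IsGraphOn V E Y) (y : X) :
    ∃ V' E', IsGraphOn V' E' Y ∧ V ⊆ V' ∧ (y ∈ Y → y ∈ V') := by
  by_cases hy : y ∈ Y → y ∈ V
  · exact ⟨V, E, h, subset_rfl, hy⟩
  · push Not at hy
    obtain ⟨e, he, s, rfl⟩ := (h.mem_or_exists hy.1).resolve_left hy.2
    obtain ⟨V', E', h', hVV', hs⟩ := h.exists_subdivision he hy.2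
    exact ⟨V', E', h', hVV', fun _ => hs⟩

end IsGraphOn

namespace IsFiniteTopGraph

variable {X : Type*} [TopologicalSpace X] {Y : Set X}

theorem isCompact (h : IsFiniteTopGraph Y) : IsCompact Y :=
  let ⟨_, _, hVE⟩ := h.exists_isGraphOn
  hVE.isCompact

theorem locallyPathConnectedSpace [T2Space X] (h : IsFiniteTopGraph Y) :
    LocallyPathConnectedSpace Y :=
  let ⟨_, _, hVE⟩ := h.exists_isGraphOn
  hVE.locallyPathConnectedSpace

theorem singleton (x : X) : IsFiniteTopGraph ({x} : Set X) :=
  ⟨{x}, 0, Fin.elim0, by simp⟩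

theorem union_range (h : IsFiniteTopGraph Y) {β : C(I, X)} (hβ : Function.Injective β)
    (hβY : ∀ t, β t ∈ Y → t = 0 ∨ t = 1) : IsFiniteTopGraph (Y ∪ range β) := by
  obtain ⟨V, E, hVE⟩ := h.exists_isGraphOn
  obtain ⟨V₁, E₁, h₁, -, h0⟩ := hVE.exists_mem_vertices (β 0)
  obtain ⟨V₂, E₂, h₂, hV₁V₂, h1⟩ := h₁.exists_mem_vertices (β 1)
  refine (h₂.attach hβ (fun t ht => ?_) hβY).isFiniteTopGraph
  rcases hβY t ht with rfl | rfl
  exacts [hV₁V₂ (h0 ht), h1 ht]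

end IsFiniteTopGraph

section Nullhomotopic

theorem homotopic_map_of_nullhomotopic {K Y : Type*} [TopologicalSpace K] [TopologicalSpace Y]
    {f : C(K, Y)} (hf : f.Nullhomotopic) {a b : K} (γ γ' : Path a b) :
    (γ.map f.continuous).Homotopic (γ'.map f.continuous) := by
  obtain ⟨y, ⟨H⟩⟩ := hf
  have h : ((γ.map f.continuous).trans (H.evalAt b)).Homotopic
      ((γ'.map f.continuous).trans (H.evalAt b)) :=
    (Path.Homotopic.map_trans_evalAt H γ).trans (Path.Homotopic.map_trans_evalAt H γ').symm
  rw [← Path.Homotopic.Quotient.eq, Path.Homotopic.Quotient.mk_trans,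
    Path.Homotopic.Quotient.mk_trans] at h
  replace h := congrArg (·.trans (Path.Homotopic.Quotient.mk (H.evalAt b)).symm) h
  simpa only [Path.Homotopic.Quotient.trans_assoc, Path.Homotopic.Quotient.trans_symm,
    Path.Homotopic.Quotient.trans_refl, Path.Homotopic.Quotient.eq] using h

theorem SemilocallySimplyConnected.of_nullhomotopic {Y : Type*} [TopologicalSpace Y]
    (h : ∀ y : Y, ∃ U ∈ 𝓝 y, (⟨Subtype.val, continuous_subtype_val⟩ : C(U, Y)).Nullhomotopic) :
    SemilocallySimplyConnected Y := by
  intro y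
  obtain ⟨U, hU, hnull⟩ := h y
  refine ⟨U, hU, fun a b γ γ' hγ hγ' => ?_⟩
  let restrict (γ : Path a b) (hγ : range γ ⊆ U) :
      Path (⟨a, hγ γ.source_mem_range⟩ : U) ⟨b, hγ γ.target_mem_range⟩ :=
    { toFun := fun t => ⟨γ t, hγ (mem_range_self t)⟩
      source' := Subtype.ext γ.source
      target' := Subtype.ext γ.target }
  exact homotopic_map_of_nullhomotopic hnull (restrict γ hγ) (restrict γ' hγ')

theorem continuous_of_isClosed_graph {α β : Type*} [TopologicalSpace α] [TopologicalSpace β]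
    [CompactSpace β] {f : α → β} (hf : IsClosed {p : α × β | f p.1 = p.2}) : Continuous f := by
  refine continuous_iff_isClosed.2 fun C hC => ?_
  convert! isClosedMap_fst_of_compactSpace _ (hf.inter (hC.preimage continuous_snd)) using 1
  ext a
  simp [and_comm]

end Nullhomotopic

section OpenStar

variable {X : Type*} [TopologicalSpace X] {V : Set X} {E : Set C(I, X)} {Y : Set X} {y : X}

/-- The points of the graph with vertices `V` and edges `E` that are no vertices other than `y` and
lie on no edge missing `y`. -/
def openStar (V : Set X) (E : Set C(I, X)) (y : X) : Set X :=
  (V \ {y} ∪ ⋃ e ∈ {e ∈ E | y ∉ range e}, range e)ᶜ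

/-- The graph of the straight-line contraction of the open star of `y`: the triples `(r, x, z)` such
that `z` divides the part between `y` and `x` of some edge in the ratio `r`. -/
def starContraction (E : Set C(I, X)) (y : X) : Set (I × X × X) :=
  {p | p.2.1 = y ∧ p.2.2 = y} ∪ ⋃ e ∈ E,
    (fun q : I × I × I => (q.1, e q.2.2, e (Icc.convexComb q.2.1 q.2.2 q.1))) '' {q | e q.2.1 = y}

theorem mem_starContraction {r : I} {x z : X} : (r, x, z) ∈ starContraction E y ↔
    x = y ∧ z = y ∨ ∃ e ∈ E, ∃ b s, e b = y ∧ e s = x ∧ e (Icc.convexComb b s r) = z := by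
  simp only [starContraction, mem_union, mem_ofPred_eq, mem_iUnion₂, mem_image, Prod.exists,
    Prod.mk.injEq]
  refine or_congr_right (exists_congr fun e => ⟨?_, ?_⟩)
  · rintro ⟨he, _, b, s, hb, rfl, hs, hz⟩
    exact ⟨he, b, s, hb, hs, hz⟩
  · rintro ⟨he, b, s, hb, hs, hz⟩
    exact ⟨he, r, b, s, hb, rfl, hs, hz⟩

theorem eq_of_zero_mem_starContraction {x z : X} (hz : (0, x, z) ∈ starContraction E y) :
    z = y := by
  rcases mem_starContraction.1 hz with ⟨-, hz⟩ | ⟨e, -, b, s, hb, -, rfl⟩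
  · exact hz
  · rwa [Icc.convexComb_zero]

theorem eq_of_one_mem_starContraction {x z : X} (hz : (1, x, z) ∈ starContraction E y) :
    z = x := by
  rcases mem_starContraction.1 hz with ⟨hx, hz⟩ | ⟨e, -, b, s, -, hs, rfl⟩
  · exact hz.trans hx.symm
  · rwa [Icc.convexComb_one]

theorem self_mem_openStar : y ∈ openStar V E y := by
  rintro (⟨-, hy⟩ | hy)
  · exact hy rfl
  · obtain ⟨e, he, hye⟩ := mem_iUnion₂.1 hy
    exact he.2 hye

namespace IsGraphOn

theorem isOpen_openStar [T2Space X] (h : IsGraphOn V E Y) (y : X) : IsOpen (openStar V E y) :=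
  (h.finite_vertices.sdiff.isClosed.union <| (h.finite_edges.sep _).isClosed_biUnion fun e _ =>
    (isCompact_range e.continuous).isClosed).isOpen_compl

theorem isClosed_starContraction [T2Space X] (h : IsGraphOn V E Y) (y : X) :
    IsClosed (starContraction E y) := by
  refine ((isClosed_eq (by fun_prop) continuous_const).inter
    (isClosed_eq (by fun_prop) continuous_const)).union
      (h.finite_edges.isClosed_biUnion fun e _ => IsCompact.isClosed ?_)
  refine IsCompact.image (isClosed_eq (by fun_prop) continuous_const).isCompact ?_
  have hcomb : Continuous fun q : I × I × I => Icc.convexComb q.2.1 q.2.2 q.1 :=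
    Icc.continuous_convexComb_prod.comp
      (by fun_prop : Continuous fun q : I × I × I => (q.2.1, q.2.2, q.1))
  exact continuous_fst.prodMk ((e.continuous.comp (by fun_prop)).prodMk (e.continuous.comp hcomb))

theorem eq_of_self_mem_starContraction (h : IsGraphOn V E Y) {r : I} {z : X}
    (hz : (r, y, z) ∈ starContraction E y) : z = y := by
  rcases mem_starContraction.1 hz with ⟨-, hz⟩ | ⟨e, he, b, s, hb, hs, rfl⟩
  · exact hz
  · obtain rfl := h.injective e he (hb.trans hs.symm)
    rw [Icc.convexComb_eq, hb]

theorem eq_of_mem_starContraction (h : IsGraphOn V E Y) {r : I} {x z z' : X}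
    (hx : x ∈ openStar V E y) (hz : (r, x, z) ∈ starContraction E y)
    (hz' : (r, x, z') ∈ starContraction E y) : z = z' := by
  by_cases hxy : x = y
  · subst hxy
    rw [h.eq_of_self_mem_starContraction hz, h.eq_of_self_mem_starContraction hz']
  obtain ⟨e, he, b, s, hb, hs, rfl⟩ := (mem_starContraction.1 hz).resolve_left fun h => hxy h.1
  obtain ⟨e', he', b', s', hb', hs', rfl⟩ :=
    (mem_starContraction.1 hz').resolve_left fun h => hxy h.1
  obtain rfl : e = e' := by
    by_contra hee'
    exact hx (Or.inl ⟨h.pairwise he he' hee' ⟨⟨s, hs⟩, s', hs'⟩, hxy⟩)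
  rw [h.injective e he (hb.trans hb'.symm), h.injective e he (hs.trans hs'.symm)]

theorem exists_mem_starContraction (h : IsGraphOn V E Y) (hy : y ∈ Y) {x : X} (hxY : x ∈ Y)
    (hx : x ∈ openStar V E y) (r : I) : ∃ z : Y, (r, x, (z : X)) ∈ starContraction E y := by
  simp only [openStar, mem_compl_iff, mem_union, not_or] at hx
  rcases h.mem_or_exists hxY with hxV | ⟨e, he, s, rfl⟩
  · have hxy : x = y := by_contra fun hxy => hx.1 ⟨hxV, hxy⟩
    exact ⟨⟨y, hy⟩, mem_starContraction.2 (Or.inl ⟨hxy, rfl⟩)⟩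
  · obtain ⟨b, hb⟩ : y ∈ range e := by_contra fun hye =>
      hx.2 (mem_biUnion (show e ∈ {e ∈ E | y ∉ range e} from ⟨he, hye⟩) (mem_range_self s))
    exact ⟨⟨_, h.apply_mem he _⟩, mem_starContraction.2 (Or.inr ⟨e, he, b, s, hb, rfl, rfl⟩)⟩

theorem nullhomotopic_openStar [T2Space X] (h : IsGraphOn V E Y) (y : Y) :
    (⟨Subtype.val, continuous_subtype_val⟩ :
      C(Subtype.val ⁻¹' openStar V E y, Y)).Nullhomotopic := by
  have := isCompact_iff_compactSpace.1 h.isCompact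
  let U : Set Y := Subtype.val ⁻¹' openStar V E y
  choose F hF using fun p : I × U => h.exists_mem_starContraction y.2 p.2.1.2 p.2.2 p.1
  have eq_F {p : I × U} {z : Y} (hz : (p.1, (p.2 : X), (z : X)) ∈ starContraction E y) : F p = z :=
    Subtype.ext (h.eq_of_mem_starContraction p.2.2 (hF p) hz)
  have hFcont : Continuous F := by
    refine continuous_of_isClosed_graph ?_
    convert! (h.isClosed_starContraction (y : X)).preimage
      (f := fun q : (I × U) × Y => (q.1.1, (q.1.2 : X), (q.2 : X))) (by fun_prop) using 1
    ext ⟨p, z⟩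
    exact ⟨fun hz => (show F p = z from hz) ▸ hF p, eq_F⟩
  refine ⟨y, ⟨ContinuousMap.Homotopy.symm ⟨⟨F, hFcont⟩, fun x => ?_, fun x => ?_⟩⟩⟩
  · exact Subtype.ext (eq_of_zero_mem_starContraction (hF (0, x)))
  · exact Subtype.ext (eq_of_one_mem_starContraction (hF (1, x)))

theorem semilocallySimplyConnected [T2Space X] (h : IsGraphOn V E Y) :
    SemilocallySimplyConnected Y :=
  .of_nullhomotopic fun y => ⟨_, ((h.isOpen_openStar y).preimage continuous_subtype_val).mem_nhds
    self_mem_openStar, h.nullhomotopic_openStar y⟩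

end IsGraphOn

end OpenStar

theorem IsFiniteTopGraph.semilocallySimplyConnected {X : Type*} [TopologicalSpace X] [T2Space X]
    {Y : Set X} (h : IsFiniteTopGraph Y) : SemilocallySimplyConnected Y :=
  let ⟨_, _, hVE⟩ := h.exists_isGraphOn
  hVE.semilocallySimplyConnected

section HomotopicInto

theorem forall_unitInterval_of_local {P : I → Prop} (h0 : P 0)
    (hP : ∀ u, ∃ U ∈ 𝓝 u, ∀ s t, s ≤ t → Icc s t ⊆ U → P s → P t) : P 1 := by
  choose U hU hstep using hP
  obtain ⟨t, ht0, ht, ⟨n, hn⟩, hsub⟩ := exists_monotone_Icc_subset_open_cover_unitInterval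
    (fun u => isOpen_interior (s := U u))
    fun u _ => mem_iUnion.2 ⟨u, mem_interior_iff_mem_nhds.2 (hU u)⟩
  have hPt (k : ℕ) : P (t k) := by
    induction k with
    | zero => exact ht0 ▸ h0
    | succ k ih =>
      obtain ⟨u, hu⟩ := hsub k
      exact hstep u _ _ (ht k.le_succ) (hu.trans interior_subset) ih
  exact hn n le_rfl ▸ hPt n

/-- The path `γ` is homotopic, relative to its endpoints, to a path in `Y`. The path `γ` itself and
the homotopy may leave `Y`. -/
def HomotopicInto {X : Type*} [TopologicalSpace X] {a b : X} (γ : Path a b) (Y : Set X) : Prop :=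
  ∃ γ' : Path a b, range γ' ⊆ Y ∧ γ.Homotopic γ'

variable {X : Type*} [TopologicalSpace X] {a b : X} {Y Y' Y'' : Set X} {γ : Path a b}

namespace HomotopicInto

theorem of_range_subset (hγ : range γ ⊆ Y) : HomotopicInto γ Y :=
  ⟨γ, hγ, .refl γ⟩

theorem mono (h : HomotopicInto γ Y) (hY : Y ⊆ Y') : HomotopicInto γ Y' :=
  let ⟨γ', hγ', hom⟩ := h
  ⟨γ', hγ'.trans hY, hom⟩

theorem congr (h : HomotopicInto γ Y) {γ' : Path a b} (hγ : γ.Homotopic γ') :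
    HomotopicInto γ' Y :=
  let ⟨γ'', hγ'', hom⟩ := h
  ⟨γ'', hγ'', hγ.symm.trans hom⟩

theorem target_mem (h : HomotopicInto γ Y) : b ∈ Y :=
  let ⟨_, hγ', _⟩ := h
  hγ' (Path.target_mem_range _)

theorem subpath_trans {r s t : I} (h : HomotopicInto (γ.subpath r s) Y)
    (h' : HomotopicInto (γ.subpath s t) Y) : HomotopicInto (γ.subpath r t) Y := by
  obtain ⟨β, hβ, hom⟩ := h
  obtain ⟨β', hβ', hom'⟩ := h'
  refine ⟨β.trans β', (Path.trans_range β β').trans_subset (union_subset hβ hβ'), ?_⟩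
  exact (Path.Homotopic.symm ⟨.subpathTransSubpath γ r s t⟩).trans (hom.hcomp hom')

theorem of_subpath_zero_one (h : HomotopicInto (γ.subpath 0 1) Y) : HomotopicInto γ Y := by
  obtain ⟨γ', hγ', hom⟩ := h
  rw [Path.subpath_zero_one] at hom
  refine ⟨γ'.cast γ.source.symm γ.target.symm, hγ', ?_⟩
  exact hom

theorem exists_map_val_homotopic (h : HomotopicInto γ Y) (ha : a ∈ Y) (hb : b ∈ Y) :
    ∃ γ' : Path (⟨a, ha⟩ : Y) ⟨b, hb⟩, (γ'.map continuous_subtype_val).Homotopic γ := by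
  obtain ⟨γ', hγ', hom⟩ := h
  refine ⟨⟨⟨fun t => ⟨γ' t, hγ' (mem_range_self t)⟩, by fun_prop⟩, ?_, ?_⟩, hom.symm⟩
  · exact Subtype.ext γ'.source
  · exact Subtype.ext γ'.target

end HomotopicInto

theorem SemilocallySimplyConnected.exists_forall_homotopicInto_subpath
    (hX : SemilocallySimplyConnected X) [LocallyPathConnectedSpace Y] (γ : Path a b) {u : I}
    (hu : γ u ∈ Y) :
    ∃ U ∈ 𝓝 u, ∀ s t, s ≤ t → Icc s t ⊆ U → γ s ∈ Y → γ t ∈ Y →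
      HomotopicInto (γ.subpath s t) Y := by
  obtain ⟨W, hW, hhom⟩ := hX (γ u)
  obtain ⟨N, ⟨hN, hNpc⟩, hNW⟩ := (path_connected_basis (⟨γ u, hu⟩ : Y)).mem_iff.1
    (continuous_subtype_val.continuousAt.preimage_mem_nhds hW)
  obtain ⟨M, hM, hMN⟩ := mem_nhds_subtype _ _ _ |>.1 hN
  refine ⟨γ ⁻¹' (M ∩ W), γ.continuous.continuousAt.preimage_mem_nhds (Filter.inter_mem hM hW),
    fun s t hst hU hs ht => ?_⟩
  obtain ⟨β, hβ⟩ := hNpc.joinedIn ⟨γ s, hs⟩ (hMN (hU (left_mem_Icc.2 hst)).1) ⟨γ t, ht⟩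
    (hMN (hU (right_mem_Icc.2 hst)).1)
  refine ⟨β.map continuous_subtype_val, ?_, hhom _ _ ?_ ?_⟩
  · rintro _ ⟨r, rfl⟩
    exact (β r).2
  · rw [Path.range_subpath_of_le _ _ _ hst]
    exact image_subset_iff.2 (hU.trans fun _ hr => hr.2)
  · rintro _ ⟨r, rfl⟩
    exact hNW (hβ r)

end HomotopicInto

section GraphCarrier

variable {X : Type*}

/-- A path-connected finite graph `Y'` that contains `Y` and into which the path `γ` can be
homotoped. -/
structure IsGraphCarrier [TopologicalSpace X] {a b : X} (Y : Set X) (γ : Path a b) (Y' : Set X) :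
    Prop where
  subset : Y ⊆ Y'
  isFiniteTopGraph : IsFiniteTopGraph Y'
  isPathConnected : IsPathConnected Y'
  homotopicInto : HomotopicInto γ Y'

namespace IsGraphCarrier

variable [TopologicalSpace X] {a b : X} {Y Y' Y'' : Set X} {γ γ' : Path a b}

theorem self (hY : IsFiniteTopGraph Y) (hYc : IsPathConnected Y) (hγ : HomotopicInto γ Y) :
    IsGraphCarrier Y γ Y :=
  ⟨Subset.rfl, hY, hYc, hγ⟩

theorem subpath_self (hY : IsFiniteTopGraph Y) (hYc : IsPathConnected Y) {t : I} (ht : γ t ∈ Y) :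
    IsGraphCarrier Y (γ.subpath t t) Y :=
  .self hY hYc (.of_range_subset (by simpa using ht))

theorem congr (h : IsGraphCarrier Y γ Y') (hγ : γ.Homotopic γ') : IsGraphCarrier Y γ' Y' :=
  { h with homotopicInto := h.homotopicInto.congr hγ }

theorem of_subpath_zero_one (h : IsGraphCarrier Y (γ.subpath 0 1) Y') : IsGraphCarrier Y γ Y' :=
  { h with homotopicInto := h.homotopicInto.of_subpath_zero_one }

theorem subpath_trans {r s t : I} (h : IsGraphCarrier Y (γ.subpath r s) Y')
    (h' : IsGraphCarrier Y' (γ.subpath s t) Y'') : IsGraphCarrier Y (γ.subpath r t) Y'' where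
  subset := h.subset.trans h'.subset
  isFiniteTopGraph := h'.isFiniteTopGraph
  isPathConnected := h'.isPathConnected
  homotopicInto := (h.homotopicInto.mono h'.subset).subpath_trans h'.homotopicInto

end IsGraphCarrier

/-- The initial segment `α|[0, t]` can be homotoped into a graph obtained from `Y` by adding only
points of that segment. -/
def IsCarriedUpTo [TopologicalSpace X] {a b : X} (Y : Set X) (α : Path a b) (t : I) : Prop :=
  ∃ Y', IsGraphCarrier Y (α.subpath 0 t) Y' ∧ Y' ⊆ Y ∪ α '' Iic t

namespace IsCarriedUpTo

variable [TopologicalSpace X] {a b : X} {Y : Set X} {α : Path a b} {s t : I}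

theorem of_homotopicInto (h : IsCarriedUpTo Y α s) (hst : s ≤ t)
    (hα : HomotopicInto (α.subpath s t) Y) : IsCarriedUpTo Y α t := by
  obtain ⟨Y', hY', hsub⟩ := h
  refine ⟨Y', hY'.subpath_trans (.self hY'.isFiniteTopGraph hY'.isPathConnected
    (hα.mono hY'.subset)), hsub.trans ?_⟩
  exact union_subset_union_right Y (image_mono (Iic_subset_Iic.2 hst))

theorem of_forall_notMem (h : IsCarriedUpTo Y α s) (hα : Function.Injective α) (hst : s ≤ t)
    (hY : ∀ u ∈ Ioo s t, α u ∉ Y) : IsCarriedUpTo Y α t := by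
  obtain rfl | hst' := hst.eq_or_lt
  · exact h
  obtain ⟨Y', hY', hsub⟩ := h
  set β : C(I, X) := subarc α.toContinuousMap s t
  have hβ : Function.Injective β := subarc_injective hα hst'.ne
  have hβrange : range β = α '' Icc s t := by rw [range_subarc, uIcc_of_le hst]; rfl
  have hs : α s ∈ Y' := hY'.homotopicInto.target_mem
  have hβY (u : I) (hu : u ∈ Icc s t) (huY : α u ∈ Y') : u = s ∨ u = t := by
    rcases hsub huY with huY | ⟨v, hv, hvu⟩
    · by_contra! hne
      exact hY u ⟨hu.1.lt_of_ne' hne.1, hu.2.lt_of_ne hne.2⟩ huY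
    · exact .inl (le_antisymm (hα hvu ▸ hv) hu.1)
  have hβY' (r : I) (hr : β r ∈ Y') : r = 0 ∨ r = 1 := by
    obtain ⟨u, hu, hur⟩ := hβrange.subset (mem_range_self r)
    rcases hβY u hu (hur ▸ hr) with rfl | rfl
    · exact .inl (hβ (hur.symm.trans (subarc_zero _ _ _).symm))
    · exact .inr (hβ (hur.symm.trans (subarc_one _ _ _).symm))
  refine ⟨Y' ∪ range β, hY'.subpath_trans ⟨subset_union_left,
    hY'.isFiniteTopGraph.union_range hβ hβY', ?_, .of_range_subset ?_⟩, ?_⟩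
  · have : PathConnectedSpace I := isPathConnected_iff_pathConnectedSpace.1
      ((convex_Icc (0 : ℝ) 1).isPathConnected (nonempty_Icc.2 zero_le_one))
    exact hY'.isPathConnected.union (isPathConnected_range β.continuous)
      ⟨α s, hs, 0, subarc_zero _ _ _⟩
  · rw [Path.range_subpath_of_le _ _ _ hst, hβrange]
    exact subset_union_right
  · rw [hβrange]
    exact union_subset (hsub.trans (union_subset_union_right Y (image_mono (Iic_subset_Iic.2 hst))))
      ((image_mono Icc_subset_Iic_self).trans subset_union_right)

theorem of_homotopicInto_of_mem (h : IsCarriedUpTo Y α s) (hα : Function.Injective α) (hst : s ≤ t)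
    (hclosed : IsClosed Y) (hY : ∀ p ∈ Icc s t, ∀ q ∈ Icc s t, p ≤ q → α p ∈ Y → α q ∈ Y →
      HomotopicInto (α.subpath p q) Y) : IsCarriedUpTo Y α t := by
  have hK : IsCompact (Icc s t ∩ α ⁻¹' Y) :=
    isCompact_Icc.inter_right (hclosed.preimage α.continuous)
  rcases (Icc s t ∩ α ⁻¹' Y).eq_empty_or_nonempty with hempty | hne
  · exact h.of_forall_notMem hα hst fun u hu huY =>
      hempty.subset ⟨Ioo_subset_Icc_self hu, huY⟩
  obtain ⟨p, hp, hpmin⟩ := hK.exists_isLeast hne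
  obtain ⟨q, hq, hqmax⟩ := hK.exists_isGreatest hne
  have hsp : IsCarriedUpTo Y α p := h.of_forall_notMem hα hp.1.1 fun u hu huY =>
    hu.2.not_ge (hpmin ⟨⟨hu.1.le, hu.2.le.trans hp.1.2⟩, huY⟩)
  have hpq : IsCarriedUpTo Y α q :=
    hsp.of_homotopicInto (hpmin hq) (hY p hp.1 q hq.1 (hpmin hq) hp.2 hq.2)
  exact hpq.of_forall_notMem hα hq.1.2 fun u hu huY =>
    hu.1.not_ge (hqmax ⟨⟨hq.1.1.trans hu.1.le, hu.2.le⟩, huY⟩)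

end IsCarriedUpTo

theorem SemilocallySimplyConnected.exists_isGraphCarrier_of_injective [TopologicalSpace X]
    [T2Space X] (hX : SemilocallySimplyConnected X) {Y : Set X} (hY : IsFiniteTopGraph Y)
    (hYc : IsPathConnected Y) {a b : X} (ha : a ∈ Y) {α : Path a b} (hα : Function.Injective α) :
    ∃ Y', IsGraphCarrier Y α Y' := by
  have := hY.locallyPathConnectedSpace
  suffices IsCarriedUpTo Y α 1 from
    let ⟨Y', hY', _⟩ := this
    ⟨Y', hY'.of_subpath_zero_one⟩
  refine forall_unitInterval_of_local
    ⟨Y, .subpath_self hY hYc (α.source.symm ▸ ha), subset_union_left⟩ fun u => ?_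
  by_cases hu : α u ∈ Y
  · obtain ⟨U, hU, hhom⟩ := hX.exists_forall_homotopicInto_subpath α hu
    refine ⟨U, hU, fun s t hst hst' h => h.of_homotopicInto_of_mem hα hst hY.isCompact.isClosed ?_⟩
    exact fun p hp q hq hpq => hhom p q hpq ((Icc_subset_Icc hp.1 hq.2).trans hst')
  · refine ⟨α ⁻¹' Yᶜ, (hY.isCompact.isClosed.isOpen_compl.preimage α.continuous).mem_nhds hu,
      fun s t hst hU h => h.of_forall_notMem hα hst fun v hv => hU (Ioo_subset_Icc_self hv)⟩

variable [MetricSpace X] {a b : X} {Y : Set X}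

theorem SemilocallySimplyConnected.exists_isGraphCarrier_of_forall_homotopic
    (hX : SemilocallySimplyConnected X) (hY : IsFiniteTopGraph Y) (hYc : IsPathConnected Y)
    (ha : a ∈ Y) {γ : Path a b} (hγ : ∀ α : Path a b, range α ⊆ range γ → α.Homotopic γ) :
    ∃ Y', IsGraphCarrier Y γ Y' := by
  obtain rfl | hab := eq_or_ne a b
  · refine ⟨Y, (IsGraphCarrier.self hY hYc (.of_range_subset ?_)).congr (hγ (.refl a) ?_)⟩
    · simpa using ha
    · simp
  · obtain ⟨α, hα, hαγ⟩ := exists_injective_path hab γ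
    obtain ⟨Y', hY'⟩ := hX.exists_isGraphCarrier_of_injective hY hYc ha hα
    exact ⟨Y', hY'.congr (hγ α hαγ)⟩

theorem SemilocallySimplyConnected.exists_isGraphCarrier (hX : SemilocallySimplyConnected X)
    (hY : IsFiniteTopGraph Y) (hYc : IsPathConnected Y) (ha : a ∈ Y) (γ : Path a b) :
    ∃ Y', IsGraphCarrier Y γ Y' := by
  suffices ∃ Y', IsGraphCarrier Y (γ.subpath 0 1) Y' from
    this.imp fun _ hY' => hY'.of_subpath_zero_one
  refine forall_unitInterval_of_local (P := fun t => ∃ Y', IsGraphCarrier Y (γ.subpath 0 t) Y')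
    ⟨Y, .subpath_self hY hYc (γ.source.symm ▸ ha)⟩ fun u => ?_
  obtain ⟨U, hU, hhom⟩ := hX (γ u)
  refine ⟨γ ⁻¹' U, γ.continuous.continuousAt.preimage_mem_nhds hU, fun s t hst hstU => ?_⟩
  rintro ⟨Y', hY'⟩
  have hγU : range (γ.subpath s t) ⊆ U := by
    rw [Path.range_subpath_of_le _ _ _ hst]
    exact image_subset_iff.2 hstU
  obtain ⟨Y'', hY''⟩ := hX.exists_isGraphCarrier_of_forall_homotopic hY'.isFiniteTopGraph
    hY'.isPathConnected hY'.homotopicInto.target_mem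
    fun α hα => hhom α (γ.subpath s t) (hα.trans hγU) hγU
  exact ⟨Y'', hY'.subpath_trans hY''⟩

theorem SemilocallySimplyConnected.exists_isFiniteTopGraph_forall_homotopicInto
    (hX : SemilocallySimplyConnected X) (x₀ : X) {S : Set (Path x₀ x₀)} (hS : S.Finite) :
    ∃ Y, IsFiniteTopGraph Y ∧ IsPathConnected Y ∧ x₀ ∈ Y ∧ ∀ γ ∈ S, HomotopicInto γ Y := by
  induction S, hS using Set.Finite.induction_on with
  | empty =>
    exact ⟨{x₀}, .singleton x₀, isPathConnected_singleton x₀, mem_singleton x₀, by simp⟩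
  | @insert γ₀ _ _ _ ih =>
    obtain ⟨Y, hY, hYc, hx₀, hS⟩ := ih
    obtain ⟨Y', hY'⟩ := hX.exists_isGraphCarrier hY hYc hx₀ γ₀
    refine ⟨Y', hY'.isFiniteTopGraph, hY'.isPathConnected, hY'.subset hx₀, ?_⟩
    exact forall_mem_insert.2 ⟨hY'.homotopicInto, fun γ hγ => (hS γ hγ).mono hY'.subset⟩

end GraphCarrier

section FundamentalGroup

variable {X : Type*} [TopologicalSpace X] {x₀ : X}

/-- The element of the fundamental group represented by a loop. -/
def loopElement (γ : Path x₀ x₀) : FundamentalGroup X x₀ :=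
  .fromPath (.mk γ)

theorem loopElement_surjective : Function.Surjective (loopElement : Path x₀ x₀ → _) :=
  Path.Homotopic.Quotient.mk_surjective

theorem loopElement_eq_iff {γ γ' : Path x₀ x₀} :
    loopElement γ = loopElement γ' ↔ γ.Homotopic γ' :=
  Path.Homotopic.Quotient.eq

theorem exists_finite_closure_image_loopElement_eq_top (hfg : Group.FG (FundamentalGroup X x₀)) :
    ∃ S : Set (Path x₀ x₀), S.Finite ∧ Subgroup.closure (loopElement '' S) = ⊤ := by
  obtain ⟨S, hS⟩ := hfg.out
  obtain ⟨T, -, hT, hTS⟩ := S.finite_toSet.exists_subset_finite_image_eq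
    (f := loopElement (x₀ := x₀)) (s := univ)
    (by simp only [image_univ, loopElement_surjective.range_eq, subset_univ])
  exact ⟨T, hT, hTS ▸ hS⟩

theorem exists_homotopic_map_val_of_closure_eq_top {S : Set (Path x₀ x₀)}
    (hS : Subgroup.closure (loopElement '' S) = ⊤) {Y : Set X} (hx₀ : x₀ ∈ Y)
    (hSY : ∀ γ ∈ S, HomotopicInto γ Y) (γ : Path x₀ x₀) :
    ∃ γ' : Path (⟨x₀, hx₀⟩ : Y) ⟨x₀, hx₀⟩, γ.Homotopic (γ'.map continuous_subtype_val) := by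
  set i : C(Y, X) := ⟨Subtype.val, continuous_subtype_val⟩
  have hrange : (FundamentalGroup.map i ⟨x₀, hx₀⟩).range = ⊤ := by
    refine top_unique (hS.symm.trans_le ((Subgroup.closure_le _).2 ?_))
    rintro _ ⟨γ, hγ, rfl⟩
    obtain ⟨γ', hγ'⟩ := (hSY γ hγ).exists_map_val_homotopic hx₀ hx₀
    exact ⟨loopElement γ', loopElement_eq_iff.2 hγ'⟩
  obtain ⟨g, hg⟩ := MonoidHom.range_eq_top.1 hrange (loopElement γ)
  obtain ⟨γ', rfl⟩ := loopElement_surjective g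
  exact ⟨γ', loopElement_eq_iff.1 hg.symm⟩

end FundamentalGroup

theorem stmt_11_general {X : Type*} [MetricSpace X] [CompactSpace X] (hdim : CovDimLE X 1)
    (hX : SemilocallySimplyConnected X) (x₀ : X) (hfg : Group.FG (FundamentalGroup X x₀)) :
    ∃ Y : Set X, IsFiniteTopGraph Y ∧ ∃ hx₀ : x₀ ∈ Y,
      (∀ γ : Path x₀ x₀, ∃ γ' : Path (⟨x₀, hx₀⟩ : Y) (⟨x₀, hx₀⟩ : Y),
        γ.Homotopic (γ'.map continuous_subtype_val)) ∧
      (∀ γ γ' : Path (⟨x₀, hx₀⟩ : Y) (⟨x₀, hx₀⟩ : Y),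
        (γ.map continuous_subtype_val).Homotopic (γ'.map continuous_subtype_val) →
          γ.Homotopic γ') := by
  obtain ⟨S, hS, hclosure⟩ := exists_finite_closure_image_loopElement_eq_top hfg
  obtain ⟨Y, hY, hYc, hx₀, hSY⟩ := hX.exists_isFiniteTopGraph_forall_homotopicInto x₀ hS
  have : CompactSpace Y := isCompact_iff_compactSpace.1 hY.isCompact
  have : LocallyPathConnectedSpace Y := hY.locallyPathConnectedSpace
  have : PathConnectedSpace Y := isPathConnected_iff_pathConnectedSpace.1 hYc
  exact ⟨Y, hY, hx₀, exists_homotopic_map_val_of_closure_eq_top hclosure hx₀ hSY,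
    fun _ _ => hdim.homotopic_of_homotopic_map_val hY.semilocallySimplyConnected⟩

/-- A one-dimensional Peano continuum with finitely generated fundamental group and a
simply connected covering space contains a finite subgraph whose inclusion induces an
isomorphism on fundamental groups. -/
theorem stmt_11 {X : Type} [MetricSpace X] [CompactSpace X] [ConnectedSpace X]
    [LocallyConnectedSpace X] (hdim : CovDimLE X 1)
    (hcov : ∃ (E : Type) (tE : TopologicalSpace E) (p : E → X),
      @IsCoveringMap E X tE _ p ∧ @SimplyConnectedSpace E tE)
    (x₀ : X) (hfg : Group.FG (FundamentalGroup X x₀)) :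
    ∃ Y : Set X, IsFiniteTopGraph Y ∧ ∃ hx₀ : x₀ ∈ Y,
      (∀ γ : Path x₀ x₀, ∃ γ' : Path (⟨x₀, hx₀⟩ : Y) (⟨x₀, hx₀⟩ : Y),
        γ.Homotopic (γ'.map continuous_subtype_val)) ∧
      (∀ γ γ' : Path (⟨x₀, hx₀⟩ : Y) (⟨x₀, hx₀⟩ : Y),
        (γ.map continuous_subtype_val).Homotopic (γ'.map continuous_subtype_val) →
          γ.Homotopic γ') := by
  obtain ⟨_, _, _, hp, _⟩ := hcov
  exact stmt_11_general hdim (.of_isCoveringMap hp) x₀ hfg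
end

section
/- Let X be a one-dimensional Peano continuum. Then X is an absolute neighborhood retract if and only if π₁(X) is finitely generated. -/
open Set

/-- Absolute neighborhood retract. -/
def IsANR (X : Type*) [MetricSpace X] : Prop :=
  ∀ (Y : Type) [MetricSpace Y] (Z : Set Y), IsClosed Z →
    ∀ f : C(Z, X), ∃ (V : Set Y) (_ : IsOpen V) (hZV : Z ⊆ V) (g : C(V, X)),
      ∀ (z : Y) (hz : z ∈ Z), g ⟨z, hZV hz⟩ = f ⟨z, hz⟩

/-!
A compact ANR is a neighborhood retract of a normed space, where nearby paths are joined by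
straight-line homotopies; it is therefore semilocally simply connected, and following paths through
a finite cover by small path connected sets shows that its fundamental group is finitely generated.

Conversely, let `π₁(X)` be finitely generated. Every map from `X` to the circle induces a
homomorphism `π₁(X) → ℤ`, and as these form a finitely generated group, finitely many of the maps
control all of them: every point has a neighborhood on whose loops no circle-valued map on `X`
winds. Since `dim X ≤ 1`, circle-valued maps extend from closed subsets to `X`, so that small open
sets are hereditarily unicoherent: two continua with a disconnected intersection would carry a map
winding around their union. The arcs of a locally connected hereditarily unicoherent space are the
intervals of a median, and a metric in which they are geodesic makes its subcontinua hyperconvex,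
hence absolute extensors. So `X` is locally an absolute neighborhood extensor, and by Hanner's
gluing it is an ANR.
-/

open Filter Topology

/-! ### Absolute neighborhood extensors -/

section NeighborhoodExtensors

variable {X Y : Type*} [TopologicalSpace X] [TopologicalSpace Y]

/-- `S` is an absolute neighborhood extensor: a continuous map into `S` from a closed subset of a
metric space extends to a neighborhood. Maps are total functions of which only the behavior near
`Z` matters, so that no subtypes are needed. -/
def IsANE (S : Set X) : Prop :=
  ∀ (Y : Type) [MetricSpace Y] (Z : Set Y) (f : Y → X), IsClosed Z → ContinuousOn f Z →
    MapsTo f Z S → ∃ g : Y → X, (∀ᶠ y in 𝓝ˢ Z, ContinuousAt g y ∧ g y ∈ S) ∧ EqOn g f Z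

theorem IsANE.empty : IsANE (∅ : Set X) := by
  intro Y _ Z f _ _ hfZ
  obtain rfl : Z = ∅ := eq_empty_of_forall_notMem fun z hz => hfZ hz
  exact ⟨f, by simp, eqOn_refl f ∅⟩

theorem IsANE.mono_of_isOpen {S T : Set X} (hS : IsANE S) (hT : IsOpen T) (hTS : T ⊆ S) :
    IsANE T := by
  intro Y _ Z f hZ hf hfT
  obtain ⟨g, hg, hgf⟩ := hS Y Z f hZ hf (hfT.mono_right hTS)
  refine ⟨g, ?_, hgf⟩
  have hgT : ∀ᶠ y in 𝓝ˢ Z, g y ∈ T := eventually_nhdsSet_iff_forall.2 fun z hz =>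
    (hg.self_of_nhdsSet z hz).1.eventually_mem (hT.mem_nhds (hgf hz ▸ hfT hz))
  filter_upwards [hg, hgT] with y hy hyT using ⟨hy.1, hyT⟩

theorem eventually_nhdsSet_imp_of_inter {Z C : Set Y} {p : Y → Prop} (hC : IsClosed C)
    (hp : ∀ᶠ y in 𝓝ˢ (Z ∩ C), p y) : ∀ᶠ y in 𝓝ˢ Z, y ∈ C → p y := by
  refine eventually_nhdsSet_iff_forall.2 fun z hz => ?_
  by_cases hzC : z ∈ C
  · filter_upwards [eventually_nhdsSet_iff_forall.1 hp z ⟨hz, hzC⟩] with y hy _ using hy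
  · filter_upwards [hC.isOpen_compl.mem_nhds hzC] with y hy hyC using absurd hyC hy

theorem continuousAt_ite_nonpos {h : Y → ℝ} {g₁ g₂ : Y → X} {y : Y} (hh : ContinuousAt h y)
    (h₁ : h y ≤ 0 → ContinuousAt g₁ y) (h₂ : 0 ≤ h y → ContinuousAt g₂ y)
    (h₁₂ : h y = 0 → g₁ y = g₂ y) :
    ContinuousAt (fun y => if h y ≤ 0 then g₁ y else g₂ y) y := by
  rcases lt_trichotomy (h y) 0 with hy | hy | hy
  · refine (h₁ hy.le).congr ?_
    filter_upwards [hh.eventually_lt_const hy] with t ht using (if_pos ht.le).symm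
  · have hval : (if h y ≤ 0 then g₁ y else g₂ y) = g₁ y := if_pos hy.le
    rw [ContinuousAt, hval]
    exact (tendsto_inf_left (h₁ hy.le)).if (tendsto_inf_left (h₁₂ hy ▸ h₂ hy.ge))
  · refine (h₂ hy.le).congr ?_
    filter_upwards [hh.eventually_const_lt hy] with t ht using (if_neg ht.not_ge).symm

theorem exists_continuous_sign_of_mapsTo_union [NormalSpace Y] {Z : Set Y} {f : Y → X}
    {U₁ U₂ : Set X} (hZ : IsClosed Z) (hf : ContinuousOn f Z) (hfZ : MapsTo f Z (U₁ ∪ U₂))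
    (o₁ : IsOpen U₁) (o₂ : IsOpen U₂) :
    ∃ h : C(Y, ℝ), ∀ z ∈ Z, (h z ≤ 0 → f z ∈ U₁) ∧ (0 ≤ h z → f z ∈ U₂) := by
  have hdisj : Disjoint (Z ∩ f ⁻¹' U₂ᶜ) (Z ∩ f ⁻¹' U₁ᶜ) :=
    Set.disjoint_left.2 fun z hz hz' => (hfZ hz.1).elim hz'.2 hz.2
  obtain ⟨h, h0, h1, -⟩ := exists_continuous_zero_one_of_isClosed
    (hf.preimage_isClosed_of_isClosed hZ o₂.isClosed_compl)
    (hf.preimage_isClosed_of_isClosed hZ o₁.isClosed_compl) hdisj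
  refine ⟨h - .const Y (1 / 2), fun z hz => ⟨fun hle => ?_, fun hle => ?_⟩⟩ <;>
    by_contra hzU <;> simp only [ContinuousMap.sub_apply, ContinuousMap.const_apply] at hle
  · have : h z = 1 := h1 ⟨hz, hzU⟩
    linarith
  · have : h z = 0 := h0 ⟨hz, hzU⟩
    linarith

theorem IsANE.exists_extension_inter {S : Set X} (hS : IsANE S) {Y : Type} [MetricSpace Y]
    {Z C : Set Y} {f : Y → X} (hZ : IsClosed Z) (hC : IsClosed C) (hf : ContinuousOn f Z)
    (hfS : MapsTo f (Z ∩ C) S) :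
    ∃ (E : Set Y) (g : Y → X), IsClosed E ∧ (∀ᶠ y in 𝓝ˢ Z, y ∈ C → y ∈ E) ∧
      ContinuousOn g (Z ∪ E) ∧ MapsTo g E S ∧ EqOn g f Z := by
  classical
  obtain ⟨f₀, hf₀, hf₀f⟩ := hS Y (Z ∩ C) f (hZ.inter hC) (hf.mono inter_subset_left) hfS
  obtain ⟨W, hW, hZW, hWp⟩ := mem_nhdsSet_iff_exists.1 hf₀
  obtain ⟨N, hN, hZN, hNW⟩ := normal_exists_closure_subset (hZ.inter hC) hW hZW
  have hgE : EqOn (Z.piecewise f f₀) f₀ (closure N ∩ C) := by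
    intro y hy
    by_cases hyZ : y ∈ Z
    · rw [piecewise_eq_of_mem _ _ _ hyZ, hf₀f ⟨hyZ, hy.2⟩]
    · exact piecewise_eq_of_notMem _ _ _ hyZ
  have hE : IsClosed (closure N ∩ C) := isClosed_closure.inter hC
  refine ⟨closure N ∩ C, Z.piecewise f f₀, hE, ?_, ?_, fun y hy => ?_, piecewise_eqOn Z f f₀⟩
  · filter_upwards [eventually_nhdsSet_imp_of_inter hC (hN.mem_nhdsSet.2 hZN)] with y hy hyC
      using ⟨subset_closure (hy hyC), hyC⟩
  · refine (hf.congr (piecewise_eqOn Z f f₀)).union_of_isClosed (ContinuousOn.congr ?_ hgE) hZ hE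
    exact fun y hy => (hWp (hNW hy.1)).1.continuousWithinAt
  · exact hgE hy ▸ (hWp (hNW hy.1)).2

/- Hanner's gluing: a function `h` splits `Z` into a part mapped to `U₁` and a part mapped to `U₂`;
extend first near the common boundary `h = 0`, with values in `U₁ ∩ U₂`, then to both sides. -/
theorem IsANE.union {U₁ U₂ : Set X} (h₁ : IsANE U₁) (h₂ : IsANE U₂) (o₁ : IsOpen U₁)
    (o₂ : IsOpen U₂) : IsANE (U₁ ∪ U₂) := by
  intro Y _ Z f hZ hf hfU
  obtain ⟨h, hsign⟩ := exists_continuous_sign_of_mapsTo_union hZ hf hfU o₁ o₂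
  have hA : IsClosed {y | h y ≤ 0} := isClosed_le h.continuous continuous_const
  have hB : IsClosed {y | 0 ≤ h y} := isClosed_le continuous_const h.continuous
  have hC : IsClosed {y | h y = 0} := isClosed_eq h.continuous continuous_const
  obtain ⟨E, f', hE, hCE, hf', hf'E, hf'f⟩ :=
    (h₁.mono_of_isOpen (o₁.inter o₂) inter_subset_left).exists_extension_inter hZ hC hf
      fun z hz => ⟨(hsign z hz.1).1 hz.2.le, (hsign z hz.1).2 hz.2.ge⟩
  obtain ⟨g₁, hg₁, hg₁f⟩ := h₁ Y (Z ∩ {y | h y ≤ 0} ∪ E) f' ((hZ.inter hA).union hE)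
    (hf'.mono (union_subset_union_left E inter_subset_left))
    (MapsTo.union (fun z hz => hf'f hz.1 ▸ (hsign z hz.1).1 hz.2) fun z hz => (hf'E hz).1)
  obtain ⟨g₂, hg₂, hg₂f⟩ := h₂ Y (Z ∩ {y | 0 ≤ h y} ∪ E) f' ((hZ.inter hB).union hE)
    (hf'.mono (union_subset_union_left E inter_subset_left))
    (MapsTo.union (fun z hz => hf'f hz.1 ▸ (hsign z hz.1).2 hz.2) fun z hz => (hf'E hz).2)
  refine ⟨fun y => if h y ≤ 0 then g₁ y else g₂ y, ?_, fun z hz => ?_⟩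
  · filter_upwards [hCE,
      eventually_nhdsSet_imp_of_inter hA (hg₁.filter_mono (nhdsSet_mono subset_union_left)),
      eventually_nhdsSet_imp_of_inter hB (hg₂.filter_mono (nhdsSet_mono subset_union_left))]
      with y hyE hy₁ hy₂
    refine ⟨continuousAt_ite_nonpos h.continuous.continuousAt (fun hy => (hy₁ hy).1)
      (fun hy => (hy₂ hy).1) fun hy => (hg₁f (.inr (hyE hy))).trans (hg₂f (.inr (hyE hy))).symm, ?_⟩
    split_ifs with hy
    exacts [.inl (hy₁ hy).2, .inr (hy₂ (not_le.1 hy).le).2]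
  · dsimp only
    split_ifs with hy
    exacts [(hg₁f (.inl ⟨hz, hy⟩)).trans (hf'f hz),
      (hg₂f (.inl ⟨hz, (not_le.1 hy).le⟩)).trans (hf'f hz)]

theorem IsANE.univ_of_forall_exists_isOpen [CompactSpace X]
    (h : ∀ x : X, ∃ U : Set X, IsOpen U ∧ x ∈ U ∧ IsANE U) : IsANE (univ : Set X) := by
  suffices H : ∃ U : Set X, IsOpen U ∧ univ ⊆ U ∧ IsANE U by
    obtain ⟨U, -, hU, hANE⟩ := H
    rwa [univ_subset_iff.1 hU] at hANE
  refine isCompact_univ.induction_on (p := fun K => ∃ U, IsOpen U ∧ K ⊆ U ∧ IsANE U)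
    ⟨∅, isOpen_empty, Subset.rfl, .empty⟩ ?_ ?_ ?_
  · exact fun s t hst ⟨U, oU, hU, hANE⟩ => ⟨U, oU, hst.trans hU, hANE⟩
  · exact fun s t ⟨U, oU, hU, aU⟩ ⟨V, oV, hV, aV⟩ =>
      ⟨U ∪ V, oU.union oV, union_subset_union hU hV, aU.union aV oU oV⟩
  · intro x _
    obtain ⟨U, oU, hxU, aU⟩ := h x
    exact ⟨U, mem_nhdsWithin_of_mem_nhds (oU.mem_nhds hxU), U, oU, Subset.rfl, aU⟩

theorem IsANE.univ_of_tietzeExtension [TietzeExtension.{0} X] : IsANE (univ : Set X) := by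
  intro Y _ Z f hZ hf _
  obtain ⟨F, hF⟩ := ContinuousMap.exists_restrict_eq hZ ⟨Z.domRestrict f, hf.domRestrict⟩
  exact ⟨F, .of_forall fun y => ⟨F.continuous.continuousAt, mem_univ _⟩,
    fun z hz => DFunLike.congr_fun hF (⟨z, hz⟩ : Z)⟩

theorem IsANE.image {K : Type*} [TopologicalSpace K] {S : Set K} (hS : IsANE S) {e : K → X}
    (he : IsInducing e) : IsANE (e '' S) := by
  intro Y _ Z f hZ hf hfS
  rcases Z.eq_empty_or_nonempty with rfl | ⟨z₀, hz₀⟩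
  · exact ⟨f, by simp, eqOn_refl f ∅⟩
  obtain ⟨k₀, -, -⟩ := hfS hz₀
  have : Nonempty K := ⟨k₀⟩
  choose! k hkS hk using hfS
  obtain ⟨g, hg, hgk⟩ := hS Y Z k hZ (he.continuousOn_iff.2 (hf.congr hk)) hkS
  refine ⟨e ∘ g, hg.mono fun y hy =>
    ⟨he.continuous.continuousAt.comp hy.1, mem_image_of_mem e hy.2⟩, fun z hz => ?_⟩
  rw [Function.comp_apply, hgk hz, hk hz]

end NeighborhoodExtensors

theorem IsANE.isANR {X : Type*} [MetricSpace X] (h : IsANE (univ : Set X)) : IsANR X := by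
  intro Y _ Z hZ f
  cases isEmpty_or_nonempty X with
  | inl hX =>
    have : IsEmpty Z := Function.isEmpty f
    exact ⟨Z, by simp [isEmpty_coe_sort.1 this], Subset.rfl, f, fun z hz => rfl⟩
  | inr hX =>
    let F : Y → X := Function.extend ((↑) : Z → Y) f fun _ => Classical.arbitrary X
    have hF (z : Z) : F z = f z := Subtype.val_injective.extend_apply f _ z
    have hFc : ContinuousOn F Z :=
      continuousOn_iff_continuous_domRestrict.2 (f.continuous.congr fun z => (hF z).symm)
    obtain ⟨g, hg, hgF⟩ := h Y Z F hZ hFc (mapsTo_univ F Z)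
    obtain ⟨V, hV, hZV, hVg⟩ := mem_nhdsSet_iff_exists.1 hg
    have hgV : ContinuousOn g V := fun y hy => (hVg hy).1.continuousWithinAt
    exact ⟨V, hV, hZV, ⟨V.domRestrict g, hgV.domRestrict⟩, fun z hz =>
      (hgF hz).trans (hF ⟨z, hz⟩)⟩

/-! ### Median intervals and hyperconvexity -/

section MedianIntervals

variable {K : Type*}

/-- An abstract betweenness relation behaving like the arcs `I x y` of a (generalized) tree: any
three points have a median, and the sides of a triangle cover each other. -/
structure IsMedianInterval [TopologicalSpace K] (I : K → K → Set K) : Prop where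
  isPreconnected : ∀ x y, IsPreconnected (I x y)
  left_mem : ∀ x y, x ∈ I x y
  right_mem : ∀ x y, y ∈ I x y
  subset_union : ∀ x y z, I x z ⊆ I x y ∪ I y z
  inter_nonempty : ∀ x y z, (I x y ∩ I y z ∩ I x z).Nonempty

theorem IsMedianInterval.biInter_nonempty [TopologicalSpace K] {I : K → K → Set K}
    (hI : IsMedianInterval I) {ι : Type*} {s : Finset ι} (hs : s.Nonempty) {C : ι → Set K}
    (hC : ∀ i ∈ s, ∀ x ∈ C i, ∀ y ∈ C i, I x y ⊆ C i)
    (hpair : ∀ i ∈ s, ∀ j ∈ s, (C i ∩ C j).Nonempty) : (⋂ i ∈ s, C i).Nonempty := by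
  induction hs using Finset.Nonempty.cons_induction generalizing C with
  | singleton a => simpa using hpair a (by simp) a (by simp)
  | cons a s ha hs ih =>
    simp only [Finset.mem_cons, forall_eq_or_imp] at hC hpair
    obtain ⟨x, hx⟩ := ih (C := fun i => C i ∩ C a)
      (fun i hi x hx y hy => subset_inter (hC.2 i hi x hx.1 y hy.1) (hC.1 x hx.2 y hy.2))
      fun i hi j hj => by
        obtain ⟨p, hpi, hpj⟩ := (hpair.2 i hi).2 j hj
        obtain ⟨q, hqj, hqa⟩ := (hpair.2 j hj).1
        obtain ⟨r, hri, hra⟩ := (hpair.2 i hi).1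
        obtain ⟨m, ⟨hpq, hqr⟩, hpr⟩ := hI.inter_nonempty p q r
        exact ⟨m, ⟨hC.2 i hi p hpi r hri hpr, hC.1 q hqa r hra hqr⟩,
          hC.2 j hj p hpj q hqj hpq, hC.1 q hqa r hra hqr⟩
    rw [mem_iInter₂] at hx
    obtain ⟨j, hj⟩ := hs
    refine ⟨x, mem_iInter₂.2 fun i hi => ?_⟩
    rcases Finset.mem_cons.1 hi with rfl | hi
    exacts [(hx j hj).2, (hx i hi).1]

theorem IsMedianInterval.preimage_val [TopologicalSpace K] {I : K → K → Set K}
    (hI : IsMedianInterval I) {S : Set K} (hS : ∀ x ∈ S, ∀ y ∈ S, I x y ⊆ S) :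
    IsMedianInterval fun x y : S => ((↑) : S → K) ⁻¹' I x y where
  isPreconnected x y := by
    rw [← IsInducing.subtypeVal.isPreconnected_image, Subtype.image_preimage_coe,
      inter_eq_right.2 (hS x x.2 y y.2)]
    exact hI.isPreconnected x y
  left_mem x y := hI.left_mem x y
  right_mem x y := hI.right_mem x y
  subset_union x y z := preimage_mono (hI.subset_union x y z)
  inter_nonempty x y z := by
    obtain ⟨m, hm, hxz⟩ := hI.inter_nonempty x y z
    exact ⟨⟨m, hS x x.2 z z.2 hxz⟩, hm, hxz⟩

/-- A metric space is hyperconvex if every family of closed balls, given by centers and radii,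
which could pairwise intersect for metric reasons has a common point. -/
def Hyperconvex (K : Type*) [PseudoMetricSpace K] : Prop :=
  ∀ B : Set (K × ℝ), (∀ p ∈ B, ∀ q ∈ B, dist p.1 q.1 ≤ p.2 + q.2) → ∃ x, ∀ p ∈ B, dist x p.1 ≤ p.2

theorem IsMedianInterval.inter_closedBall_nonempty [PseudoMetricSpace K] {I : K → K → Set K}
    (hI : IsMedianInterval I) (hdist : ∀ x y, ∀ z ∈ I x y, dist x y = dist x z + dist z y)
    {x y : K} {r s : ℝ} (hr : 0 ≤ r) (hs : 0 ≤ s) (hxy : dist x y ≤ r + s) :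
    (Metric.closedBall x r ∩ Metric.closedBall y s).Nonempty := by
  by_cases hle : dist x y ≤ r
  · exact ⟨y, by rwa [Metric.mem_closedBall, dist_comm], by simpa using hs⟩
  obtain ⟨z, hz, hxz⟩ := (hI.isPreconnected x y).intermediate_value (hI.left_mem x y)
    (hI.right_mem x y) (f := dist x) (by fun_prop) ⟨by simpa using hr, (not_le.1 hle).le⟩
  refine ⟨z, by rw [Metric.mem_closedBall, dist_comm, hxz], ?_⟩
  rw [Metric.mem_closedBall]
  linarith [hdist x y z hz]

theorem IsMedianInterval.hyperconvex [PseudoMetricSpace K] [CompactSpace K] [Nonempty K]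
    {I : K → K → Set K} (hI : IsMedianInterval I)
    (hdist : ∀ x y, ∀ z ∈ I x y, dist x y = dist x z + dist z y) : Hyperconvex K := by
  intro B hB
  have hrad (p : B) : 0 ≤ p.1.2 := by
    have := hB p p.2 p p.2
    rw [dist_self] at this
    linarith
  have hconv (p : B) (x) (hx : x ∈ Metric.closedBall p.1.1 p.1.2) (y)
      (hy : y ∈ Metric.closedBall p.1.1 p.1.2) : I x y ⊆ Metric.closedBall p.1.1 p.1.2 := by
    intro z hz
    rw [Metric.mem_closedBall] at *
    rcases hI.subset_union x p.1.1 y hz with h | h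
    · linarith [hdist _ _ _ h, dist_nonneg (x := x) (y := z)]
    · rw [dist_comm] at hy ⊢
      linarith [hdist _ _ _ h, dist_nonneg (x := z) (y := y)]
  obtain ⟨x, -, hx⟩ := isCompact_univ.inter_iInter_nonempty
    (fun p : B => Metric.closedBall p.1.1 p.1.2) (fun p => Metric.isClosed_closedBall) fun s => by
      rw [univ_inter]
      rcases s.eq_empty_or_nonempty with rfl | hs
      · simp
      · exact hI.biInter_nonempty hs (fun p _ => hconv p) fun p _ q _ =>
          hI.inter_closedBall_nonempty hdist (hrad p) (hrad q) (hB p p.2 q q.2)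
  exact ⟨x, fun p hp => mem_iInter.1 hx ⟨p, hp⟩⟩

theorem Hyperconvex.exists_lipschitzWith_leftInverse [MetricSpace K] (hK : Hyperconvex K)
    {Q : Type*} [PseudoMetricSpace Q] {e : K → Q} (he : Isometry e) :
    ∃ r : Q → K, LipschitzWith 1 r ∧ Function.LeftInverse r e := by
  -- A maximal graph of a short partial map extending the inverse of `e` is total.
  let S : Set (Set (Q × K)) := {G | ∀ p ∈ G, ∀ q ∈ G, dist p.2 q.2 ≤ dist p.1 q.1}
  obtain ⟨M, heM, hM⟩ := zorn_subset_nonempty S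
    (fun c hc hchain _ => ⟨⋃₀ c, by
      rintro p ⟨s, hs, hp⟩ q ⟨t, ht, hq⟩
      rcases hchain.total hs ht with h | h
      exacts [hc ht p (h hp) q hq, hc hs p hp q (h hq)], fun s => subset_sUnion_of_mem⟩)
    (range fun x => (e x, x)) (by
      rintro _ ⟨x, rfl⟩ _ ⟨y, rfl⟩
      exact (he.dist_eq x y).ge)
  have htotal (a : Q) : ∃ x, (a, x) ∈ M := by
    obtain ⟨x, hx⟩ := hK ((fun p : Q × K => (p.2, dist a p.1)) '' M) (by
      rintro _ ⟨p, hp, rfl⟩ _ ⟨q, hq, rfl⟩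
      exact (hM.prop p hp q hq).trans (dist_triangle_left _ _ _))
    rw [forall_mem_image] at hx
    refine ⟨x, hM.le_of_ge ?_ (subset_insert _ _) (mem_insert _ _)⟩
    rintro p (rfl | hp) q (rfl | hq)
    · simp
    · exact hx hq
    · simpa only [dist_comm] using hx hp
    · exact hM.prop p hp q hq
  choose r hr using htotal
  refine ⟨r, .of_dist_le_mul fun a b => by simpa using hM.prop _ (hr a) _ (hr b), fun x => ?_⟩
  exact dist_le_zero.1 ((hM.prop _ (hr (e x)) _ (heM ⟨x, rfl⟩)).trans (dist_self (e x)).le)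

theorem abs_sub_eq_add_of_mem_uIcc {a b c : ℝ} (hc : c ∈ uIcc a b) :
    |a - b| = |a - c| + |c - b| := by
  rcases mem_uIcc.1 hc with ⟨h₁, h₂⟩ | ⟨h₁, h₂⟩
  · rw [abs_of_nonpos (by linarith), abs_of_nonpos (by linarith), abs_of_nonpos (by linarith)]
    ring
  · rw [abs_of_nonneg (by linarith), abs_of_nonneg (by linarith), abs_of_nonneg (by linarith)]
    ring

open scoped PiCountable in
theorem piCountable_dist_eq_add {a b c : ℕ → ℝ} (h : ∀ k, |a k - b k| ≤ 2⁻¹ ^ k)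
    (hc : ∀ k, c k ∈ uIcc (a k) (b k)) : dist a b = dist a c + dist c b := by
  rw [PiCountable.dist_eq_tsum, PiCountable.dist_eq_tsum a, PiCountable.dist_eq_tsum c,
    ← (PiCountable.dist_summable a c).tsum_add (PiCountable.dist_summable c b)]
  congr 1 with k
  have hadd := abs_sub_eq_add_of_mem_uIcc (hc k)
  simp only [Encodable.encode_nat, Real.dist_eq]
  rw [min_eq_right (h k), min_eq_right (by linarith [h k, abs_nonneg (c k - b k)]),
    min_eq_right (by linarith [h k, abs_nonneg (a k - c k)]), hadd]

/- The functions `u k`, scaled by `2⁻ᵏ`, embed `K` into `ℝ^ℕ` so that its intervals become geodesic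
for the metric `∑ min (2⁻ᵏ, |aₖ - bₖ|)`. Hence `K` is hyperconvex and a retract of `ℝ^ℕ`. -/
open scoped PiCountable in
theorem IsMedianInterval.tietzeExtension [TopologicalSpace K] [CompactSpace K] [Nonempty K]
    {I : K → K → Set K} (hI : IsMedianInterval I) {u : ℕ → K → ℝ} (hu : ∀ k, Continuous (u k))
    (hu01 : ∀ k x, u k x ∈ Icc 0 1) (hsep : ∀ x y, (∀ k, u k x = u k y) → x = y)
    (hmono : ∀ k x y, ∀ z ∈ I x y, u k z ∈ uIcc (u k x) (u k y)) : TietzeExtension K := by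
  let e : K → ℕ → ℝ := fun x k => 2⁻¹ ^ k * u k x
  have he : Continuous e := continuous_pi fun k => (hu k).const_mul _
  have hinj : Function.Injective e := fun x y hxy =>
    hsep x y fun k => mul_left_cancel₀ (by positivity) (congrFun hxy k)
  have hemb : IsEmbedding e := (he.isClosedEmbedding hinj).isEmbedding
  let : MetricSpace (ℕ → ℝ) := PiCountable.metricSpace
  let : MetricSpace K := hemb.comapMetricSpace e
  have hiso : Isometry e := hemb.to_isometry
  have hK : Hyperconvex K := hI.hyperconvex fun x y z hz => by
    rw [← hiso.dist_eq x y, ← hiso.dist_eq x z, ← hiso.dist_eq z y]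
    refine piCountable_dist_eq_add (fun k => ?_) fun k => ?_
    · rw [← mul_sub, abs_mul, abs_of_pos (by positivity)]
      refine mul_le_of_le_one_right (by positivity) (abs_le.2 ⟨?_, ?_⟩) <;>
        linarith [(hu01 k x).1, (hu01 k x).2, (hu01 k y).1, (hu01 k y).2]
    · have := mem_image_of_mem (2⁻¹ ^ k * ·) (hmono k x y z hz)
      rwa [image_const_mul_uIcc] at this
  obtain ⟨r, hr, hre⟩ := hK.exists_lipschitzWith_leftInverse hiso
  exact .of_retract ⟨e, he⟩ ⟨r, hr.continuous⟩ (ContinuousMap.ext hre)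

end MedianIntervals

/-! ### Hereditarily unicoherent spaces -/

section HereditaryUnicoherence

variable {T : Type*} [TopologicalSpace T]

theorem isPreconnected_sInter_of_isCompact [T2Space T] {F : Set (Set T)} (hne : F.Nonempty)
    (hdir : DirectedOn (· ⊇ ·) F) (hcpt : ∀ A ∈ F, IsCompact A)
    (hconn : ∀ A ∈ F, IsPreconnected A) : IsPreconnected (⋂₀ F) := by
  have hclosed : IsClosed (⋂₀ F) := isClosed_sInter fun A hA => (hcpt A hA).isClosed
  have hcompact : IsCompact (⋂₀ F) :=
    hne.elim fun A hA => (hcpt A hA).of_isClosed_subset hclosed (sInter_subset_of_mem hA)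
  refine (isPreconnected_iff_subset_of_fully_disjoint_closed hclosed).2
    fun u v hu hv hFuv huv => ?_
  obtain ⟨U, V, hU, hV, hFU, hFV, hUV⟩ := SeparatedNhds.of_isCompact_isCompact
    (hcompact.inter_right hu) (hcompact.inter_right hv)
    (huv.mono inter_subset_right inter_subset_right)
  have : Nonempty F := hne.to_subtype
  obtain ⟨⟨A, hA⟩, hAUV⟩ := exists_subset_nhds_of_isCompact (U := U ∪ V)
    hdir.directed_val (fun A => hcpt A A.2) fun x hx => by
      rw [← sInter_eq_iInter] at hx
      exact (hU.union hV).mem_nhds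
        ((hFuv hx).imp (fun h => hFU ⟨hx, h⟩) fun h => hFV ⟨hx, h⟩)
  have hFA : ⋂₀ F ⊆ A := sInter_subset_of_mem hA
  refine ((hconn A hA).subset_or_subset hU hV hUV hAUV).imp (fun hAU x hx => ?_) fun hAV x hx => ?_
  · exact (hFuv hx).resolve_right fun hxv => hUV.notMem_of_mem_left (hAU (hFA hx)) (hFV ⟨hx, hxv⟩)
  · exact (hFuv hx).resolve_left fun hxu => hUV.notMem_of_mem_left (hFU ⟨hx, hxu⟩) (hAV (hFA hx))

/-- A space is hereditarily unicoherent if any two of its subcontinua have a connected (possibly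
empty) intersection. -/
def HereditarilyUnicoherent (T : Type*) [TopologicalSpace T] : Prop :=
  ∀ A B : Set T, IsCompact A → IsConnected A → IsCompact B → IsConnected B → IsPreconnected (A ∩ B)

/-- The intersection of all continua containing `x` and `y`: the arc between them in a tree-like
space. -/
def continuumHull (x y : T) : Set T :=
  ⋂₀ {A | IsCompact A ∧ IsConnected A ∧ x ∈ A ∧ y ∈ A}

/-- A set is continuum-convex if it contains the continuum hull of any two of its points. -/
def ContinuumConvex (S : Set T) : Prop := ∀ x ∈ S, ∀ y ∈ S, continuumHull x y ⊆ S

theorem left_mem_continuumHull (x y : T) : x ∈ continuumHull x y := fun _ hA => hA.2.2.1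

theorem right_mem_continuumHull (x y : T) : y ∈ continuumHull x y := fun _ hA => hA.2.2.2

theorem continuumHull_comm (x y : T) : continuumHull x y = continuumHull y x := by
  unfold continuumHull
  simp only [and_comm]

theorem ContinuumConvex.of_isCompact {A : Set T} (hA : IsCompact A) (hA' : IsPreconnected A) :
    ContinuumConvex A :=
  fun x hx _ hy => sInter_subset_of_mem ⟨hA, ⟨⟨x, hx⟩, hA'⟩, hx, hy⟩

section LocallyPathConnected

variable [LocallyPathConnectedSpace T]

theorem exists_continuum_subset {V : Set T} (hV : IsOpen V) (hV' : IsPreconnected V) {x y : T}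
    (hx : x ∈ V) (hy : y ∈ V) : ∃ A ⊆ V, IsCompact A ∧ IsConnected A ∧ x ∈ A ∧ y ∈ A := by
  have hxy : JoinedIn V x y :=
    (hV.isConnected_iff_isPathConnected.1 ⟨⟨x, hx⟩, hV'⟩).joinedIn x hx y hy
  exact ⟨range hxy.somePath, range_subset_iff.2 hxy.somePath_mem,
    isCompact_range hxy.somePath.continuous, isConnected_range hxy.somePath.continuous,
    ⟨0, hxy.somePath.source⟩, ⟨1, hxy.somePath.target⟩⟩

theorem ContinuumConvex.of_isOpen {V : Set T} (hV : IsOpen V) (hV' : IsPreconnected V) :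
    ContinuumConvex V := by
  intro x hx y hy
  obtain ⟨A, hAV, hA, hA', hxA, hyA⟩ := exists_continuum_subset hV hV' hx hy
  exact ((ContinuumConvex.of_isCompact hA hA'.isPreconnected) x hxA y hyA).trans hAV

theorem isPreconnected_union_connectedComponentIn {V U : Set T} (hV : IsPreconnected V)
    (hU : IsOpen U) {x : T} (hxU : x ∈ U) (hxV : x ∈ closure V) :
    IsPreconnected (V ∪ connectedComponentIn U x) := by
  obtain ⟨z, hzU, hzV⟩ := mem_closure_iff.1 hxV _ hU.connectedComponentIn
    (mem_connectedComponentIn hxU)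
  exact hV.union z hzV hzU isPreconnected_connectedComponentIn

/- A point outside `closure V` is avoided by a connected open set consisting of `V` and small
neighborhoods of the two endpoints. -/
theorem ContinuumConvex.closure_of_isOpen [T1Space T] {V : Set T} (hV : IsOpen V)
    (hV' : IsPreconnected V) : ContinuumConvex (closure V) := by
  intro x hx y hy z hz
  by_contra hzV
  have hzc : IsOpen ({z}ᶜ : Set T) := isOpen_compl_singleton
  have hxz : x ∈ ({z}ᶜ : Set T) := fun h => hzV (h ▸ hx)
  have hyz : y ∈ ({z}ᶜ : Set T) := fun h => hzV (h ▸ hy)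
  have hconn := isPreconnected_union_connectedComponentIn
    (isPreconnected_union_connectedComponentIn hV' hzc hxz hx) hzc hyz
    (closure_mono subset_union_left hy)
  have hz' := ContinuumConvex.of_isOpen
    ((hV.union hzc.connectedComponentIn).union hzc.connectedComponentIn) hconn
    x (.inl (.inr (mem_connectedComponentIn hxz))) y (.inr (mem_connectedComponentIn hyz)) hz
  rcases hz' with (h | h) | h
  · exact hzV (subset_closure h)
  · exact connectedComponentIn_subset _ _ h rfl
  · exact connectedComponentIn_subset _ _ h rfl

theorem closure_connectedComponentIn_compl_inter_nonempty [ConnectedSpace T] {A : Set T}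
    (hA : IsClosed A) (hne : A.Nonempty) {x : T} (hx : x ∉ A) :
    (closure (connectedComponentIn Aᶜ x) ∩ A).Nonempty := by
  by_contra hcon
  have hsub : closure (connectedComponentIn Aᶜ x) ⊆ Aᶜ := fun t ht htA => hcon ⟨t, ht, htA⟩
  have hmem : x ∈ connectedComponentIn Aᶜ x := mem_connectedComponentIn hx
  have hclopen : IsClopen (connectedComponentIn Aᶜ x) :=
    ⟨closure_subset_iff_isClosed.1 (isPreconnected_connectedComponentIn.closure
      |>.subset_connectedComponentIn (subset_closure hmem) hsub),
      hA.isOpen_compl.connectedComponentIn⟩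
  obtain ⟨a, ha⟩ := hne
  exact connectedComponentIn_subset Aᶜ x (hclopen.eq_univ ⟨x, hmem⟩ ▸ mem_univ a) ha

variable [ConnectedSpace T]

theorem nonempty_setOf_continuum (x y : T) :
    {A | IsCompact A ∧ IsConnected A ∧ x ∈ A ∧ y ∈ A}.Nonempty := by
  obtain ⟨A, -, hA⟩ := exists_continuum_subset isOpen_univ isPreconnected_univ
    (mem_univ x) (mem_univ y)
  exact ⟨A, hA⟩

variable [T2Space T]

theorem isCompact_continuumHull (x y : T) : IsCompact (continuumHull x y) := by
  obtain ⟨A, hA⟩ := nonempty_setOf_continuum x y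
  exact hA.1.of_isClosed_subset (isClosed_sInter fun B hB => hB.1.isClosed)
    (sInter_subset_of_mem hA)

namespace HereditarilyUnicoherent

theorem isConnected_continuumHull (hT : HereditarilyUnicoherent T) (x y : T) :
    IsConnected (continuumHull x y) := by
  refine ⟨⟨x, left_mem_continuumHull x y⟩, isPreconnected_sInter_of_isCompact
    (nonempty_setOf_continuum x y) ?_ (fun A hA => hA.1) fun A hA => hA.2.1.isPreconnected⟩
  exact fun A hA B hB => ⟨A ∩ B, ⟨hA.1.inter hB.1, ⟨⟨x, hA.2.2.1, hB.2.2.1⟩,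
    hT A B hA.1 hA.2.1 hB.1 hB.2.1⟩, ⟨hA.2.2.1, hB.2.2.1⟩, hA.2.2.2, hB.2.2.2⟩,
    inter_subset_left, inter_subset_right⟩

theorem continuumHull_subset_union (hT : HereditarilyUnicoherent T) (x y z : T) :
    continuumHull x z ⊆ continuumHull x y ∪ continuumHull y z := by
  have hconn : IsConnected (continuumHull x y ∪ continuumHull y z) :=
    IsConnected.union ⟨y, right_mem_continuumHull x y, left_mem_continuumHull y z⟩
      (hT.isConnected_continuumHull x y) (hT.isConnected_continuumHull y z)
  exact ContinuumConvex.of_isCompact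
    ((isCompact_continuumHull x y).union (isCompact_continuumHull y z))
    hconn.isPreconnected x (.inl (left_mem_continuumHull x y))
    z (.inr (right_mem_continuumHull y z))

theorem isMedianInterval (hT : HereditarilyUnicoherent T) :
    IsMedianInterval (continuumHull : T → T → Set T) where
  isPreconnected x y := (hT.isConnected_continuumHull x y).isPreconnected
  left_mem := left_mem_continuumHull
  right_mem := right_mem_continuumHull
  subset_union := hT.continuumHull_subset_union
  inter_nonempty x y z := by
    obtain ⟨m, hxz, hm⟩ := isPreconnected_closed_iff.1
      (hT.isConnected_continuumHull x z).isPreconnected _ _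
      (isCompact_continuumHull x y).isClosed (isCompact_continuumHull y z).isClosed
      (hT.continuumHull_subset_union x y z)
      ⟨x, left_mem_continuumHull _ _, left_mem_continuumHull _ _⟩
      ⟨z, right_mem_continuumHull _ _, right_mem_continuumHull _ _⟩
    exact ⟨m, hm, hxz⟩

theorem isPreconnected_of_continuumConvex (hT : HereditarilyUnicoherent T) {S : Set T}
    (hS : ContinuumConvex S) : IsPreconnected S :=
  isPreconnected_of_forall_pair fun x hx y hy => ⟨continuumHull x y, hS x hx y hy,
    left_mem_continuumHull x y, right_mem_continuumHull x y,
    (hT.isConnected_continuumHull x y).isPreconnected⟩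

/- Every point of the complement can be joined to `A` inside the complement: through the closure of
its own component of `Aᶜ`. -/
theorem continuumConvex_compl_connectedComponentIn (hT : HereditarilyUnicoherent T) {A : Set T}
    (hA : IsClosed A) (hA' : ContinuumConvex A) (hne : A.Nonempty) (c : T) :
    ContinuumConvex (connectedComponentIn Aᶜ c)ᶜ := by
  have hopen (x : T) : IsOpen (connectedComponentIn Aᶜ x) := hA.isOpen_compl.connectedComponentIn
  have hAV : A ⊆ (connectedComponentIn Aᶜ c)ᶜ :=
    subset_compl_comm.1 (connectedComponentIn_subset Aᶜ c)
  have hjoin (x) (hx : x ∈ (connectedComponentIn Aᶜ c)ᶜ) :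
      ∃ a ∈ A, continuumHull x a ⊆ (connectedComponentIn Aᶜ c)ᶜ := by
    by_cases hxA : x ∈ A
    · exact ⟨x, hxA, (hA' x hxA x hxA).trans hAV⟩
    have hxG : x ∈ connectedComponentIn Aᶜ x := mem_connectedComponentIn hxA
    have hdisj : connectedComponentIn Aᶜ x ⊆ (connectedComponentIn Aᶜ c)ᶜ := fun t htx htc =>
      hx (connectedComponentIn_eq htc ▸ connectedComponentIn_eq htx ▸ hxG)
    obtain ⟨a, haG, haA⟩ := closure_connectedComponentIn_compl_inter_nonempty hA hne hxA
    exact ⟨a, haA, (ContinuumConvex.closure_of_isOpen (hopen x)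
      isPreconnected_connectedComponentIn x (subset_closure hxG) a haG).trans
        (closure_minimal hdisj (hopen c).isClosed_compl)⟩
  intro x hx y hy
  obtain ⟨a, ha, hxa⟩ := hjoin x hx
  obtain ⟨b, hb, hyb⟩ := hjoin y hy
  calc continuumHull x y
    _ ⊆ continuumHull x a ∪ continuumHull a y := hT.continuumHull_subset_union x a y
    _ ⊆ continuumHull x a ∪ (continuumHull a b ∪ continuumHull y b) := by
      rw [continuumHull_comm y b]
      gcongr
      exact hT.continuumHull_subset_union a b y
    _ ⊆ (connectedComponentIn Aᶜ c)ᶜ :=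
      union_subset hxa (union_subset ((hA' a ha b hb).trans hAV) hyb)

end HereditarilyUnicoherent

/-- The pairs `C ⊆ U` between which the Urysohn construction interpolates to produce functions that
are monotone along continuum hulls. -/
structure IsConvexPair (C U : Set T) : Prop where
  convex_left : ContinuumConvex C
  nonempty_left : C.Nonempty
  convex_right : ContinuumConvex U
  convex_compl_right : ContinuumConvex Uᶜ
  nonempty_compl_right : Uᶜ.Nonempty

theorem IsConvexPair.exists_between [NormalSpace T] (hT : HereditarilyUnicoherent T) {C U : Set T}
    (hCU : IsConvexPair C U) (hC : IsClosed C) (hU : IsOpen U) (hsub : C ⊆ U) :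
    ∃ V, IsOpen V ∧ C ⊆ V ∧ closure V ⊆ U ∧ IsConvexPair C V ∧ IsConvexPair (closure V) U := by
  obtain ⟨N, hN, hCN, hNU⟩ := normal_exists_closure_subset hC hU hsub
  obtain ⟨d, hd⟩ := hCU.nonempty_compl_right
  obtain ⟨c, hc⟩ := hCU.nonempty_left
  -- `F` is a connected open neighborhood of `Uᶜ`, and `V` one of `C` away from it.
  set F := connectedComponentIn (closure N)ᶜ d
  have hF : IsOpen F := isClosed_closure.isOpen_compl.connectedComponentIn
  have hUF : Uᶜ ⊆ F := (hT.isPreconnected_of_continuumConvex hCU.convex_compl_right)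
    |>.subset_connectedComponentIn hd (compl_subset_compl.2 hNU)
  have hNF : Disjoint N F := disjoint_left.2 fun t htN htF =>
    connectedComponentIn_subset _ _ htF (subset_closure htN)
  have hCF : C ⊆ (closure F)ᶜ :=
    hCN.trans (hNF.closure_right hN).subset_compl_right
  set V := connectedComponentIn (closure F)ᶜ c
  have hV : IsOpen V := isClosed_closure.isOpen_compl.connectedComponentIn
  have hCV : C ⊆ V := (hT.isPreconnected_of_continuumConvex hCU.convex_left)
    |>.subset_connectedComponentIn hc hCF
  have hVF : closure V ⊆ Fᶜ := closure_minimal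
    ((connectedComponentIn_subset _ _).trans (compl_subset_compl.2 subset_closure))
    hF.isClosed_compl
  refine ⟨V, hV, hCV, hVF.trans (compl_subset_comm.1 hUF), ⟨hCU.convex_left, hCU.nonempty_left,
    .of_isOpen hV isPreconnected_connectedComponentIn, ?_, d, ?_⟩, ?_⟩
  · exact hT.continuumConvex_compl_connectedComponentIn isClosed_closure
      (.closure_of_isOpen hF isPreconnected_connectedComponentIn) ⟨d, subset_closure (hUF hd)⟩ c
  · exact fun hdV => hVF (subset_closure hdV) (hUF hd)
  · exact ⟨.closure_of_isOpen hV isPreconnected_connectedComponentIn, ⟨c, subset_closure (hCV hc)⟩,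
      hCU.convex_right, hCU.convex_compl_right, hCU.nonempty_compl_right⟩

end LocallyPathConnected

theorem midpoint_mem_uIcc_midpoint {a b c a' b' c' : ℝ} (hc : c ∈ uIcc a b)
    (hc' : c' ∈ uIcc a' b') (h : a ≤ b ∧ a' ≤ b' ∨ b ≤ a ∧ b' ≤ a') :
    midpoint ℝ c c' ∈ uIcc (midpoint ℝ a a') (midpoint ℝ b b') := by
  rw [mem_uIcc]
  rcases h with ⟨h, h'⟩ | ⟨h, h'⟩
  · rw [uIcc_of_le h] at hc
    rw [uIcc_of_le h'] at hc'
    exact .inl ⟨midpoint_le_midpoint hc.1 hc'.1, midpoint_le_midpoint hc.2 hc'.2⟩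
  · rw [uIcc_of_ge h] at hc
    rw [uIcc_of_ge h'] at hc'
    exact .inr ⟨midpoint_le_midpoint hc.1 hc'.1, midpoint_le_midpoint hc.2 hc'.2⟩

/- The two halves `c.left` and `c.right` of the construction vary in the same direction from `x` to
`y`, as one of them is constant wherever the other is not. -/
theorem urysohn_approx_mem_uIcc (n : ℕ) (c : Urysohns.CU (IsConvexPair (T := T))) {x y z : T}
    (hz : z ∈ continuumHull x y) : c.approx n z ∈ uIcc (c.approx n x) (c.approx n y) := by
  have zero_of_mem (c : Urysohns.CU (IsConvexPair (T := T))) (n) {t} (ht : t ∈ c.left.U) :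
      c.right.approx n t = 0 := c.right.approx_of_mem_C n (c.left_U_subset_right_C ht)
  have one_of_notMem (c : Urysohns.CU (IsConvexPair (T := T))) (n) {t} (ht : t ∉ c.left.U) :
      c.left.approx n t = 1 := c.left.approx_of_notMem_U n ht
  induction n generalizing c with
  | zero =>
    have hz01 : indicator c.Uᶜ (1 : T → ℝ) z ∈ Icc 0 1 :=
      ⟨c.approx_nonneg 0 z, c.approx_le_one 0 z⟩
    simp only [Urysohns.CU.approx]
    by_cases hx : x ∈ c.U <;> by_cases hy : y ∈ c.U
    · have := c.P_C_U.convex_right x hx y hy hz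
      simp [*]
    · simpa [hx, hy] using hz01
    · simpa [hx, hy] using hz01
    · have := c.P_C_U.convex_compl_right x hx y hy hz
      simp_all
  | succ n ih =>
    refine midpoint_mem_uIcc_midpoint (ih c.left) (ih c.right) ?_
    by_cases hx : x ∈ c.left.U <;> by_cases hy : y ∈ c.left.U
    · rw [zero_of_mem c n hx, zero_of_mem c n hy]
      simpa using le_total _ _
    · rw [zero_of_mem c n hx, one_of_notMem c n hy]
      exact .inl ⟨c.left.approx_le_one n x, c.right.approx_nonneg n y⟩
    · rw [zero_of_mem c n hy, one_of_notMem c n hx]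
      exact .inr ⟨c.left.approx_le_one n y, c.right.approx_nonneg n x⟩
    · rw [one_of_notMem c n hx, one_of_notMem c n hy]
      simpa using le_total _ _

theorem urysohn_lim_mem_uIcc (c : Urysohns.CU (IsConvexPair (T := T))) {x y z : T}
    (hz : z ∈ continuumHull x y) : c.lim z ∈ uIcc (c.lim x) (c.lim y) := by
  have htendsto := c.tendsto_approx_atTop
  exact ⟨le_of_tendsto_of_tendsto' ((htendsto x).min (htendsto y)) (htendsto z)
      fun n => (urysohn_approx_mem_uIcc n c hz).1,
    le_of_tendsto_of_tendsto' (htendsto z) ((htendsto x).max (htendsto y))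
      fun n => (urysohn_approx_mem_uIcc n c hz).2⟩

/-- A Urysohn function which is monotone along continuum hulls. -/
structure IsMonotoneUrysohn (u : T → ℝ) : Prop where
  continuous : Continuous u
  mem_Icc : ∀ x, u x ∈ Icc 0 1
  mem_uIcc : ∀ x y, ∀ z ∈ continuumHull x y, u z ∈ uIcc (u x) (u y)

variable [LocallyPathConnectedSpace T] [T2Space T] [ConnectedSpace T]

theorem HereditarilyUnicoherent.exists_isMonotoneUrysohn [NormalSpace T]
    (hT : HereditarilyUnicoherent T) {a b : T} (hab : a ≠ b) :
    ∃ u : T → ℝ, IsMonotoneUrysohn u ∧ u a ≠ u b := by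
  have hsingle (t : T) : ContinuumConvex {t} :=
    .of_isCompact isCompact_singleton isPreconnected_singleton
  let U := connectedComponentIn {b}ᶜ a
  have hU : IsOpen U := isOpen_compl_singleton.connectedComponentIn
  have hbU : b ∉ U := fun h => connectedComponentIn_subset {b}ᶜ a h rfl
  let c : Urysohns.CU (IsConvexPair (T := T)) :=
    { C := {a}
      U := U
      P_C_U := ⟨hsingle a, singleton_nonempty a,
        .of_isOpen hU isPreconnected_connectedComponentIn,
        hT.continuumConvex_compl_connectedComponentIn isClosed_singleton (hsingle b)
          (singleton_nonempty b) a, b, hbU⟩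
      closed_C := isClosed_singleton
      open_U := hU
      subset := singleton_subset_iff.2 (mem_connectedComponentIn hab)
      hP := fun hC hCU hU hsub => hCU.exists_between hT hC hU hsub }
  refine ⟨c.lim, ⟨c.continuous_lim, c.lim_mem_Icc, fun x y z => urysohn_lim_mem_uIcc c⟩, ?_⟩
  rw [c.lim_of_mem_C a rfl, c.lim_of_notMem_U b hbU]
  exact zero_ne_one

theorem HereditarilyUnicoherent.exists_seq_isMonotoneUrysohn [NormalSpace T]
    [SecondCountableTopology T] (hT : HereditarilyUnicoherent T) :
    ∃ u : ℕ → T → ℝ, (∀ k, IsMonotoneUrysohn (u k)) ∧ ∀ x y, (∀ k, u k x = u k y) → x = y := by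
  let ι := {u : T → ℝ // IsMonotoneUrysohn u}
  obtain ⟨S, hS, hSι⟩ := TopologicalSpace.isOpen_iUnion_countable
    (fun u : ι => {p : T × T | u.1 p.1 ≠ u.1 p.2}) fun u =>
      isOpen_ne_fun (u.2.continuous.comp continuous_fst) (u.2.continuous.comp continuous_snd)
  let zero : ι := ⟨0, continuous_zero, by simp, by simp⟩
  obtain ⟨u, hu⟩ := (hS.insert zero).exists_eq_range (insert_nonempty _ _)
  refine ⟨fun k => u k, fun k => (u k).2, fun x y hxy => ?_⟩
  by_contra hne
  obtain ⟨v, hv, hvne⟩ := hT.exists_isMonotoneUrysohn hne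
  have hmem : (x, y) ∈ ⋃ w ∈ S, {p : T × T | w.1 p.1 ≠ w.1 p.2} :=
    hSι ▸ mem_iUnion.2 ⟨⟨v, hv⟩, hvne⟩
  obtain ⟨w, hwS, hw⟩ := mem_iUnion₂.1 hmem
  obtain ⟨k, rfl⟩ : w ∈ range u := hu ▸ mem_insert_of_mem zero hwS
  exact hw (hxy k)

theorem HereditarilyUnicoherent.isANE [NormalSpace T] [SecondCountableTopology T]
    (hT : HereditarilyUnicoherent T) {U : Set T} (hU : IsOpen U) (hU' : IsConnected U)
    (hcpt : IsCompact (closure U)) : IsANE U := by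
  obtain ⟨u, hu, hsep⟩ := hT.exists_seq_isMonotoneUrysohn
  have : CompactSpace (closure U) := isCompact_iff_compactSpace.1 hcpt
  have : Nonempty (closure U) := hU'.nonempty.closure.to_subtype
  have hconv : ContinuumConvex (closure U) := .closure_of_isOpen hU hU'.isPreconnected
  have : TietzeExtension (closure U) := (hT.isMedianInterval.preimage_val hconv).tietzeExtension
    (u := fun k x => u k x) (fun k => (hu k).continuous.comp continuous_subtype_val)
    (fun k x => (hu k).mem_Icc x) (fun x y hxy => Subtype.ext (hsep x y hxy))
    fun k x y z => (hu k).mem_uIcc x y z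
  have hANE : IsANE (closure U) := by
    simpa only [image_univ, Subtype.range_coe] using
      (IsANE.univ_of_tietzeExtension (X := closure U)).image IsInducing.subtypeVal
  exact hANE.mono_of_isOpen hU subset_closure

end HereditaryUnicoherence

/-! ### Local path connectedness -/

section CompleteLocallyConnected

variable {X : Type*} [MetricSpace X]

/-- `ChainPath U ε x y f` says that the possibly discontinuous map `f` runs from `x` to `y` inside
`U` by finitely many jumps, each within a connected open set of diameter at most `ε`. Such maps are
the approximations whose limit is a path. -/
inductive ChainPath (U : Set X) (ε : ℝ) : X → X → (ℝ → X) → Prop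
  | jump {B : Set X} {x y : X} (isOpen : IsOpen B) (isPreconnected : IsPreconnected B)
      (subset : B ⊆ U) (dist_le : ∀ a ∈ B, ∀ b ∈ B, dist a b ≤ ε) (hx : x ∈ B) (hy : y ∈ B) :
      ChainPath U ε x y fun t => if t < 1 then x else y
  | trans {x y z : X} {f g : ℝ → X} (hf : ChainPath U ε x y f) (hg : ChainPath U ε y z g) :
      ChainPath U ε x z fun t => if t ≤ 1 / 2 then f (2 * t) else g (2 * t - 1)

namespace ChainPath

variable {U V : Set X} {ε : ℝ} {x y : X} {f : ℝ → X}

theorem eq_left (h : ChainPath U ε x y f) : ∀ t ≤ 0, f t = x := by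
  induction h with
  | jump => exact fun t ht => if_pos (by linarith)
  | trans _ _ ihf _ => exact fun t ht => (if_pos (by linarith)).trans (ihf _ (by linarith))

theorem eq_right (h : ChainPath U ε x y f) : ∀ t, 1 ≤ t → f t = y := by
  induction h with
  | jump => exact fun t ht => if_neg (by linarith)
  | trans _ _ _ ihg => exact fun t ht => (if_neg (by linarith)).trans (ihg _ (by linarith))

theorem mem (h : ChainPath U ε x y f) : ∀ t, f t ∈ U := by
  induction h with
  | jump _ _ hBU _ hx hy => exact fun t => by dsimp only; split_ifs <;> exact hBU ‹_›
  | trans _ _ ihf ihg => exact fun t => by dsimp only; split_ifs <;> solve_by_elim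

theorem mono (h : ChainPath U ε x y f) (hUV : U ⊆ V) : ChainPath V ε x y f := by
  induction h with
  | jump hB hB' hBU hε hx hy => exact .jump hB hB' (hBU.trans hUV) hε hx hy
  | trans _ _ ihf ihg => exact .trans ihf ihg

theorem eventually_dist_le (h : ChainPath U ε x y f) :
    ∀ t, ∀ᶠ s in 𝓝 t, dist (f s) (f t) ≤ ε := by
  induction h with
  | jump _ _ _ hε hx hy =>
    refine fun t => .of_forall fun s => hε _ ?_ _ ?_ <;> dsimp only <;> split_ifs <;> assumption
  | trans hf hg ihf ihg =>
    rename_i f g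
    intro t
    have hf' : ∀ᶠ s in 𝓝 t, dist (f (2 * s)) (f (2 * t)) ≤ ε :=
      (show Continuous fun s : ℝ => 2 * s by fun_prop).continuousAt.eventually (ihf (2 * t))
    have hg' : ∀ᶠ s in 𝓝 t, dist (g (2 * s - 1)) (g (2 * t - 1)) ≤ ε :=
      (show Continuous fun s : ℝ => 2 * s - 1 by fun_prop).continuousAt.eventually
        (ihg (2 * t - 1))
    rcases lt_trichotomy t (1 / 2) with ht | rfl | ht
    · filter_upwards [hf', eventually_lt_nhds ht] with s hs hst
      rwa [if_pos hst.le, if_pos ht.le]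
    · have hfg : f (2 * (1 / 2)) = g (2 * (1 / 2) - 1) := by
        rw [hf.eq_right _ (by norm_num), hg.eq_left _ (by norm_num)]
      filter_upwards [hf', hg'] with s hsf hsg
      rw [if_pos le_rfl]
      split_ifs
      exacts [hsf, hfg ▸ hsg]
    · filter_upwards [hg', eventually_gt_nhds ht] with s hs hst
      rwa [if_neg hst.not_ge, if_neg ht.not_ge]

theorem exists_of_isPreconnected [LocallyConnectedSpace X] (hU : IsOpen U) (hU' : IsPreconnected U)
    (hε : 0 < ε) (hx : x ∈ U) (hy : y ∈ U) : ∃ f, ChainPath U ε x y f := by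
  refine hU'.induction₂' (fun x y => ∃ f, ChainPath U ε x y f) (fun x hx => ?_)
    (fun x y z _ _ _ ⟨f, hf⟩ ⟨g, hg⟩ => ⟨_, hf.trans hg⟩) hx hy
  have hxB : x ∈ U ∩ Metric.ball x (ε / 2) := ⟨hx, Metric.mem_ball_self (half_pos hε)⟩
  have hB := (hU.inter (Metric.isOpen_ball (x := x) (ε := ε / 2))).connectedComponentIn (x := x)
  have hBsub := connectedComponentIn_subset (U ∩ Metric.ball x (ε / 2)) x
  have hdist : ∀ a ∈ connectedComponentIn (U ∩ Metric.ball x (ε / 2)) x,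
      ∀ b ∈ connectedComponentIn (U ∩ Metric.ball x (ε / 2)) x, dist a b ≤ ε := fun a ha b hb => by
    have := Metric.mem_ball.1 (hBsub ha).2
    have := Metric.mem_ball.1 (hBsub hb).2
    linarith [dist_triangle_right a b x]
  have hxB' := mem_connectedComponentIn hxB
  filter_upwards [mem_nhdsWithin_of_mem_nhds (hB.mem_nhds hxB')] with z hz
  exact ⟨⟨_, .jump hB isPreconnected_connectedComponentIn (hBsub.trans inter_subset_left) hdist
    hxB' hz⟩, ⟨_, .jump hB isPreconnected_connectedComponentIn (hBsub.trans inter_subset_left)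
    hdist hz hxB'⟩⟩

theorem exists_refinement [LocallyConnectedSpace X] {δ : ℝ} (h : ChainPath U ε x y f)
    (hδ : 0 < δ) : ∃ g, ChainPath U δ x y g ∧ ∀ t, dist (f t) (g t) ≤ ε := by
  induction h with
  | jump hB hB' hBU hε hx hy =>
    obtain ⟨g, hg⟩ := exists_of_isPreconnected hB hB' hδ hx hy
    refine ⟨g, hg.mono hBU, fun t => hε _ ?_ _ (hg.mem t)⟩
    dsimp only
    split_ifs <;> assumption
  | trans _ _ ihf ihg =>
    obtain ⟨f', hf', hff'⟩ := ihf
    obtain ⟨g', hg', hgg'⟩ := ihg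
    refine ⟨_, hf'.trans hg', fun t => ?_⟩
    dsimp only
    split_ifs
    exacts [hff' _, hgg' _]

theorem exists_seq [LocallyConnectedSpace X] (hU : IsOpen U) (hU' : IsPreconnected U)
    (hx : x ∈ U) (hy : y ∈ U) : ∃ f : ℕ → ℝ → X, ∀ n, ChainPath U ((1 / 2) ^ n) x y (f n) ∧
      ∀ t, dist (f n t) (f (n + 1) t) ≤ (1 / 2) ^ n := by
  choose! refine h_refine using fun (n : ℕ) (f : ℝ → X) (hf : ChainPath U ((1 / 2) ^ n) x y f) =>
    hf.exists_refinement (δ := (1 / 2) ^ (n + 1)) (by positivity)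
  obtain ⟨f₀, hf₀⟩ := exists_of_isPreconnected (ε := (1 / 2) ^ 0) hU hU' (by positivity) hx hy
  let f : ℕ → ℝ → X := fun n => Nat.rec f₀ refine n
  have hf (n : ℕ) : ChainPath U ((1 / 2) ^ n) x y (f n) := by
    induction n with
    | zero => exact hf₀
    | succ n ih => exact (h_refine n _ ih).1
  exact ⟨f, fun n => ⟨hf n, fun t => (h_refine n _ (hf n)).2 t⟩⟩

end ChainPath

theorem joinedIn_closure_of_isOpen_of_isPreconnected [CompleteSpace X] [LocallyConnectedSpace X]
    {U : Set X} (hU : IsOpen U) (hU' : IsPreconnected U) {x y : X} (hx : x ∈ U) (hy : y ∈ U) :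
    JoinedIn (closure U) x y := by
  obtain ⟨f, hf⟩ := ChainPath.exists_seq hU hU' hx hy
  have hstep (t : ℝ) (n : ℕ) : dist (f n t) (f (n + 1) t) ≤ 1 * (1 / 2) ^ n :=
    (one_mul ((1 / 2 : ℝ) ^ n)).symm ▸ (hf n).2 t
  choose G hG using fun t => cauchySeq_tendsto_of_complete
    (cauchySeq_of_le_geometric (1 / 2) 1 (by norm_num) (hstep t))
  have hfG (n : ℕ) (t : ℝ) : dist (f n t) (G t) ≤ 2 * (1 / 2) ^ n := by
    convert dist_le_of_le_geometric_of_tendsto (1 / 2) 1 (by norm_num) (hstep t) (hG t) n using 1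
    ring
  have hcont : Continuous G := by
    refine continuous_iff_continuousAt.2 fun t => Metric.continuousAt_iff'.2 fun ε hε => ?_
    obtain ⟨n, hn⟩ := exists_pow_lt_of_lt_one (show 0 < ε / 5 by positivity)
      (show (1 / 2 : ℝ) < 1 by norm_num)
    filter_upwards [(hf n).1.eventually_dist_le t] with s hs
    have := dist_triangle4 (G s) (f n s) (f n t) (G t)
    linarith [hfG n s, hfG n t, dist_comm (G s) (f n s)]
  have hconst {t : ℝ} {z : X} (h : ∀ n, f n t = z) : G t = z :=
    tendsto_nhds_unique (hG t) (by simp only [h, tendsto_const_nhds])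
  refine JoinedIn.ofLine hcont.continuousOn (hconst fun n => (hf n).1.eq_left 0 le_rfl)
    (hconst fun n => (hf n).1.eq_right 1 le_rfl) ?_
  rintro _ ⟨t, -, rfl⟩
  exact mem_closure_of_tendsto (hG t) (.of_forall fun n => (hf n).1.mem t)

theorem locallyPathConnectedSpace_of_complete [CompleteSpace X] [LocallyConnectedSpace X] :
    LocallyPathConnectedSpace X := by
  rw [locallyPathConnectedSpace_iff_pathComponentIn_mem_nhds]
  intro x u hu hx
  obtain ⟨v, hv, hvc, hvu⟩ := exists_mem_nhds_isClosed_subset (hu.mem_nhds hx)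
  have hxv : x ∈ interior v := mem_interior_iff_mem_nhds.2 hv
  have hopen := isOpen_interior.connectedComponentIn (F := interior v) (x := x)
  have hcl : closure (connectedComponentIn (interior v) x) ⊆ u :=
    (closure_minimal ((connectedComponentIn_subset _ _).trans interior_subset) hvc).trans hvu
  filter_upwards [hopen.mem_nhds (mem_connectedComponentIn hxv)] with z hz
  exact (joinedIn_closure_of_isOpen_of_isPreconnected hopen isPreconnected_connectedComponentIn
    (mem_connectedComponentIn hxv) hz).mono hcl

end CompleteLocallyConnected

/-! ### Circle-valued maps on one-dimensional spaces -/

section Dimension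

section GeneralPosition

variable {E : Type*} [NormedAddCommGroup E] [NormedSpace ℝ E] [CompleteSpace E]

theorem exists_dist_lt_forall_notMem_submodule {K : Set (Submodule ℝ E)} (hK : K.Countable)
    (hclosed : ∀ L ∈ K, IsClosed (L : Set E)) (hne : ∀ L ∈ K, L ≠ ⊤) (b : E) {ε : ℝ}
    (hε : 0 < ε) : ∃ c, dist c b < ε ∧ ∀ L ∈ K, c ∉ L := by
  have hdense : Dense (⋂ L ∈ K, (L : Set E)ᶜ) := by
    refine dense_biInter_of_isOpen (fun L hL => (hclosed L hL).isOpen_compl) hK fun L hL => ?_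
    rw [← interior_eq_empty_iff_dense_compl, ← not_nonempty_iff_eq_empty]
    exact fun h => hne L hL (L.eq_top_of_nonempty_interior' h)
  obtain ⟨c, hc, hcb⟩ := hdense.exists_dist_lt b hε
  exact ⟨c, dist_comm b c ▸ hcb, fun L hL => mem_iInter₂.1 hc L hL⟩

theorem exists_dist_lt_forall_notMem_span {ι : Type*} {n : ℕ}
    (hn : (n : Cardinal) ≤ Module.rank ℝ E) (c : ι → E) (s : Finset ι) (b : E) {ε : ℝ}
    (hε : 0 < ε) :
    ∃ z, dist z b < ε ∧ ∀ u ⊆ s, u.card < n → z ∉ Submodule.span ℝ (c '' u) := by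
  classical
  let K : Set (Submodule ℝ E) :=
    (fun u : Finset ι => Submodule.span ℝ (c '' u)) '' {u | u ⊆ s ∧ u.card < n}
  have hK : K.Countable :=
    ((s.powerset.finite_toSet.subset fun u hu => Finset.mem_powerset.2 hu.1).image _).countable
  have hclosed : ∀ L ∈ K, IsClosed (L : Set E) := by
    rintro _ ⟨u, -, rfl⟩
    have := FiniteDimensional.span_of_finite ℝ (u.finite_toSet.image c)
    exact Submodule.closed_of_finiteDimensional _
  have hne : ∀ L ∈ K, L ≠ ⊤ := by
    rintro _ ⟨u, ⟨-, hu⟩, rfl⟩ htop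
    have hrank := rank_span_finset_le (R := ℝ) (u.image c)
    rw [Finset.coe_image, show Submodule.span ℝ (c '' u) = ⊤ from htop, rank_top] at hrank
    have : n ≤ u.card := (Nat.cast_le.1 (hn.trans hrank)).trans Finset.card_image_le
    exact absurd hu this.not_gt
  obtain ⟨z, hzb, hz⟩ := exists_dist_lt_forall_notMem_submodule hK hclosed hne b hε
  exact ⟨z, hzb, fun u hus hun => hz _ ⟨u, ⟨hus, hun⟩, rfl⟩⟩

theorem exists_dist_lt_forall_linearIndepOn {ι : Type*} {n : ℕ}
    (hn : (n : Cardinal) ≤ Module.rank ℝ E) (b : ι → E) {ε : ℝ} (hε : 0 < ε) (s : Finset ι) :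
    ∃ c : ι → E, (∀ i, dist (c i) (b i) < ε) ∧
      ∀ t ⊆ s, t.card ≤ n → LinearIndepOn ℝ c (t : Set ι) := by
  classical
  induction s using Finset.induction_on with
  | empty =>
    refine ⟨b, fun i => by rwa [dist_self], fun t ht _ => ?_⟩
    rw [Finset.subset_empty.1 ht, Finset.coe_empty]
    exact linearIndepOn_empty ℝ b
  | insert a s _ ih =>
    obtain ⟨c, hcb, hc⟩ := ih
    obtain ⟨z, hzb, hz⟩ := exists_dist_lt_forall_notMem_span hn c s (b a) hε
    have hupdate {u : Finset ι} (hau : a ∉ u) : EqOn c (Function.update c a z) u := fun i hi =>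
      (Function.update_of_ne (ne_of_mem_of_not_mem hi hau) z c).symm
    refine ⟨Function.update c a z, fun i => ?_, fun t hts htn => ?_⟩
    · rcases eq_or_ne i a with rfl | hia
      · rwa [Function.update_self]
      · rw [Function.update_of_ne hia]
        exact hcb i
    by_cases hat : a ∈ t
    · obtain ⟨u, hau, rfl⟩ : ∃ u, a ∉ u ∧ insert a u = t :=
        ⟨t.erase a, t.notMem_erase a, Finset.insert_erase hat⟩
      have hus : u ⊆ s := (Finset.insert_subset_insert_iff hau).1 hts
      have hun : u.card < n := by rwa [Finset.card_insert_of_notMem hau] at htn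
      rw [Finset.coe_insert, linearIndepOn_insert (Finset.mem_coe.not.2 hau),
        Function.update_self, ← image_congr (hupdate hau)]
      exact ⟨(hc u hus hun.le).congr (hupdate hau), hz u hus hun⟩
    · exact (hc t ((Finset.subset_insert_iff_of_notMem hat).1 hts) htn).congr (hupdate hat)

end GeneralPosition

namespace CovDimLE

variable {X : Type*} [TopologicalSpace X] [CompactSpace X]

theorem exists_cover_forall_dist_lt {n : ℕ} (hX : CovDimLE X n) {E : Type*} [PseudoMetricSpace E]
    (g : C(X, E)) {ε : ℝ} (hε : 0 < ε) : ∃ V : Set (Set X), V.Finite ∧ (∀ v ∈ V, IsOpen v) ∧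
      ⋃₀ V = univ ∧ (∀ v ∈ V, ∃ z, ∀ x ∈ v, dist (g x) z < ε) ∧
      ∀ x, {v ∈ V | x ∈ v}.ncard ≤ n + 1 := by
  obtain ⟨t, -, ht, hcov⟩ := finite_cover_balls_of_compact (isCompact_range g.continuous) hε
  obtain ⟨V, hVf, hVo, hVu, hVr, hVc⟩ := hX ((fun z => g ⁻¹' Metric.ball z ε) '' t) (ht.image _)
    (forall_mem_image.2 fun z _ => Metric.isOpen_ball.preimage g.continuous)
    (eq_univ_of_forall fun x => by simpa using hcov (mem_range_self x))
  refine ⟨V, hVf, hVo, hVu, fun v hv => ?_, hVc⟩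
  obtain ⟨_, ⟨z, -, rfl⟩, hvz⟩ := hVr v hv
  exact ⟨z, fun x hx => hvz hx⟩

/- Send the vertices of the nerve of a fine cover to points in general position and map `X` to the
nerve by a partition of unity. -/
theorem exists_forall_ne_zero_dist_lt [NormalSpace X] {n : ℕ} (hX : CovDimLE X n) {E : Type*}
    [NormedAddCommGroup E] [NormedSpace ℝ E] [CompleteSpace E]
    (hn : (n : Cardinal) < Module.rank ℝ E) (g : C(X, E)) {ε : ℝ} (hε : 0 < ε) :
    ∃ g' : C(X, E), ∀ x, g' x ≠ 0 ∧ dist (g' x) (g x) < ε := by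
  classical
  obtain ⟨V, hVf, hVo, hVu, hVg, hVc⟩ := hX.exists_cover_forall_dist_lt g (half_pos hε)
  have := hVf.fintype
  choose b hb using fun v : V => hVg v v.2
  obtain ⟨c, hcb, hc⟩ := exists_dist_lt_forall_linearIndepOn (n := n + 1)
    (by exact_mod_cast Order.succ_le_of_lt hn) b (half_pos hε) Finset.univ
  obtain ⟨φ, hφ⟩ := PartitionOfUnity.exists_isSubordinate isClosed_univ (fun v : V => (v : Set X))
    (fun v => hVo v v.2) (by rw [← sUnion_eq_iUnion, hVu])
  have hmem {v : V} {x : X} (h : φ v x ≠ 0) : x ∈ (v : Set X) := hφ v (subset_tsupport _ h)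
  refine ⟨⟨fun x => ∑ v, φ v x • c v, by fun_prop⟩, fun x => ⟨fun h0 => ?_, ?_⟩⟩
  · have hcard : (Finset.univ.filter fun v => φ v x ≠ 0).card ≤ n + 1 := by
      refine le_trans ?_ (hVc x)
      rw [← ncard_coe_finset, ← ncard_image_of_injective _ Subtype.val_injective]
      refine ncard_le_ncard ?_ (hVf.sep _)
      rintro _ ⟨v, hv, rfl⟩
      exact ⟨v.2, hmem (Finset.mem_filter.1 hv).2⟩
    have hzero := linearIndepOn_finset_iff.1 (hc _ (Finset.filter_subset _ _) hcard) (φ · x)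
      (by
        rwa [Finset.sum_filter_of_ne fun v _ hv => left_ne_zero_of_smul hv])
    obtain ⟨v, hv⟩ := φ.exists_pos (mem_univ x)
    exact hv.ne' (hzero v (by simpa using hv.ne'))
  · have hball := φ.finsum_smul_mem_convex (g := fun v _ => c v) (mem_univ x) (fun v hv => ?_)
      (convex_ball (g x) ε)
    · rwa [finsum_eq_sum_of_fintype] at hball
    · have := dist_triangle_right (c v) (g x) (b v)
      rw [Metric.mem_ball]
      linarith [hb v x (hmem hv), hcb v]

end CovDimLE

section Circle

variable {X : Type*} [TopologicalSpace X]

theorem exists_circle_extension_of_mem_slitPlane [NormalSpace X] {A : Set X} (hA : IsClosed A)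
    (f : C(A, Circle)) (u : C(X, Circle))
    (h : ∀ a : A, ((u a / f a : Circle) : ℂ) ∈ Complex.slitPlane) :
    ∃ F : C(X, Circle), ∀ a : A, F a = f a := by
  have hcoe : Continuous fun z : Circle => (z : ℂ) := by fun_prop
  have hcont : Continuous fun a : A => Complex.arg ((u a / f a : Circle) : ℂ) :=
    continuous_iff_continuousAt.2 fun a => (Complex.continuousAt_arg (h a)).comp
      (f := fun a : A => ((u a / f a : Circle) : ℂ)) (hcoe.comp (by fun_prop)).continuousAt
  obtain ⟨Θ, hΘ⟩ := ContinuousMap.exists_restrict_eq hA ⟨_, hcont⟩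
  refine ⟨⟨fun x => u x / Circle.exp (Θ x), by fun_prop⟩, fun a => ?_⟩
  have hΘa : Θ a = Complex.arg ((u a / f a : Circle) : ℂ) := DFunLike.congr_fun hΘ a
  simp only [ContinuousMap.coe_mk, hΘa, Circle.exp_arg, div_div_cancel]

theorem CovDimLE.exists_circle_extension [CompactSpace X] [NormalSpace X] (hX : CovDimLE X 1)
    {A : Set X} (hA : IsClosed A) (f : C(A, Circle)) :
    ∃ F : C(X, Circle), ∀ a : A, F a = f a := by
  obtain ⟨g, hg⟩ := ContinuousMap.exists_restrict_eq hA
    ((⟨fun z => z, by fun_prop⟩ : C(Circle, ℂ)).comp f)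
  obtain ⟨g', hg'⟩ := hX.exists_forall_ne_zero_dist_lt (by simp [Complex.rank_real_complex]) g
    one_pos
  have hpos (x : X) : 0 < ‖g' x‖ := norm_pos_iff.2 (hg' x).1
  have hcont : Continuous fun x => g' x / ‖g' x‖ :=
    g'.continuous.div (by fun_prop) fun x => by exact_mod_cast (hpos x).ne'
  have hnorm (x : X) : g' x / ‖g' x‖ ∈ Submonoid.unitSphere ℂ := by
    simp [Submonoid.unitSphere, (hpos x).ne']
  let u : C(X, Circle) := ⟨fun x => ⟨g' x / ‖g' x‖, hnorm x⟩, hcont.subtype_mk hnorm⟩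
  refine exists_circle_extension_of_mem_slitPlane hA f u fun a => ?_
  have hga : g a = f a := DFunLike.congr_fun hg a
  have hball : g' a / f a ∈ Metric.ball (1 : ℂ) 1 := by
    rw [mem_ball_iff_norm, div_sub_one (Circle.coe_ne_zero _), norm_div, Circle.norm_coe, div_one,
      ← hga, ← dist_eq_norm]
    exact (hg' a).2
  have hu : ((u a / f a : Circle) : ℂ) = ((‖g' a‖⁻¹ : ℝ) : ℂ) * (g' a / f a) := by
    rw [Circle.coe_div, show ((u a : Circle) : ℂ) = g' a / ‖g' a‖ from rfl, Complex.ofReal_inv]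
    ring
  rw [hu, Complex.mem_slitPlane_iff_arg, Complex.arg_real_mul _ (inv_pos.2 (hpos a))]
  have := Complex.mem_slitPlane_iff_arg.1 (Complex.ball_one_subset_slitPlane hball)
  exact ⟨this.1, mul_ne_zero (by exact_mod_cast (inv_pos.2 (hpos a)).ne') this.2⟩

end Circle

end Dimension

/-! ### Change of angle along paths -/

section AngleChange

variable {X : Type*} [TopologicalSpace X]

theorem exists_circleLift (F : C(X, Circle)) {x y : X} (γ : Path x y) :
    ∃ Γ : C(unitInterval, ℝ), ∀ t, Circle.exp (Γ t) = F (γ t) := by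
  obtain ⟨Γ, hΓ, -⟩ := Circle.isCoveringMap_exp.exists_path_lifts (F.comp γ.toContinuousMap)
    (Complex.arg (F x)) (by simp [Circle.exp_arg])
  exact ⟨Γ, fun t => congrFun hΓ t⟩

/-- The total change of the argument of `F` along the path `γ`, read off a lift of `F ∘ γ` through
the covering `ℝ → Circle`. -/
noncomputable def angleChange (F : C(X, Circle)) {x y : X} (γ : Path x y) : ℝ :=
  (exists_circleLift F γ).choose 1 - (exists_circleLift F γ).choose 0

theorem angleChange_eq (F : C(X, Circle)) {x y : X} (γ : Path x y) {Γ : unitInterval → ℝ}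
    (hΓ : Continuous Γ) (h : ∀ t, Circle.exp (Γ t) = F (γ t)) :
    angleChange F γ = Γ 1 - Γ 0 := by
  set Λ := (exists_circleLift F γ).choose with hΛ_def
  have hΛ : ∀ t, Circle.exp (Λ t) = F (γ t) := (exists_circleLift F γ).choose_spec
  have heq : (fun t => Γ t - Γ 0 + Λ 0) = Λ := by
    refine Circle.isCoveringMap_exp.eq_of_comp_eq (by fun_prop) (by fun_prop) ?_ 0 (by simp)
    funext t
    simp only [Function.comp_apply, Circle.exp_add, Circle.exp_sub, h, hΛ, div_mul_cancel]
  rw [angleChange, ← hΛ_def, ← congrFun heq 1]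
  ring

theorem angleChange_eq_of_homotopic (F : C(X, Circle)) {x y : X} {γ γ' : Path x y}
    (h : γ.Homotopic γ') : angleChange F γ = angleChange F γ' := by
  have hzero (δ : Path x y) : (F.comp δ.toContinuousMap) 0 = Circle.exp (Complex.arg (F x)) := by
    simp [Circle.exp_arg]
  have hlift (δ : Path x y) : angleChange F δ =
      Circle.isCoveringMap_exp.liftPath _ _ (hzero δ) 1 - Complex.arg (F x) := by
    rw [angleChange_eq F δ (Circle.isCoveringMap_exp.liftPath _ _ (hzero δ)).continuous
      fun t => congrFun (Circle.isCoveringMap_exp.liftPath_lifts _ _ (hzero δ)) t,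
      Circle.isCoveringMap_exp.liftPath_zero]
  rw [hlift, hlift, Circle.isCoveringMap_exp.liftPath_apply_one_eq_of_homotopicRel
    (h.elim fun H => ⟨ContinuousMap.HomotopyRel.compContinuousMap H F⟩) _ (hzero γ) (hzero γ')]

theorem angleChange_trans (F : C(X, Circle)) {x y z : X} (γ : Path x y) (γ' : Path y z) :
    angleChange F (γ.trans γ') = angleChange F γ + angleChange F γ' := by
  obtain ⟨Γ, hΓ⟩ := exists_circleLift F γ
  obtain ⟨Γ', hΓ'⟩ := exists_circleLift F γ'
  let α : Path (Γ 0) (Γ 1) := ⟨Γ, rfl, rfl⟩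
  let β : Path (Γ 1) (Γ' 1 - Γ' 0 + Γ 1) :=
    ⟨⟨fun t => Γ' t - Γ' 0 + Γ 1, by fun_prop⟩, by simp, rfl⟩
  have hlift (t) : Circle.exp (α.trans β t) = F (γ.trans γ' t) := by
    rw [Path.trans_apply, Path.trans_apply]
    split_ifs with ht
    · exact hΓ _
    · change Circle.exp (Γ' _ - Γ' 0 + Γ 1) = _
      rw [Circle.exp_add, Circle.exp_sub, hΓ', hΓ', hΓ, γ'.source, γ.target, div_mul_cancel]
  rw [angleChange_eq F _ (α.trans β).continuous hlift, angleChange_eq F γ Γ.continuous hΓ,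
    angleChange_eq F γ' Γ'.continuous hΓ', Path.target, Path.source]
  ring

theorem angleChange_symm (F : C(X, Circle)) {x y : X} (γ : Path x y) :
    angleChange F γ.symm = -angleChange F γ := by
  obtain ⟨Γ, hΓ⟩ := exists_circleLift F γ
  rw [angleChange_eq F γ Γ.continuous hΓ, angleChange_eq F γ.symm
    (Γ := fun t => Γ (unitInterval.symm t)) (by fun_prop) fun t => hΓ _]
  simp

theorem angleChange_of_mem_slitPlane (F : C(X, Circle)) {x y : X} (γ : Path x y) (w : Circle)
    (h : ∀ t, ((F (γ t) / w : Circle) : ℂ) ∈ Complex.slitPlane) :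
    angleChange F γ = Complex.arg (F y / w : Circle) - Complex.arg (F x / w : Circle) := by
  have hcont : Continuous fun t => Complex.arg (F (γ t) / w : Circle) :=
    continuous_iff_continuousAt.2 fun t => ContinuousAt.comp (g := Complex.arg)
      (Complex.continuousAt_arg (h t)) (Continuous.continuousAt (by fun_prop))
  rw [angleChange_eq F γ (hcont.add_const (Complex.arg w)) fun t => by
    rw [Circle.exp_add, Circle.exp_arg, Circle.exp_arg, div_mul_cancel]]
  simp

/-- The change of argument of `F` along loops, as a homomorphism from the fundamental group. -/
noncomputable def angleHom (F : C(X, Circle)) (x : X) : Additive (FundamentalGroup X x) →+ ℝ :=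
  AddMonoidHom.mk' (fun g => Quotient.lift (angleChange F)
      (fun _ _ => angleChange_eq_of_homotopic F) (FundamentalGroup.toPath g.toMul)) fun g h => by
    obtain ⟨γ, rfl⟩ := Path.Homotopic.Quotient.mk_surjective g
    obtain ⟨γ', rfl⟩ := Path.Homotopic.Quotient.mk_surjective h
    exact (angleChange_trans F γ' γ).trans (add_comm _ _)

end AngleChange

section FiniteGeneration

variable {A N : Type*} (R : Type*) [Ring R] [AddMonoid A] [AddMonoid.FG A] [AddCommGroup N]
  [Module R N] [IsNoetherian R N]

theorem isNoetherian_addMonoidHom : IsNoetherian R (A →+ N) := by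
  obtain ⟨S, hS⟩ := AddMonoid.fg_def.1 ‹AddMonoid.FG A›
  let restrict : (A →+ N) →ₗ[R] (S → N) :=
    { toFun := fun φ s => φ s, map_add' := fun _ _ => rfl, map_smul' := fun _ _ => rfl }
  exact isNoetherian_of_injective restrict fun φ ψ h =>
    AddMonoidHom.eq_of_eqOn_denseM hS fun s hs => congrFun h ⟨s, hs⟩

include R in
theorem exists_finset_forall_eq_zero {ι : Type*} (φ : ι → A →+ N) :
    ∃ T : Finset ι, ∀ a, (∀ i ∈ T, φ i a = 0) → ∀ i, φ i a = 0 := by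
  classical
  have := isNoetherian_addMonoidHom (A := A) (N := N) R
  obtain ⟨S, hS, hspan⟩ := (Submodule.fg_span_iff_fg_span_finset_subset (R := R) (range φ)).1
    (IsNoetherian.noetherian _)
  rw [← image_univ, Finset.subset_set_image_iff] at hS
  obtain ⟨T, -, rfl⟩ := hS
  refine ⟨T, fun a ha i => ?_⟩
  have hi : φ i ∈ Submodule.span R (T.image φ : Set (A →+ N)) :=
    hspan ▸ Submodule.subset_span (mem_range_self i)
  generalize φ i = χ at hi
  induction hi using Submodule.span_induction with
  | mem ψ hψ =>
    obtain ⟨j, hj, rfl⟩ := Finset.mem_image.1 hψ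
    exact ha j hj
  | zero => rfl
  | add ψ ω _ _ hψ hω => rw [AddMonoidHom.add_apply, hψ, hω, add_zero]
  | smul r ψ _ hψ => rw [AddMonoidHom.smul_apply, hψ, smul_zero]

end FiniteGeneration

theorem exists_mem_nhds_forall_angleChange_eq_zero {X : Type*} [TopologicalSpace X] {x : X}
    (hx : Group.FG (FundamentalGroup X x)) :
    ∃ U ∈ 𝓝 x, ∀ (F : C(X, Circle)) (y : X) (γ : Path y y), Joined x y → (∀ t, γ t ∈ U) →
      angleChange F γ = 0 := by
  obtain ⟨T, hT⟩ := exists_finset_forall_eq_zero ℝ (angleHom · x)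
  refine ⟨⋂ F ∈ T, {z | ((F z / F x : Circle) : ℂ) ∈ Complex.slitPlane},
    (Filter.biInter_finset_mem T).2 fun F _ => ?_, fun F y γ ⟨c⟩ hγ => ?_⟩
  · have : Continuous fun z => ((F z / F x : Circle) : ℂ) := by fun_prop
    exact (Complex.isOpen_slitPlane.preimage this).mem_nhds (by simp)
  · have hconj (F : C(X, Circle)) :
        angleHom F x (.ofMul (FundamentalGroup.fromPath (.mk ((c.trans γ).trans c.symm)))) =
          angleChange F γ := by
      change angleChange F ((c.trans γ).trans c.symm) = _
      rw [angleChange_trans, angleChange_trans, angleChange_symm]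
      ring
    rw [← hconj]
    refine hT _ (fun G hG => ?_) F
    rw [hconj, angleChange_of_mem_slitPlane G γ (G x), sub_self]
    exact fun t => mem_iInter₂.1 (hγ t) G hG

section Unicoherence

variable {X : Type*} [TopologicalSpace X]

theorem CovDimLE.exists_circle_extension_union [CompactSpace X] [NormalSpace X]
    (hX : CovDimLE X 1) {A B : Set X} (hA : IsClosed A) (hB : IsClosed B) (f g : C(X, Circle))
    (hfg : EqOn f g (A ∩ B)) : ∃ F : C(X, Circle), EqOn F f A ∧ EqOn F g B := by
  classical
  have hgB : EqOn (A.piecewise f g) g B := fun x hxB => by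
    by_cases hxA : x ∈ A
    · rw [piecewise_eq_of_mem _ _ _ hxA, hfg ⟨hxA, hxB⟩]
    · rw [piecewise_eq_of_notMem _ _ _ hxA]
  have hcont : ContinuousOn (A.piecewise f g) (A ∪ B) :=
    (f.continuous.continuousOn.congr (piecewise_eqOn A f g)).union_of_isClosed
      (g.continuous.continuousOn.congr hgB) hA hB
  obtain ⟨F, hF⟩ := hX.exists_circle_extension (hA.union hB) ⟨_, hcont.domRestrict⟩
  exact ⟨F, fun x hx => (hF ⟨x, .inl hx⟩).trans (piecewise_eqOn A f g hx),
    fun x hx => (hF ⟨x, .inr hx⟩).trans (hgB hx)⟩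

theorem joinedIn_of_isPreconnected_of_isOpen [LocallyPathConnectedSpace X] {C O : Set X}
    (hC : IsPreconnected C) (hO : IsOpen O) (hCO : C ⊆ O) {p q : X} (hp : p ∈ C) (hq : q ∈ C) :
    JoinedIn O p q := by
  have hpath : IsPathConnected (connectedComponentIn O p) :=
    hO.connectedComponentIn.isConnected_iff_isPathConnected.1
      (isConnected_connectedComponentIn_iff.2 (hCO hp))
  exact (hpath.joinedIn p (mem_connectedComponentIn (hCO hp)) q
    (hC.subset_connectedComponentIn hp hCO hq)).mono (connectedComponentIn_subset O p)

theorem exists_path_angleChange_eq_sub [LocallyPathConnectedSpace X] {F : C(X, Circle)}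
    {C W : Set X} (hC : IsPreconnected C) (hW : IsOpen W) (hCW : C ⊆ W) {θ : X → ℝ} {c : ℝ}
    (hF : ∀ z ∈ C, F z = Circle.exp (θ z)) (hθ : ∀ z ∈ C, |θ z - c| < Real.pi) {p q : X}
    (hp : p ∈ C) (hq : q ∈ C) :
    ∃ γ : Path p q, (∀ t, γ t ∈ W) ∧ angleChange F γ = θ q - θ p := by
  have hcont : Continuous fun z => ((F z / Circle.exp c : Circle) : ℂ) := by fun_prop
  have harg {z : X} (hz : z ∈ C) :
      Complex.arg ((F z / Circle.exp c : Circle) : ℂ) = θ z - c := by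
    rw [hF z hz, ← Circle.exp_sub, Circle.arg_exp (abs_lt.1 (hθ z hz)).1 (abs_lt.1 (hθ z hz)).2.le]
  have hslit : C ⊆ W ∩ {z | ((F z / Circle.exp c : Circle) : ℂ) ∈ Complex.slitPlane} :=
    fun z hz => ⟨hCW hz, Complex.mem_slitPlane_iff_arg.2
      ⟨harg hz ▸ (abs_lt.1 (hθ z hz)).2.ne, Circle.coe_ne_zero _⟩⟩
  obtain ⟨γ, hγ⟩ := joinedIn_of_isPreconnected_of_isOpen hC
    (hW.inter (Complex.isOpen_slitPlane.preimage hcont)) hslit hp hq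
  refine ⟨γ, fun t => (hγ t).1, ?_⟩
  rw [angleChange_of_mem_slitPlane F γ (Circle.exp c) fun t => (hγ t).2, harg hq, harg hp,
    sub_sub_sub_cancel_right]

/- If `A ∩ B` were separated, a function equal to `exp (i π h)` on `A` and to `exp (-i π h)` on `B`,
with `h` an Urysohn function of the separation, would have angle change `2 π` along a loop that
follows `A` forth and `B` back. -/
theorem CovDimLE.isPreconnected_inter [CompactSpace X] [T2Space X] [LocallyPathConnectedSpace X]
    (hX : CovDimLE X 1) {W : Set X} (hW : IsOpen W)
    (hloop : ∀ (F : C(X, Circle)) (y : X) (γ : Path y y), (∀ t, γ t ∈ W) → angleChange F γ = 0)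
    {A B : Set X} (hA : IsClosed A) (hA' : IsPreconnected A) (hAW : A ⊆ W) (hB : IsClosed B)
    (hB' : IsPreconnected B) (hBW : B ⊆ W) : IsPreconnected (A ∩ B) := by
  rw [isPreconnected_closed_iff]
  rintro S T hS hT hST ⟨p, hp, hpS⟩ ⟨q, hq, hqT⟩
  by_contra hdisj
  rw [not_nonempty_iff_eq_empty, inter_inter_distrib_left, ← disjoint_iff_inter_eq_empty] at hdisj
  have hAB := hA.inter hB
  obtain ⟨h, h0, h1, hh⟩ :=
    exists_continuous_zero_one_of_isClosed (hAB.inter hS) (hAB.inter hT) hdisj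
  obtain ⟨F, hFA, hFB⟩ := hX.exists_circle_extension_union hA hB
    ⟨fun z => Circle.exp (Real.pi * h z), by fun_prop⟩
    ⟨fun z => Circle.exp (-(Real.pi * h z)), by fun_prop⟩ fun z hz => by
      rcases hST hz with hzS | hzT
      · simp [h0 ⟨hz, hzS⟩]
      · have hexp : Circle.exp Real.pi = Circle.exp (-Real.pi) :=
          Circle.exp_eq_exp.2 ⟨1, by push_cast; ring⟩
        simpa [h1 ⟨hz, hzT⟩] using hexp
  have hpi := Real.pi_pos
  have hbound (z : X) : 0 ≤ Real.pi * h z ∧ Real.pi * h z ≤ Real.pi :=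
    ⟨mul_nonneg hpi.le (hh z).1, mul_le_of_le_one_right hpi.le (hh z).2⟩
  obtain ⟨α, hαW, hα⟩ := exists_path_angleChange_eq_sub (c := Real.pi / 2) hA' hW hAW hFA
    (fun z _ => abs_lt.2 ⟨by linarith [hbound z], by linarith [hbound z]⟩) hp.1 hq.1
  obtain ⟨β, hβW, hβ⟩ := exists_path_angleChange_eq_sub (c := -(Real.pi / 2)) hB' hW hBW hFB
    (fun z _ => abs_lt.2 ⟨by linarith [hbound z], by linarith [hbound z]⟩) hp.2 hq.2
  have hzero : angleChange F (α.trans β.symm) = 0 := by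
    refine hloop F p _ (range_subset_iff.1 ?_)
    rw [Path.trans_range, Path.symm_range]
    exact union_subset (range_subset_iff.2 hαW) (range_subset_iff.2 hβW)
  rw [angleChange_trans, angleChange_symm, hα, hβ, h0 ⟨hp, hpS⟩, h1 ⟨hq, hqT⟩] at hzero
  simp only [Pi.zero_apply, Pi.one_apply] at hzero
  linarith

theorem CovDimLE.hereditarilyUnicoherent [CompactSpace X] [T2Space X]
    [LocallyPathConnectedSpace X] (hX : CovDimLE X 1) {W : Set X} (hW : IsOpen W)
    (hloop : ∀ (F : C(X, Circle)) (y : X) (γ : Path y y), (∀ t, γ t ∈ W) →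
      angleChange F γ = 0) : HereditarilyUnicoherent W := by
  intro A B hA hA' hB hB'
  have hval : Continuous ((↑) : W → X) := continuous_subtype_val
  rw [← IsInducing.subtypeVal.isPreconnected_image, image_inter Subtype.val_injective]
  exact hX.isPreconnected_inter hW hloop
    (hA.image hval).isClosed (hA'.isPreconnected.image _ hval.continuousOn)
    (Subtype.coe_image_subset W A) (hB.image hval).isClosed
    (hB'.isPreconnected.image _ hval.continuousOn) (Subtype.coe_image_subset W B)

end Unicoherence

theorem HereditarilyUnicoherent.exists_isOpen_isANE {T : Type*} [TopologicalSpace T] [T2Space T]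
    [NormalSpace T] [SecondCountableTopology T] [ConnectedSpace T] [LocallyPathConnectedSpace T]
    [WeaklyLocallyCompactSpace T] (hT : HereditarilyUnicoherent T) (x : T) :
    ∃ U : Set T, IsOpen U ∧ x ∈ U ∧ IsANE U := by
  obtain ⟨K, hK, hxK⟩ := exists_compact_mem_nhds x
  have hx : x ∈ interior K := mem_interior_iff_mem_nhds.2 hxK
  have hUK : pathComponentIn (interior K) x ⊆ K := pathComponentIn_subset.trans interior_subset
  have hU := isOpen_interior.pathComponentIn (F := interior K) x
  exact ⟨_, hU, mem_pathComponentIn_self hx, hT.isANE hU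
    (isPathConnected_pathComponentIn hx).isConnected
    (hK.of_isClosed_subset isClosed_closure (closure_minimal hUK hK.isClosed))⟩

theorem isANR_of_fg_fundamentalGroup {X : Type*} [MetricSpace X] [CompactSpace X]
    [LocallyConnectedSpace X] (hX : CovDimLE X 1) (h : ∀ x : X, Group.FG (FundamentalGroup X x)) :
    IsANR X := by
  have : LocallyPathConnectedSpace X := locallyPathConnectedSpace_of_complete
  refine (IsANE.univ_of_forall_exists_isOpen fun x => ?_).isANR
  obtain ⟨V, hV, hloop⟩ := exists_mem_nhds_forall_angleChange_eq_zero (h x)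
  have hxV : x ∈ interior V := mem_interior_iff_mem_nhds.2 hV
  set W := pathComponentIn (interior V) x
  have hW : IsOpen W := isOpen_interior.pathComponentIn x
  have hWu : HereditarilyUnicoherent W := hX.hereditarilyUnicoherent hW fun F y γ hγ =>
    hloop F y γ (γ.source ▸ hγ 0 : y ∈ W).joined fun t =>
      interior_subset (pathComponentIn_subset (hγ t))
  have : LocallyPathConnectedSpace W := hW.locallyPathConnectedSpace
  have : ConnectedSpace W :=
    isConnected_iff_connectedSpace.1 (isPathConnected_pathComponentIn hxV).isConnected
  have : LocallyCompactSpace W := hW.locallyCompactSpace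
  obtain ⟨U, hU, hxU, hUane⟩ := hWu.exists_isOpen_isANE ⟨x, mem_pathComponentIn_self hxV⟩
  exact ⟨_, hW.isOpenMap_subtype_val U hU, mem_image_of_mem _ hxU,
    hUane.image IsInducing.subtypeVal⟩

/-! ### Finite generation of the fundamental group -/

section FundamentalGroup

open CategoryTheory

variable {X : Type*} [TopologicalSpace X]

/-- Paths in `U` with common endpoints are homotopic in the ambient space; `U` itself need not be
path connected. A space is semilocally simply connected when every point has such a
neighborhood. -/
def IsRelSimplyConnected (U : Set X) : Prop :=
  ∀ ⦃a b : X⦄ (γ γ' : Path a b), (∀ t, γ t ∈ U) → (∀ t, γ' t ∈ U) → γ.Homotopic γ'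

theorem IsRelSimplyConnected.mono {U V : Set X} (hV : IsRelSimplyConnected V) (hUV : U ⊆ V) :
    IsRelSimplyConnected U :=
  fun _ _ γ γ' hγ hγ' => hV γ γ' (fun t => hUV (hγ t)) fun t => hUV (hγ' t)

/-- The morphisms `a ⟶ b` of the fundamental groupoid represented by a path in `U`. -/
def classesIn (U : Set X) (a b : X) : Set (FundamentalGroupoid.mk a ⟶ FundamentalGroupoid.mk b) :=
  {f | ∃ γ : Path a b, (∀ t, γ t ∈ U) ∧ Path.Homotopic.Quotient.mk γ = f}

theorem classesIn_mono {U V : Set X} (h : U ⊆ V) (a b : X) : classesIn U a b ⊆ classesIn V a b :=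
  fun _ ⟨γ, hγ, hf⟩ => ⟨γ, fun t => h (hγ t), hf⟩

theorem comp_mem_classesIn {U : Set X} {a b c : X}
    {f : FundamentalGroupoid.mk a ⟶ FundamentalGroupoid.mk b}
    {g : FundamentalGroupoid.mk b ⟶ FundamentalGroupoid.mk c} (hf : f ∈ classesIn U a b)
    (hg : g ∈ classesIn U b c) : f ≫ g ∈ classesIn U a c := by
  obtain ⟨γ, hγ, rfl⟩ := hf
  obtain ⟨η, hη, rfl⟩ := hg
  have hU : range (γ.trans η) ⊆ U := by
    rw [Path.trans_range]
    exact union_subset (range_subset_iff.2 hγ) (range_subset_iff.2 hη)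
  exact ⟨γ.trans η, fun t => hU (mem_range_self t), rfl⟩

theorem inv_mem_classesIn {U : Set X} {a b : X}
    {f : FundamentalGroupoid.mk a ⟶ FundamentalGroupoid.mk b} (hf : f ∈ classesIn U a b) :
    Groupoid.inv f ∈ classesIn U b a := by
  obtain ⟨γ, hγ, rfl⟩ := hf
  exact ⟨γ.symm, fun t => hγ _, rfl⟩

theorem IsRelSimplyConnected.subsingleton_classesIn {U : Set X} (hU : IsRelSimplyConnected U)
    (a b : X) : (classesIn U a b).Subsingleton := by
  rintro _ ⟨γ, hγ, rfl⟩ _ ⟨γ', hγ', rfl⟩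
  exact Path.Homotopic.Quotient.eq.2 (hU γ γ' hγ hγ')

theorem fundamentalGroupoid_hom_induction
    {P : ∀ {a b : X}, (FundamentalGroupoid.mk a ⟶ FundamentalGroupoid.mk b) → Prop}
    (hcomp : ∀ {a b c : X} (f : FundamentalGroupoid.mk a ⟶ FundamentalGroupoid.mk b)
      (g : FundamentalGroupoid.mk b ⟶ FundamentalGroupoid.mk c), P f → P g → P (f ≫ g))
    {a b : X} (γ : Path a b)
    (hlocal : ∀ t, ∃ U ∈ 𝓝 (γ t), ∀ ⦃c d : X⦄, ∀ f ∈ classesIn U c d, P f) :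
    P (FundamentalGroupoid.fromPath (.mk γ)) := by
  let R (s t : unitInterval) : Prop := P (FundamentalGroupoid.fromPath (.mk (γ.subpath s t)))
  have hRtrans : IsTrans unitInterval R := ⟨fun s t u hst htu => by
    have hsu := hcomp _ _ hst htu
    rwa [FundamentalGroupoid.comp_eq, ← Path.Homotopic.Quotient.mk_trans,
      Path.Homotopic.Quotient.eq.2 ⟨Path.Homotopy.subpathTransSubpath γ s t u⟩] at hsu⟩
  have hR : R 0 1 := by
    refine PreconnectedSpace.induction₂' R (fun s => ?_) hRtrans 0 1
    obtain ⟨U, hU, hUP⟩ := hlocal s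
    have hRU {t u : unitInterval} (h : uIcc t u ⊆ γ ⁻¹' U) : R t u := by
      have hrange : range (γ.subpath t u) ⊆ U :=
        (Path.range_subpath γ t u).trans_subset (image_subset_iff.2 h)
      exact hUP _ ⟨_, fun v => hrange (mem_range_self v), rfl⟩
    have hnear : ∀ᶠ t in 𝓝 s, uIcc s t ⊆ γ ⁻¹' U :=
      (tendsto_const_nhds.uIcc tendsto_id).eventually <| eventually_smallSets_subset.2 <|
        γ.continuous.continuousAt.preimage_mem_nhds hU
    filter_upwards [hnear] with t ht using ⟨hRU ht, hRU (uIcc_comm s t ▸ ht)⟩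
  have hcast : ∀ {a' b' : X} (ha : a' = a) (hb : b' = b),
      P (FundamentalGroupoid.fromPath (.mk (γ.cast ha hb))) →
        P (FundamentalGroupoid.fromPath (.mk γ)) := by
    rintro _ _ rfl rfl h
    exact h
  exact hcast γ.source γ.target (Path.subpath_zero_one γ ▸ hR)

/-- The loops at `x` obtained by following one member of `A a` and returning along another, where
`A` singles out for each point `a` some path classes from `x` to `a`. -/
def transitionLoops {x : X}
    (A : ∀ a : X, Set (FundamentalGroupoid.mk x ⟶ FundamentalGroupoid.mk a)) :
    Set (FundamentalGroup X x) :=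
  {g | ∃ a, ∃ c ∈ A a, ∃ c' ∈ A a, c ≫ Groupoid.inv c' = g}

theorem closure_transitionLoops_eq_top {x : X}
    {A : ∀ a : X, Set (FundamentalGroupoid.mk x ⟶ FundamentalGroupoid.mk a)}
    (hA : ∀ a, Joined x a → ∃ U ∈ 𝓝 a, ∀ ⦃b d : X⦄, ∀ f ∈ classesIn U b d,
      ∃ c ∈ A b, c ≫ f ∈ A d) :
    Subgroup.closure (transitionLoops A) = ⊤ := by
  let G (g : FundamentalGroup X x) : Prop := g ∈ Subgroup.closure (transitionLoops A)
  have hGcomp {g h : FundamentalGroupoid.mk x ⟶ FundamentalGroupoid.mk x} (hg : G g) (hh : G h) :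
      G (g ≫ h) := Subgroup.mul_mem _ hh hg
  have hGA {a : X} {c c'} (hc : c ∈ A a) (hc' : c' ∈ A a) : G (c ≫ Groupoid.inv c') :=
    Subgroup.subset_closure ⟨a, c, hc, c', hc', rfl⟩
  obtain ⟨c₀, hc₀⟩ : (A x).Nonempty := by
    obtain ⟨U, hU, hUA⟩ := hA x (.refl x)
    obtain ⟨c, hc, -⟩ := hUA _ ⟨.refl x, fun _ => mem_of_mem_nhds hU, rfl⟩
    exact ⟨c, hc⟩
  have htransport (γ : Path x x) : ∀ c ∈ A x, ∃ c' ∈ A x,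
      G (c ≫ FundamentalGroupoid.fromPath (.mk γ) ≫ Groupoid.inv c') := by
    refine fundamentalGroupoid_hom_induction (P := fun {a b} f => ∀ c ∈ A a, ∃ c' ∈ A b,
      G (c ≫ f ≫ Groupoid.inv c')) (fun f g hf hg c hc => ?_) γ fun t => ?_
    · obtain ⟨c', hc', hfG⟩ := hf c hc
      obtain ⟨c'', hc'', hgG⟩ := hg c' hc'
      exact ⟨c'', hc'', by simpa using hGcomp hfG hgG⟩
    · obtain ⟨U, hU, hUA⟩ := hA (γ t) ⟨(γ.subpath 0 t).cast γ.source.symm rfl⟩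
      refine ⟨U, hU, fun b d f hf c hc => ?_⟩
      obtain ⟨m, hm, hmf⟩ := hUA f hf
      exact ⟨m ≫ f, hmf, by simpa using hGA hc hm⟩
  refine eq_top_iff.2 fun g _ => ?_
  obtain ⟨γ, hγ⟩ := Path.Homotopic.Quotient.mk_surjective (Groupoid.inv c₀ ≫ g ≫ c₀)
  obtain ⟨c, hc, hcG⟩ := htransport γ c₀ hc₀
  have hg : G g := by simpa [hγ] using hGcomp hcG (hGA hc hc₀)
  exact hg

theorem fg_fundamentalGroup_of_finite_cover {ι : Type*} [Finite ι] {x : X} {V : ι → Set X}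
    (hVo : ∀ i, IsOpen (V i)) (hVc : ∀ i, IsPathConnected (V i))
    (hcover : ∀ a, Joined x a → ∃ i, a ∈ V i)
    (hV : ∀ i j, (V i ∩ V j).Nonempty → IsRelSimplyConnected (V i ∪ V j))
    (hjoined : ∀ i, ∃ p ∈ V i, Joined x p) : Group.FG (FundamentalGroup X x) := by
  choose p hpV hp using hjoined
  let κ (i : ι) : FundamentalGroupoid.mk x ⟶ FundamentalGroupoid.mk (p i) :=
    FundamentalGroupoid.fromPath (.mk (hp i).somePath)
  let A (a : X) : Set (FundamentalGroupoid.mk x ⟶ FundamentalGroupoid.mk a) :=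
    {c | ∃ i, a ∈ V i ∧ ∃ ε ∈ classesIn (V i) (p i) a, κ i ≫ ε = c}
  refine Group.fg_def.2 ((Subgroup.fg_iff _).2 ⟨transitionLoops A, ?_, ?_⟩)
  · refine closure_transitionLoops_eq_top fun a ha => ?_
    obtain ⟨i, hi⟩ := hcover a ha
    refine ⟨V i, (hVo i).mem_nhds hi, fun b d f hf => ?_⟩
    obtain ⟨γ, hγ, -⟩ := id hf
    have hb : b ∈ V i := γ.source ▸ hγ 0
    have hd : d ∈ V i := γ.target ▸ hγ 1
    obtain ⟨η, hη⟩ := (hVc i).joinedIn (p i) (hpV i) b hb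
    have hηi : FundamentalGroupoid.fromPath (.mk η) ∈ classesIn (V i) (p i) b := ⟨η, hη, rfl⟩
    exact ⟨_, ⟨i, hb, _, hηi, rfl⟩, i, hd, _, comp_mem_classesIn hηi hf,
      (Category.assoc _ _ _).symm⟩
  · let S (i j : ι) : Set (FundamentalGroup X x) := {g | (V i ∩ V j).Nonempty ∧
      ∃ σ ∈ classesIn (V i ∪ V j) (p i) (p j), κ i ≫ σ ≫ Groupoid.inv (κ j) = g}
    have hS (i j : ι) : (S i j).Subsingleton := by
      rintro _ ⟨hij, σ, hσ, rfl⟩ _ ⟨-, σ', hσ', rfl⟩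
      rw [(hV i j hij).subsingleton_classesIn _ _ hσ hσ']
    refine (finite_iUnion fun i => finite_iUnion fun j => (hS i j).finite).subset ?_
    rintro _ ⟨a, _, ⟨i, hai, ε, hε, rfl⟩, _, ⟨j, haj, ε', hε', rfl⟩, rfl⟩
    refine mem_iUnion₂.2 ⟨i, j, ⟨a, hai, haj⟩, ε ≫ Groupoid.inv ε', ?_, by simp⟩
    exact comp_mem_classesIn (classesIn_mono subset_union_left _ _ hε)
      (inv_mem_classesIn (classesIn_mono subset_union_right _ _ hε'))

end FundamentalGroup

theorem fg_fundamentalGroup_of_forall_exists_nhds {X : Type*} [MetricSpace X] [CompactSpace X]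
    [LocallyPathConnectedSpace X] (h : ∀ x : X, ∃ U ∈ 𝓝 x, IsRelSimplyConnected U) (x : X) :
    Group.FG (FundamentalGroup X x) := by
  choose U hU hUsc using h
  obtain ⟨δ, hδ, hδU⟩ := lebesgue_number_lemma_of_metric (c := fun x => interior (U x))
    isCompact_univ (fun _ => isOpen_interior)
    fun y _ => mem_iUnion.2 ⟨y, mem_interior_iff_mem_nhds.2 (hU y)⟩
  have hball (y : X) : IsRelSimplyConnected (Metric.ball y δ) := by
    obtain ⟨z, hz⟩ := hδU y (mem_univ y)
    exact (hUsc z).mono (hz.trans interior_subset)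
  let V (y : X) : Set X := pathComponentIn (Metric.ball y (δ / 3)) y
  have hVball (y : X) : V y ⊆ Metric.ball y (δ / 3) := pathComponentIn_subset
  have hVc (y : X) : IsPathConnected (V y) :=
    isPathConnected_pathComponentIn (Metric.mem_ball_self (by positivity))
  obtain ⟨T, hTx, hxT⟩ := (IsClosed.pathComponent x).isCompact.elim_nhds_subcover V
    fun y _ => pathComponentIn_mem_nhds (Metric.ball_mem_nhds y (by positivity))
  refine fg_fundamentalGroup_of_finite_cover (V := fun y : T => V y)
    (fun y => Metric.isOpen_ball.pathComponentIn _) (fun y => hVc y)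
    (fun a ha => by simpa using hxT ha) (fun y z ⟨w, hwy, hwz⟩ => ?_)
    fun y => ⟨y, (mem_pathComponentIn_self (Metric.mem_ball_self (by positivity))), hTx y y.2⟩
  have hyz : dist (z : X) y < δ / 3 + δ / 3 :=
    (dist_triangle_left _ _ w).trans_lt (add_lt_add (hVball z hwz) (hVball y hwy))
  refine (hball y).mono (union_subset ((hVball y).trans (Metric.ball_subset_ball (by linarith)))
    ((hVball z).trans (Metric.ball_subset_ball' (by linarith))))

theorem isRelSimplyConnected_preimage_of_convex {X E : Type*} [TopologicalSpace X]
    [AddCommGroup E] [Module ℝ E] [TopologicalSpace E] [ContinuousAdd E] [ContinuousSMul ℝ E]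
    {j : X → E} {r : E → X} {C : Set E} (hC : Convex ℝ C) (hj : Continuous j)
    (hr : ContinuousOn r C) (hrj : Function.LeftInverse r j) :
    IsRelSimplyConnected (j ⁻¹' C) := by
  intro a b γ γ' hγ hγ'
  let L (p : unitInterval × unitInterval) : E :=
    (1 - (p.1 : ℝ)) • j (γ p.2) + (p.1 : ℝ) • j (γ' p.2)
  have hL : Continuous L := by fun_prop
  have hLC (p : unitInterval × unitInterval) : L p ∈ C :=
    hC (hγ p.2) (hγ' p.2) (sub_nonneg.2 p.1.2.2) p.1.2.1 (sub_add_cancel _ _)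
  have hLconst (s t : unitInterval) (h : γ t = γ' t) : r (L (s, t)) = γ t := by
    simp only [L, ← h, ← add_smul, sub_add_cancel, one_smul, hrj (γ t)]
  exact ⟨{
    toFun := r ∘ L
    continuous_toFun := hr.comp_continuous hL hLC
    map_zero_left := fun t => by simp [L, hrj (γ t)]
    map_one_left := fun t => by simp [L, hrj (γ' t)]
    prop' := by
      rintro s t (rfl | rfl)
      · exact hLconst s 0 (by simp)
      · exact hLconst s 1 (by simp) }⟩

theorem IsANR.exists_leftInverse_of_isClosedEmbedding {X : Type*} [MetricSpace X] [Nonempty X]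
    (hX : IsANR X) {Y : Type} [MetricSpace Y] {j : X → Y} (hj : IsClosedEmbedding j) :
    ∃ (V : Set Y) (r : Y → X), IsOpen V ∧ range j ⊆ V ∧ ContinuousOn r V ∧
      Function.LeftInverse r j := by
  obtain ⟨V, hV, hjV, g, hg⟩ := hX Y (range j) hj.isClosed_range
    hj.isEmbedding.toHomeomorph.symm
  refine ⟨V, Function.extend ((↑) : V → Y) g fun _ => Classical.arbitrary X, hV, hjV, ?_,
    fun x => ?_⟩
  · refine continuousOn_iff_continuous_domRestrict.2 (g.continuous.congr fun y => ?_)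
    exact (Subtype.val_injective.extend_apply g _ y).symm
  · have hx := Subtype.val_injective.extend_apply g (fun _ => Classical.arbitrary X)
      ⟨j x, hjV (mem_range_self x)⟩
    rw [hx, hg _ (mem_range_self x)]
    exact hj.isEmbedding.toHomeomorph.symm_apply_apply x

theorem IsANR.exists_nhds_isRelSimplyConnected {X : Type*} [MetricSpace X] [CompactSpace X]
    (hX : IsANR X) (x : X) : ∃ U ∈ 𝓝 x, IsRelSimplyConnected U := by
  have : Nonempty X := ⟨x⟩
  have hj : Isometry (kuratowskiEmbedding X) := kuratowskiEmbedding.isometry X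
  obtain ⟨V, r, hV, hjV, hr, hrj⟩ :=
    hX.exists_leftInverse_of_isClosedEmbedding hj.isClosedEmbedding
  obtain ⟨ε, hε, hεV⟩ := Metric.isOpen_iff.1 hV _ (hjV (mem_range_self x))
  exact ⟨_, hj.continuous.continuousAt.preimage_mem_nhds (Metric.ball_mem_nhds _ hε),
    isRelSimplyConnected_preimage_of_convex (convex_ball _ ε) hj.continuous (hr.mono hεV) hrj⟩

theorem IsANR.fg_fundamentalGroup {X : Type*} [MetricSpace X] [CompactSpace X]
    [LocallyPathConnectedSpace X] (hX : IsANR X) (x : X) : Group.FG (FundamentalGroup X x) :=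
  fg_fundamentalGroup_of_forall_exists_nhds hX.exists_nhds_isRelSimplyConnected x

theorem stmt_12_general {X : Type*} [MetricSpace X] [CompactSpace X] [LocallyConnectedSpace X]
    (hdim : CovDimLE X 1) : IsANR X ↔ ∀ x : X, Group.FG (FundamentalGroup X x) := by
  have : LocallyPathConnectedSpace X := locallyPathConnectedSpace_of_complete
  exact ⟨fun h x => h.fg_fundamentalGroup x, isANR_of_fg_fundamentalGroup hdim⟩

/-- A one-dimensional Peano continuum is an ANR iff its fundamental group is finitely
generated. -/
theorem stmt_12 {X : Type} [MetricSpace X] [CompactSpace X] [ConnectedSpace X]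
    [LocallyConnectedSpace X] (hdim : CovDimLE X 1) :
    IsANR X ↔ ∀ x : X, Group.FG (FundamentalGroup X x) :=
  stmt_12_general hdim
end
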